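/- arXiv:2012.07804 — 16 statements merged into one kernel-verified Lean document; each statement's English description precedes it below -/
import Mathlib

section
/- Let g, r, h, a be positive integers with a < r, set m = min(h, r−a). Let K be a finite field with |K| = q₀ where q₀ ≥ max(g+1, r), let F be a field extension of K with [F : K] = m, let e : (Fin m → K) ≃ₗ[K] F be any K-linear isomorphism, and let γ be a generator of the (cyclic) multiplicative group Fˣ. Choose distinct elements α_1,…,α_r ∈ K. Define A : Matrix (Fin a) (Fin r) K by A t i = α_i^t; define β_i = e (fun t => α_i^(a+t)) ∈ F for i = 1,…,r; and for ℓ = 1,…,g define B_ℓ : Matrix (Fin h) (Fin r) F by B_ℓ j i = γ^(ℓ·∑_{t<j} q₀^t) · β_i^(q₀^j) (rows j = 0,…,h−1). Then, taking every local parity matrix A_i to be the image of A under the embedding K → F, the associated (g·r, r, h, a)-LRC parity check matrix over F is maximally recoverable. -/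
/-!
Write `q = |K|` and, for `γ : F`, let `D_γ` be the `K`-linear operator `y ↦ γ y^q` on `F`. Since
`D_γ^j y = γ^(1+q+⋯+q^(j-1)) y^(q^j)`, the `j`-th global parity of a column `(ℓ, i)` is
`D_{γ_ℓ}^j β_i` with `γ_ℓ = γ^(ℓ+1)`. Thus a row combination of the global parities with
coefficients `v_j` is the evaluation of the skew polynomial `P = ∑_j v_j D^j` at the pairs
`(γ_ℓ, β_i)`.

The matrix of erased columns is square, so it suffices that its left kernel vanishes. An element of
the left kernel consists of `u_i : F^a` and `v : F^h` with `∑_s u_{i,s} α_c^s + P(D_{γ_i}) β_c = 0`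
for all `c ∈ E_i`. Any `z : K^{E_i}` that is annihilated by the local parities then satisfies
`P(D_{γ_i}) (∑_c z_c β_c) = 0`. These combinations fill a `K`-subspace `V_i` of `F` of dimension at
least `|E_i| - a`: the definition of `β` and the Vandermonde determinant make `z ↦ ∑_c z_c β_c`
injective on the kernel of the local parities, because `|E_i| ≤ a + min h (r - a)`.

So `P`, of degree `< h`, kills subspaces `V_i` with `∑ dim V_i ≥ h`, and the heart of the proof
(`eq_zero_of_sum_finrank_ge`) is that this forces `P = 0`, as for roots of ordinary polynomials.
It goes by induction: for a nonzero `y₀ ∈ V_{i₀}` put `c = D_{γ_{i₀}} y₀ / y₀` and divide,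
`P = Q (D - c)` (`exists_right_div`). The operator `D_{γ_i} - c` is injective for `i ≠ i₀` and has
kernel `K y₀` for `i = i₀`, so passing to the images of the `V_i` costs exactly one dimension.
The injectivity uses that the `γ_i` are pairwise inequivalent modulo `(q-1)`-th powers
(`twist_gen_inj`), which holds as `q - 1` divides the order of `γ` and `g ≤ q - 1`.
Once `v = 0`, each `u_i` gives a polynomial of degree `< a` with at least `a` roots, so `u = 0`.
-/

/-- The parity check matrix of an `(g·r, r, h, a)`-LRC determined by local parity
matrices `A i` and global parity matrices `B i`. -/
def lrcMatrix {F : Type*} [Field F] (g r h a : ℕ)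
    (A : Fin g → Matrix (Fin a) (Fin r) F) (B : Fin g → Matrix (Fin h) (Fin r) F) :
    Matrix ((Fin g × Fin a) ⊕ Fin h) (Fin g × Fin r) F :=
  fun row col =>
    Sum.elim (fun p => if p.1 = col.1 then A col.1 p.2 col.2 else 0)
      (fun t => B col.1 t col.2) row

/-- Maximal recoverability of the LRC determined by `A` and `B`. -/
def IsMaximallyRecoverable {F : Type*} [Field F] (g r h a : ℕ)
    (A : Fin g → Matrix (Fin a) (Fin r) F) (B : Fin g → Matrix (Fin h) (Fin r) F) : Prop :=
  (∀ i : Fin g, ∀ S : Finset (Fin r), S.card = a →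
    LinearIndependent F (fun c : S => fun t : Fin a => A i t c.1)) ∧
  (∀ E : Fin g → Finset (Fin r), (∀ i, a ≤ (E i).card) →
    (∑ i, (E i).card) = g * a + h →
    LinearIndependent F (fun p : {p : Fin g × Fin r // p.2 ∈ E p.1} =>
      fun row => lrcMatrix g r h a A B row p.1))

namespace MRLRC

open Module

section
variable {K F : Type*} [Field K] [Fintype K] [Field F] [Algebra K F]

variable (K) in
/-- The `K`-linear operator `y ↦ γ * y ^ |K|` on `F`. -/
noncomputable def twist (γ : F) : Module.End K F :=
  γ • (FiniteField.frobeniusAlgHom K F).toLinearMap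

lemma twist_apply (γ y : F) : twist K γ y = γ * y ^ Fintype.card K := by
  simp [twist]

lemma twist_pow_apply (γ y : F) (j : ℕ) :
    (twist K γ ^ j) y =
      γ ^ (∑ t ∈ Finset.range j, Fintype.card K ^ t) * y ^ Fintype.card K ^ j := by
  induction j with
  | zero => simp
  | succ j ih =>
    rw [pow_succ', Module.End.mul_apply, ih, twist_apply, Finset.sum_range_succ', mul_pow,
      ← pow_mul, ← pow_mul, pow_succ, Finset.sum_congr rfl fun t _ => pow_succ _ t,
      ← Finset.sum_mul]
    ring

lemma twist_pow_mul (γ c y : F) (j : ℕ) :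
    (twist K γ ^ j) (c * y) = c ^ Fintype.card K ^ j * (twist K γ ^ j) y := by
  simp only [twist_pow_apply, mul_pow]; ring

/-- The fixed points of the `q`-power Frobenius on `F` come from `K`. -/
lemma mem_range_of_pow_card_eq {w : F} (hw : w ^ Fintype.card K = w) :
    ∃ k : K, algebraMap K F k = w := by
  have hs : (Polynomial.X ^ Fintype.card K - Polynomial.X : Polynomial K).Splits := by
    rw [Polynomial.splits_iff_card_roots, FiniteField.roots_X_pow_card_sub_X,
      FiniteField.X_pow_card_sub_X_natDegree_eq K Fintype.one_lt_card]
    rfl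
  exact hs.mem_range_of_isRoot (FiniteField.X_pow_card_sub_X_ne_zero K Fintype.one_lt_card)
    (by simp [hw])

/-- Right division of the skew polynomial `∑ v_j D^j` of degree at most `n` by `D - c`, with
quotient `w` and remainder `ρ`, expressed through evaluation at all pairs `(γ, y)` simultaneously.
The last clause says that a skew polynomial with zero quotient and remainder is zero. -/
lemma exists_right_div (c : F) (n : ℕ) (v : ℕ → F) : ∃ (w : ℕ → F) (ρ : F),
    (∀ γ y : F, ∑ j ∈ Finset.range (n + 1), v j * (twist K γ ^ j) y =
      ∑ j ∈ Finset.range n, w j * (twist K γ ^ j) (twist K γ y - c * y) + ρ * y) ∧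
    ((∀ j < n, w j = 0) → ρ = 0 → ∀ j < n + 1, v j = 0) := by
  induction n generalizing v with
  | zero =>
    refine ⟨0, v 0, ?_, ?_⟩
    · simp
    · intro _ h j hj
      obtain rfl : j = 0 := by omega
      exact h
  | succ n ih =>
    obtain ⟨w, ρ, h1, h2⟩ :=
      ih (Function.update v n (v n + v (n + 1) * c ^ Fintype.card K ^ n))
    refine ⟨Function.update w n (v (n + 1)), ρ, ?_, ?_⟩
    · intro γ y
      have h := h1 γ y
      have e1 : ∀ (u : ℕ → F) (x z : F), ∑ j ∈ Finset.range n,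
          Function.update u n x j * (twist K γ ^ j) z =
          ∑ j ∈ Finset.range n, u j * (twist K γ ^ j) z := fun u x z =>
        Finset.sum_congr rfl fun j hj => by
          rw [Function.update_of_ne (Finset.mem_range.1 hj).ne]
      rw [Finset.sum_range_succ, e1] at h
      rw [Finset.sum_range_succ, Finset.sum_range_succ,
        Finset.sum_range_succ (n := n) (f := fun j => Function.update w n _ j * _), e1]
      simp only [Function.update_self] at h ⊢
      rw [map_sub, twist_pow_mul, pow_succ, Module.End.mul_apply]
      linear_combination h
    · intro hw hρ
      have hn : v (n + 1) = 0 := by simpa using hw n (by omega)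
      have h := h2 (fun j hj => by
        simpa [Function.update_of_ne hj.ne] using hw j (by omega)) hρ
      intro j hj
      rcases Nat.lt_succ_iff_lt_or_eq.1 hj with hj | rfl
      · have := h j hj
        by_cases hjn : j = n
        · subst hjn; simpa [hn] using this
        · simpa [Function.update_of_ne hjn] using this
      · exact hn

/-- A skew polynomial of degree less than `n` whose evaluations at pairwise non-conjugate `γ i`
vanish on `K`-subspaces `V i` of total dimension at least `n` is zero. The hypothesis `hγ` says
that `γ i * y ^ (q - 1) = γ j * z ^ (q - 1)` with `y, z ≠ 0` only for `i = j`, in a form free of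
natural-number subtraction. -/
theorem eq_zero_of_sum_finrank_ge [FiniteDimensional K F] {ι : Type*} [Fintype ι] (γ : ι → F)
    (hγ0 : ∀ i, γ i ≠ 0)
    (hγ : ∀ i j, ∀ y z : F, y ≠ 0 → z ≠ 0 →
      z * twist K (γ i) y = y * twist K (γ j) z → i = j)
    (n : ℕ) (v : ℕ → F) (V : ι → Submodule K F) (hV : n ≤ ∑ i, finrank K (V i))
    (hv : ∀ i, ∀ y ∈ V i, ∑ j ∈ Finset.range n, v j * (twist K (γ i) ^ j) y = 0) :
    ∀ j < n, v j = 0 := by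
  classical
  induction n generalizing v V with
  | zero => intro j hj; omega
  | succ n ih =>
    obtain ⟨i₀, -, hi₀⟩ : ∃ i ∈ Finset.univ, finrank K (V i) ≠ 0 := by
      apply Finset.exists_ne_zero_of_sum_ne_zero; omega
    obtain ⟨y₀, hy₀V, hy₀⟩ : ∃ y ∈ V i₀, y ≠ 0 := by
      apply Submodule.exists_mem_ne_zero_of_ne_bot
      rintro h
      rw [h, finrank_bot] at hi₀
      exact hi₀ rfl
    set c : F := twist K (γ i₀) y₀ / y₀ with hc
    obtain ⟨w, ρ, h1, h2⟩ := exists_right_div (K := K) c n v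
    have hρ : ρ = 0 := by
      have h := h1 (γ i₀) y₀
      rw [hv i₀ y₀ hy₀V, hc, div_mul_cancel₀ _ hy₀, sub_self] at h
      simpa [hy₀] using h
    let T : ι → F →ₗ[K] F := fun i => twist K (γ i) - LinearMap.mulLeft K c
    have hT : ∀ i y, T i y = twist K (γ i) y - c * y := fun i y => rfl
    -- The images of the `V i` under `D - c` lose one dimension in total, at `i₀`.
    refine h2 (ih w (fun i => (V i).map (T i)) ?_ ?_) hρ
    · have key : ∀ i, finrank K (V i) ≤
          finrank K ((V i).map (T i)) + if i = i₀ then 1 else 0 := by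
        intro i
        have hr := ((T i).domRestrict (V i)).finrank_range_add_finrank_ker
        rw [LinearMap.range_domRestrict] at hr
        have hker : ∀ x : F, x ≠ 0 → T i x = 0 → i = i₀ := by
          intro x hx hx0
          apply hγ i i₀ x y₀ hx hy₀
          rw [hT, hc, sub_eq_zero] at hx0
          rw [hx0]; field_simp
        split_ifs with hi
        · subst hi
          have hle : finrank K (LinearMap.ker ((T i).domRestrict (V i))) ≤ 1 := by
            rw [← Submodule.finrank_map_subtype_eq]
            refine le_trans (Submodule.finrank_mono (t := Submodule.span K {y₀}) ?_)
              (finrank_span_singleton hy₀).le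
            rintro _ ⟨⟨x, hxV⟩, hx, rfl⟩
            have hx0 : twist K (γ i) x = c * x := sub_eq_zero.1 (by simpa [hT] using hx)
            rw [hc, twist_apply, twist_apply] at hx0
            obtain ⟨k, hk⟩ := mem_range_of_pow_card_eq (K := K) (w := x / y₀) (by
              have := hγ0 i
              rw [div_pow]
              field_simp at hx0 ⊢
              linear_combination hx0)
            refine Submodule.mem_span_singleton.2 ⟨k, ?_⟩
            rw [Algebra.smul_def, hk, div_mul_cancel₀ _ hy₀]; rfl
          omega
        · have : LinearMap.ker ((T i).domRestrict (V i)) = ⊥ := by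
            rw [LinearMap.ker_eq_bot']
            rintro ⟨x, hxV⟩ hx
            by_contra hne
            exact hi (hker x (fun h => hne (by simpa using h)) hx)
          rw [this, finrank_bot] at hr
          omega
      have := Finset.sum_le_sum fun i (_ : i ∈ Finset.univ) => key i
      rw [Finset.sum_add_distrib, Finset.sum_ite_eq' Finset.univ i₀] at this
      simp only [Finset.mem_univ, if_true] at this
      omega
    · rintro i _ ⟨y, hy, rfl⟩
      have h := h1 (γ i) y
      rw [hv i y hy, hρ, zero_mul, add_zero] at h
      exact h.symm

/-- Distinct powers `γ ^ (i + 1)`, `i + 1 < q`, of a generator `γ` of `Fˣ` do not differ by a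
`(q - 1)`-th power `(z / y) ^ (q - 1)`. -/
lemma twist_gen_inj [Finite F] (γ : Fˣ) (hγ : ∀ x : Fˣ, x ∈ Subgroup.zpowers γ)
    {i j : ℕ} (hi : i + 1 < Fintype.card K) (hj : j + 1 < Fintype.card K) {y z : F}
    (hy : y ≠ 0) (hz : z ≠ 0)
    (h : z * twist K ((γ : F) ^ (i + 1)) y = y * twist K ((γ : F) ^ (j + 1)) z) : i = j := by
  obtain ⟨q, hq⟩ : ∃ q, Fintype.card K = q + 1 := ⟨_, (Nat.succ_pred (by omega)).symm⟩
  have hdvd : q ∣ orderOf γ := by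
    rw [orderOf_eq_card_of_forall_mem_zpowers hγ, Nat.card_units,
      Module.natCard_eq_pow_finrank (K := K) (V := F), Nat.card_eq_fintype_card, hq]
    simpa using Nat.sub_dvd_pow_sub_pow (q + 1) 1 (finrank K F)
  obtain ⟨k, hk⟩ := hγ (Units.mk0 z hz / Units.mk0 y hy)
  have hu : γ ^ (i + 1) = γ ^ (j + 1) * (Units.mk0 z hz / Units.mk0 y hy) ^ q := by
    ext
    rw [twist_apply, twist_apply, hq, pow_succ y, pow_succ z] at h
    simp only [Units.val_mul, Units.val_pow_eq_pow_val, Units.val_div_eq_div_val, Units.val_mk0,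
      div_pow]
    field_simp
    have : (y * z) * ((γ : F) ^ (i + 1) * y ^ q) = (y * z) * ((γ : F) ^ (j + 1) * z ^ q) := by
      linear_combination h
    have := mul_left_cancel₀ (mul_ne_zero hy hz) this
    linear_combination this
  have h1 : γ ^ ((i : ℤ) - j - k * q) = 1 := by
    simp only at hk
    rw [← hk, ← zpow_natCast, ← zpow_natCast, ← zpow_natCast, ← zpow_mul, ← zpow_add] at hu
    rw [show (i : ℤ) - j - k * q = ((i + 1 : ℕ) : ℤ) - (((j + 1 : ℕ) : ℤ) + k * q) by
      push_cast; ring, zpow_sub, hu, mul_inv_cancel]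
  have h2 : (q : ℤ) ∣ (i : ℤ) - j - k * q :=
    (Int.natCast_dvd_natCast.2 hdvd).trans (orderOf_dvd_iff_zpow_eq_one.2 h1)
  have h3 : (q : ℤ) ∣ (i : ℤ) - j := by
    simpa using dvd_add h2 (Dvd.intro_left k rfl)
  have h4 := Int.eq_zero_of_abs_lt_dvd h3 (by rw [abs_lt]; omega)
  omega

end

/-- A polynomial with `n` coefficients and at least `n` roots is zero. -/
lemma vandermonde_dual {L ι : Type*} [Field L] {x : ι → L} (hx : Function.Injective x) {n : ℕ}
    (S : Finset ι) (hS : n ≤ S.card) (u : Fin n → L)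
    (hu : ∀ c ∈ S, ∑ t, u t * x c ^ (t : ℕ) = 0) : u = 0 := by
  obtain ⟨f⟩ : Nonempty (Fin n ↪ S) := Function.Embedding.nonempty_of_card_le (by simpa using hS)
  exact Matrix.eq_zero_of_forall_index_sum_mul_pow_eq_zero (f := fun j => x (f j))
    (hx.comp (Subtype.val_injective.comp f.injective)) fun j => hu _ (f j).2

/-- The vectors `(1, x_c, …, x_c ^ (|S| - 1))` for `c ∈ S` are linearly independent. -/
lemma vandermonde_primal {L ι : Type*} [Field L] {x : ι → L} (hx : Function.Injective x)
    (S : Finset ι) (z : S → L)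
    (hz : ∀ t < S.card, ∑ c, z c * x c.1 ^ t = 0) : z = 0 := by
  have := Matrix.eq_zero_of_forall_pow_sum_mul_pow_eq_zero
    (f := fun j => x (S.equivFin.symm j)) (v := fun j => z (S.equivFin.symm j))
    (hx.comp (Subtype.val_injective.comp S.equivFin.symm.injective)) (fun t => by
      rw [← hz t t.2]
      exact Equiv.sum_comp S.equivFin.symm (fun c => z c * x c.1 ^ (t : ℕ)))
  funext c
  simpa using congrFun this (S.equivFin c)
end MRLRC

/-- The explicit skew-polynomial construction of MR LRCs: with `A t i = αᵢ^t` a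
Vandermonde local parity matrix, `βᵢ = e (αᵢ^a, …, αᵢ^(a+m-1))`, and
`B_ℓ j i = γ^((ℓ+1)·(1+q₀+⋯+q₀^(j-1))) · βᵢ^(q₀^j)` (for `ℓ = 1, …, g`), the
resulting `(g·r, r, h, a)`-LRC over `F` is maximally recoverable. -/
theorem mr_lrc_construction (g r h a q₀ : ℕ) (hg : 0 < g) (hr : 0 < r) (hh : 0 < h)
    (ha : 0 < a) (har : a < r)
    (K F : Type*) [Field K] [Fintype K] [Field F] [Algebra K F]
    (hcard : Fintype.card K = q₀) (hq₀ : max (g + 1) r ≤ q₀)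
    (hdeg : Module.finrank K F = min h (r - a))
    (e : (Fin (min h (r - a)) → K) ≃ₗ[K] F)
    (γ : Fˣ) (hγ : ∀ x : Fˣ, x ∈ Subgroup.zpowers γ)
    (α : Fin r → K) (hα : Function.Injective α)
    (A : Matrix (Fin a) (Fin r) K) (hA : ∀ t i, A t i = α i ^ (t : ℕ))
    (β : Fin r → F) (hβ : ∀ i, β i = e (fun t => α i ^ (a + (t : ℕ))))
    (B : Fin g → Matrix (Fin h) (Fin r) F)
    (hB : ∀ (ℓ : Fin g) (j : Fin h) (i : Fin r),
      B ℓ j i = (γ : F) ^ (((ℓ : ℕ) + 1) * ∑ t ∈ Finset.range (j : ℕ), q₀ ^ t)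
        * β i ^ q₀ ^ (j : ℕ)) :
    IsMaximallyRecoverable g r h a (fun _ => A.map (algebraMap K F)) B := by
  classical
  have hαF : Function.Injective fun c => algebraMap K F (α c) :=
    (algebraMap K F).injective.comp hα
  have hgq : g + 1 ≤ Fintype.card K := by omega
  have : FiniteDimensional K F := FiniteDimensional.of_finrank_pos (by omega)
  have : Finite F := Module.finite_of_finite K
  refine ⟨?_, ?_⟩
  · intro i S hS
    rw [Fintype.linearIndependent_iff]
    intro z hz
    refine congrFun (MRLRC.vandermonde_primal hαF S z fun t ht => ?_)
    have := congrFun hz ⟨t, by omega⟩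
    simpa [hA] using this
  · intro E hEa hEsum
    -- All other blocks contain at least `a` columns, so one block has at most `a + h`.
    have hEh : ∀ i, (E i).card ≤ a + min h (r - a) := by
      intro i
      have h1 : (E i).card ≤ r := by simpa using (E i).card_le_univ
      have h2 : ∑ j ∈ Finset.univ.erase i, a ≤ ∑ j ∈ Finset.univ.erase i, (E j).card :=
        Finset.sum_le_sum fun j _ => hEa j
      have h3 := Finset.add_sum_erase Finset.univ (fun j => (E j).card) (Finset.mem_univ i)
      have h4 := Finset.add_sum_erase Finset.univ (fun _ : Fin g => a) (Finset.mem_univ i)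
      simp only [Finset.sum_const, Finset.card_univ, Fintype.card_fin, smul_eq_mul] at h4 h2
      omega
    apply linearIndependent_of_top_le_span_of_card_eq_finrank
    swap
    · rw [Module.finrank_fintype_fun_eq_card, Fintype.card_subtype]
      simp only [Fintype.card_sum, Fintype.card_prod, Fintype.card_fin]
      rw [← hEsum, ← Finset.card_sigma]
      refine Finset.card_bij' (fun p _ => ⟨p.1, p.2⟩) (fun p _ => (p.1, p.2)) ?_ ?_ ?_ ?_ <;> simp
    -- The family has as many members as there are rows, so a failure to span yields a nonzero
    -- functional `f` vanishing on all columns, with coordinates `u` and `v`.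
    by_contra hspan
    obtain ⟨f, hf0, hf⟩ := Submodule.exists_le_ker_of_lt_top _ (lt_top_iff_not_top_le.2 hspan)
    apply hf0
    set u : Fin g → Fin a → F := fun i s => f (Pi.single (Sum.inl (i, s)) 1) with hu
    set v : Fin h → F := fun t => f (Pi.single (Sum.inr t) 1) with hv
    have hfsum : ∀ x, f x = ∑ i, ∑ s, x (Sum.inl (i, s)) * u i s + ∑ t, x (Sum.inr t) * v t := by
      intro x
      have hs : ∀ k : (Fin g × Fin a) ⊕ Fin h, (fun j =>
           if k = j then (1 : F) else 0) = Pi.single k 1 := fun k => by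
        ext j; simp [Pi.single_apply, eq_comm]
      rw [LinearMap.pi_apply_eq_sum_univ f x, Fintype.sum_sum_type, Fintype.sum_prod_type]
      simp only [hs, smul_eq_mul, hu, hv]
    have hcol : ∀ i, ∀ c ∈ E i, ∑ s, u i s * (algebraMap K F (α c)) ^ (s : ℕ) +
        ∑ t, v t * B i t c = 0 := by
      intro i c hc
      have h1 := hf (Submodule.subset_span ⟨⟨(i, c), hc⟩, rfl⟩)
      rw [LinearMap.mem_ker, hfsum] at h1
      rw [← h1]
      simp [lrcMatrix, hA, mul_comm]
    set w : ℕ → F := fun j => if hj : j < h then v ⟨j, hj⟩ else 0 with hw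
    set G : Fin g → F := fun i => (γ : F) ^ ((i : ℕ) + 1) with hG
    let P : Fin g → F →ₗ[K] F := fun i =>
      ∑ j ∈ Finset.range h, LinearMap.mulLeft K (w j) ∘ₗ (MRLRC.twist K (G i) ^ j)
    have hP : ∀ i y, P i y = ∑ j ∈ Finset.range h, w j * (MRLRC.twist K (G i) ^ j) y := by
      intro i y
      simp [P, LinearMap.sum_apply]
    have hPβ : ∀ i c, P i (β c) = ∑ t, v t * B i t c := by
      intro i c
      rw [hP, Finset.sum_range]
      refine Finset.sum_congr rfl fun t _ => ?_
      rw [hB, MRLRC.twist_pow_apply, hG, hw, ← hcard, pow_mul]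
      simp
    -- `ker (ev i)` consists of the vectors on `E i` over `K` killed by the local parities, and
    -- `comb i` maps it isomorphically onto the subspace `V i` of `F`.
    let ev : ∀ i, (E i → K) →ₗ[K] (Fin a → K) := fun i =>
      LinearMap.pi fun s => Fintype.linearCombination K fun c : E i => α c ^ (s : ℕ)
    let comb : ∀ i, (E i → K) →ₗ[K] F := fun i => Fintype.linearCombination K fun c : E i => β c
    have hcomb : ∀ i z, comb i z = ∑ c, z c • β c.1 := fun i z => rfl
    have hw0 : ∀ j < h, w j = 0 := by
      apply MRLRC.eq_zero_of_sum_finrank_ge (K := K) G (fun i => pow_ne_zero _ γ.ne_zero) ?_ h w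
        (fun i => (LinearMap.ker (ev i)).map (comb i)) ?_ ?_
      · intro i j y z hy hz hyz
        exact Fin.ext (MRLRC.twist_gen_inj γ hγ (by omega) (by omega) hy hz hyz)
      · have key : ∀ i, (E i).card ≤ Module.finrank K ((LinearMap.ker (ev i)).map (comb i)) + a := by
          intro i
          have hinj : Function.Injective ((comb i).domRestrict (LinearMap.ker (ev i))) := by
            rw [← LinearMap.ker_eq_bot, LinearMap.ker_eq_bot']
            rintro ⟨z, hz⟩ hz0
            have hz0 : ∑ c, z c • β c.1 = 0 := hz0
            have hz1 : ∀ s : Fin a, ∑ c, z c * α c.1 ^ (s : ℕ) = 0 := fun s => congrFun hz s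
            have hz2 : ∀ t : Fin (min h (r - a)), ∑ c, z c * α c.1 ^ (a + (t : ℕ)) = 0 := by
              have : e (∑ c, z c • fun t : Fin (min h (r - a)) => α c.1 ^ (a + (t : ℕ))) = 0 := by
                rw [map_sum, ← hz0]
                exact Finset.sum_congr rfl fun c _ => by rw [map_smul, hβ]
              rw [LinearEquiv.map_eq_zero_iff] at this
              intro t
              simpa using congrFun this t
            ext1
            refine MRLRC.vandermonde_primal hα (E i) z fun t ht => ?_
            by_cases hta : t < a
            · exact hz1 ⟨t, hta⟩
            · have := hEh i
              have := hz2 ⟨t - a, by omega⟩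
              rwa [Fin.val_mk, show a + (t - a) = t by omega] at this
          have h1 := LinearMap.finrank_range_of_inj hinj
          rw [LinearMap.range_domRestrict] at h1
          have h2 := (ev i).finrank_range_add_finrank_ker
          have h3 := Submodule.finrank_le (LinearMap.range (ev i))
          simp only [Module.finrank_fintype_fun_eq_card, Fintype.card_fin,
            Fintype.card_coe] at h2 h3
          omega
        have := Finset.sum_le_sum fun i (_ : i ∈ Finset.univ) => key i
        rw [Finset.sum_add_distrib, hEsum] at this
        simp only [Finset.sum_const, Finset.card_univ, Fintype.card_fin, smul_eq_mul] at this
        omega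
      · rintro i _ ⟨z, hz, rfl⟩
        have hz1 : ∀ s : Fin a, ∑ c, z c * α c.1 ^ (s : ℕ) = 0 := fun s => congrFun hz s
        have h1 : ∀ c : E i, P i (β c) =
            -∑ s, u i s * (algebraMap K F (α c)) ^ (s : ℕ) := fun c => by
          rw [hPβ, eq_neg_iff_add_eq_zero, add_comm]; exact hcol i c c.2
        rw [← hP, hcomb, map_sum]
        simp only [map_smul, h1, smul_neg, Finset.smul_sum, Finset.sum_neg_distrib, neg_eq_zero]
        rw [Finset.sum_comm]
        refine Finset.sum_eq_zero fun s _ => ?_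
        have h2 := congrArg (fun x => u i s * algebraMap K F x) (hz1 s)
        simp only [map_sum, map_mul, map_pow, map_zero, mul_zero, Finset.mul_sum] at h2
        rw [← h2]
        exact Finset.sum_congr rfl fun c _ => by rw [Algebra.smul_def]; ring
    have hv0 : ∀ t, v t = 0 := fun t => by simpa [hw] using hw0 t t.2
    have hu0 : ∀ i, u i = 0 := fun i =>
      MRLRC.vandermonde_dual hαF (E i) (hEa i) (u i) fun c hc => by simpa [hv0] using hcol i c hc
    refine LinearMap.ext fun x => ?_
    simp [hfsum, hv0, hu0]
end

section
/- Let g, r, h be positive integers with r ≥ 2, let a = 1 and n = g·r. Let q₀ be a prime power with q₀ ≥ g+1 and K a finite field with |K| = q₀. Suppose s ≥ 2 and there exists a K-linear subspace C ⊆ (Fin r → K) with finrank_K C = r − s such that (i) every nonzero c ∈ C has Hamming weight at least min(h, r−1) + 2, and (ii) there exists v : Fin r → K with v j ≠ 0 for every j and ∑_j v j · c j = 0 for every c ∈ C (the dual code has a full-weight codeword). Let F be a field extension of K with [F : K] = s − 1 (so |F| = q₀^{s−1}). Then there exist matrices A_1,…,A_g : Matrix (Fin 1) (Fin r) F and B_1,…,B_g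 : Matrix (Fin h) (Fin r) F such that the associated (n,r,h,1)-LRC parity check matrix over F is maximally recoverable. -/
/-!
Write `q = |K|` and let `D_k b = γ_k b ^ q` on `F`, where `γ_1, …, γ_g` have pairwise different
nonzero norms in `K`; such elements exist because the norm is onto and `g ≤ q - 1`.

Since `v` is orthogonal to `C` and `[F : K] = s - 1`, a parity check matrix of `C` can be written
with `v` as one row and the other rows collected into entries `β_j ∈ F` (`exists_map`). The code
uses `v` as local parity row of every group, and the `t`-th global parity of column `(k, j)` is
`D_k^t β_j`.

Fix a pattern `E` and a column `c_k ∈ E_k` in each group. Clearing the local row with column `c_k`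
turns the other columns of the group into `D_k^t (β_j - (v_j / v_{c_k}) β_{c_k})`, because `D_k` is
`K`-linear. Exactly `h` columns remain. As `|E_k| ≤ min(h, r - 1) + 1` is below the distance of `C`,
the elements `β_j - (v_j / v_{c_k}) β_{c_k}` of one group are independent over `K`.

What remains is the independence of a skew Vandermonde matrix (`skew_indep`): `h` elements `b_p` of
`F`, spread over the groups and `K`-independent inside each group, give independent vectors
`(D^t b_p)_{t < h}`. This goes by induction on `h`. With `α = D b_0 / b_0`, the operator `D - α`
kills `b_0`; by the norm condition it is injective on the other groups, and on the group of `b_0`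
its kernel is `K b_0` (`skew_kernel`). Hence it preserves independence of the remaining
elements, and `D^{t+1} b - α ^ (q ^ t) D^t b = D^t (D b - α b)` reduces `h` relations to `h - 1`.
-/

section

open Finset

/-! ### Skew Vandermonde matrices -/

/-- The elements of `F` fixed by the `|K|`-power Frobenius lie in `K`. -/
theorem frob_fixed {K F : Type*} [Field K] [Fintype K] [Field F] [Algebra K F]
    [FiniteDimensional K F] {u : F} (hu : u ^ Fintype.card K = u) :
    ∃ l : K, algebraMap K F l = u := by
  have : Finite F := Module.finite_of_finite K
  change u ∈ Set.range (algebraMap K F)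
  rw [IsGalois.mem_range_algebraMap_iff_fixed]
  intro f
  obtain ⟨n, rfl⟩ := (FiniteField.bijective_frobeniusAlgEquivOfAlgebraic_pow K F).surjective f
  have : ∀ n : ℕ, (FiniteField.frobeniusAlgEquivOfAlgebraic K F ^ n) u = u := by
    intro n
    induction n with
    | zero => simp
    | succ n ih =>
      rw [pow_succ, AlgEquiv.mul_apply, FiniteField.coe_frobeniusAlgEquivOfAlgebraic]
      simp only [hu, ih]
  exact this n

/-- The kernel of `w ↦ γ w ^ q - α w`, where `α = γ₀ b ^ q / b` and `q = |K|`: it vanishes when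
`γ` and `γ₀` have different norms, and is spanned by `b` over `K` when `γ = γ₀`. In both cases the
equation says `γ u ^ q = γ₀ u` for `u = w / b`. -/
theorem skew_kernel {K F : Type*} [Field K] [Fintype K] [Field F] [Algebra K F]
    [FiniteDimensional K F] {γ₀ γ b w : F} (hγ₀ : γ₀ ≠ 0) (hb : b ≠ 0) (hw : w ≠ 0)
    (h : γ * w ^ Fintype.card K = γ₀ * b ^ Fintype.card K / b * w) :
    Algebra.norm K γ = Algebra.norm K γ₀ ∧ (γ = γ₀ → ∃ l : K, w = l • b) := by
  have h1 : γ * (w / b) ^ Fintype.card K = γ₀ * (w / b) := by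
    rw [div_pow, mul_div_assoc', h]
    field_simp
  have hu : w / b ≠ 0 := div_ne_zero hw hb
  constructor
  · have h2 := congrArg (Algebra.norm K) h1
    rw [map_mul, map_mul, map_pow, FiniteField.pow_card] at h2
    exact mul_right_cancel₀ (by rwa [Ne, Algebra.norm_eq_zero_iff]) h2
  · rintro rfl
    obtain ⟨l, hl⟩ := frob_fixed (K := K) (mul_left_cancel₀ hγ₀ h1)
    refine ⟨l, ?_⟩
    rw [Algebra.smul_def, hl, div_mul_cancel₀ _ hb]

/-- The Frobenius map of `F` over `K` twisted by `γ`, that is `b ↦ γ b ^ |K|`, as a `K`-linear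
map. Its `t`-th iterate is `b ↦ N_t(γ) b ^ (|K| ^ t)` with `N_t(γ) = ∏_{k < t} γ ^ (|K| ^ k)`. -/
noncomputable def skewMap (K : Type*) {F : Type*} [Field K] [Fintype K] [Field F] [Algebra K F]
    (γ : F) : F →ₗ[K] F :=
  γ • (FiniteField.frobeniusAlgHom K F).toLinearMap

theorem skewMap_apply {K F : Type*} [Field K] [Fintype K] [Field F] [Algebra K F] (γ b : F) :
    skewMap K γ b = γ * b ^ Fintype.card K := rfl

theorem skewMap_pow_mul {K F : Type*} [Field K] [Fintype K] [Field F] [Algebra K F]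
    (γ α y : F) (t : ℕ) :
    (skewMap K γ ^ t) (α * y) = α ^ Fintype.card K ^ t * (skewMap K γ ^ t) y := by
  induction t with
  | zero => simp
  | succ t ih =>
    simp only [pow_succ', Module.End.mul_apply, ih, skewMap_apply, mul_pow, pow_mul]
    simp only [← pow_mul, mul_comm (Fintype.card K)]
    ring

/-- Independence of the columns of a skew Vandermonde matrix. Each index `p` lies in a group `i p`,
whose multipliers `γ` have pairwise different norms, and `b p` is a member of that group. If inside
every group the `b p` are linearly independent over `K`, the vectors
`((skewMap K (γ (i p)) ^ t) (b p))`, `t < |S|`, are linearly independent over `F`. -/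
theorem skew_indep {K F ι G : Type*} [Field K] [Fintype K] [Field F] [Algebra K F]
    [FiniteDimensional K F] [DecidableEq ι] [DecidableEq G]
    (γ : G → F) (hγ0 : ∀ k, γ k ≠ 0)
    (hγ : Function.Injective fun k => Algebra.norm K (γ k)) (i : ι → G) (x : ι → F)
    (S : Finset ι) : ∀ b : ι → F,
    (∀ c : ι → K, (∀ k, ∑ p ∈ S with i p = k, c p • b p = 0) → ∀ p ∈ S, c p = 0) →
    (∀ t < S.card, ∑ p ∈ S, x p * (skewMap K (γ (i p)) ^ t) (b p) = 0) →
    ∀ p ∈ S, x p = 0 := by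
  induction S using Finset.induction_on with
  | empty => simp
  | insert p₀ S hp₀ ih =>
    intro b hb hx
    have hb0 : b p₀ ≠ 0 := by
      intro h0
      refine one_ne_zero (hb (Pi.single p₀ 1) (fun k => sum_eq_zero fun p _ => ?_) p₀
        (mem_insert_self _ _) |>.symm.trans (by simp)).symm
      by_cases hp : p = p₀
      · subst hp; simp [h0]
      · simp [hp]
    -- `D ↦ D - α` kills `b p₀` and, up to `K`-multiples, nothing else in any group, so it turns
    -- the hypotheses for `insert p₀ S` into those for `S`.
    set α : F := γ (i p₀) * b p₀ ^ Fintype.card K / b p₀ with hα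
    set b' : ι → F := fun p => skewMap K (γ (i p)) (b p) - α * b p with hb'
    have hS : ∀ p ∈ S, x p = 0 := by
      refine ih b' ?_ ?_
      · intro c hc
        have key : ∀ k, skewMap K (γ k) (∑ p ∈ S with i p = k, c p • b p)
            = α * ∑ p ∈ S with i p = k, c p • b p := by
          intro k
          rw [← sub_eq_zero, ← hc k, map_sum, mul_sum, ← sum_sub_distrib]
          refine sum_congr rfl fun p hp => ?_
          obtain ⟨-, rfl⟩ := mem_filter.1 hp
          rw [map_smul, hb', smul_sub, mul_smul_comm]
        have hw : ∃ l : K, ∑ p ∈ S with i p = i p₀, c p • b p = l • b p₀ := by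
          by_cases h0 : ∑ p ∈ S with i p = i p₀, c p • b p = 0
          · exact ⟨0, by simp [h0]⟩
          · exact (skew_kernel (hγ0 _) hb0 h0 (key _)).2 rfl
        have hw' : ∀ k, k ≠ i p₀ → ∑ p ∈ S with i p = k, c p • b p = 0 := by
          intro k hk
          by_contra h0
          exact hk (hγ (skew_kernel (hγ0 _) hb0 h0 (key k)).1)
        obtain ⟨l, hl⟩ := hw
        have hne : ∀ p ∈ S, p ≠ p₀ := fun p hp h => hp₀ (h ▸ hp)
        have hsame : ∀ k, ∑ p ∈ S with i p = k, Function.update c p₀ (-l) p • b p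
            = ∑ p ∈ S with i p = k, c p • b p := fun k =>
          sum_congr rfl fun p hp => by
            rw [Function.update_of_ne (hne p (mem_filter.1 hp).1)]
        have := hb (Function.update c p₀ (-l)) (fun k => ?_)
        · intro p hp
          rw [← this p (mem_insert_of_mem hp), Function.update_of_ne (hne p hp)]
        · rw [filter_insert]
          split_ifs with hk
          · rw [sum_insert (by simp [hp₀]), hsame, ← hk, hl]
            simp
          · rw [hsame, hw' k (Ne.symm hk)]
      · intro t ht
        -- Subtract `α ^ (q ^ t)` times relation `t` from relation `t + 1`; the term of `p₀` drops.
        have h1 := hx (t + 1) (by rw [card_insert_of_notMem hp₀]; omega)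
        have h0 := hx t (by rw [card_insert_of_notMem hp₀]; omega)
        have h2 : ∑ p ∈ insert p₀ S, x p * (skewMap K (γ (i p)) ^ t) (b' p) = 0 := by
          have : ∀ p, x p * (skewMap K (γ (i p)) ^ t) (b' p)
              = x p * (skewMap K (γ (i p)) ^ (t + 1)) (b p)
                - α ^ Fintype.card K ^ t * (x p * (skewMap K (γ (i p)) ^ t) (b p)) := by
            intro p
            rw [hb', map_sub, skewMap_pow_mul, pow_succ, Module.End.mul_apply]
            ring
          simp only [this]
          rw [sum_sub_distrib, ← mul_sum, h1, h0]
          simp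
        rw [sum_insert hp₀] at h2
        have : b' p₀ = 0 := by
          simp only [hb', hα, skewMap_apply]
          field_simp
          simp
        simpa [this] using h2
    intro p hp
    rcases mem_insert.1 hp with rfl | hp
    · have h0 := hx 0 (by simp [hp₀])
      rw [sum_insert hp₀, sum_eq_zero (s := S) fun q hq => by rw [hS q hq, zero_mul]] at h0
      simpa [hb0] using h0
    · exact hS p hp

/-! ### The code and its erasure patterns -/

/-- The rows of a parity check matrix of `C` other than `v`, read as one map with values in `F`:
`φ` cuts `C` out of the hyperplane orthogonal to `v`, because the quotient of that hyperplane
by `C` has dimension at most `s - 1 = [F : K]`. -/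
theorem exists_map {K F : Type*} [Field K] [Field F] [Algebra K F] [FiniteDimensional K F]
    {r s : ℕ} (hr : 2 ≤ r) (C : Submodule K (Fin r → K)) (hCrank : Module.finrank K C = r - s)
    (v : Fin r → K) (hv : ∀ j, v j ≠ 0) (hvC : ∀ c ∈ C, ∑ j, v j * c j = 0)
    (hdeg : Module.finrank K F = s - 1) :
    ∃ φ : (Fin r → K) →ₗ[K] F, ∀ z, ∑ j, v j * z j = 0 → φ z = 0 → z ∈ C := by
  classical
  let f : Module.Dual K (Fin r → K) := ∑ j, v j • LinearMap.proj j
  have hf : ∀ z, f z = ∑ j, v j * z j := fun z => by simp [f]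
  have hf0 : f ≠ 0 := by
    intro h
    have := hf (Pi.single ⟨0, by omega⟩ 1)
    simp [h, Pi.single_apply] at this
    exact hv _ this.symm
  set W := LinearMap.ker f
  have hW : Module.finrank K W + 1 = r := by
    simpa using Module.Dual.finrank_ker_add_one_of_ne_zero hf0
  have hCW : C ≤ W := fun c hc => by rw [LinearMap.mem_ker, hf, hvC c hc]
  have hU : Module.finrank K (W.map C.mkQ) ≤ Module.finrank K F := by
    have h1 := (C.mkQ.domRestrict W).finrank_range_add_finrank_ker
    rw [LinearMap.range_domRestrict] at h1
    have h2 : Module.finrank K (LinearMap.ker (C.mkQ.domRestrict W)) = Module.finrank K C := by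
      rw [LinearMap.ker_domRestrict, Submodule.ker_mkQ]
      exact (Submodule.comapSubtypeEquivOfLe hCW).finrank_eq
    omega
  obtain ⟨e, he⟩ := finrank_le_iff_exists_linearMap.1 hU
  obtain ⟨e', he'⟩ := e.exists_extend
  refine ⟨e' ∘ₗ C.mkQ, fun z hz h0 => ?_⟩
  have hzW : C.mkQ z ∈ W.map C.mkQ := Submodule.mem_map_of_mem (by rw [LinearMap.mem_ker, hf, hz])
  have h1 : e ⟨_, hzW⟩ = 0 := by rw [← he']; exact h0
  have h2 := (map_eq_zero_iff e he).1 h1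
  simpa using congrArg Subtype.val h2

theorem sum_sigma_fiber {G J M : Type*} [Fintype G] [DecidableEq G] [AddCommMonoid M]
    (T : G → Finset J) (k : G) (f : (Σ _ : G, J) → M) :
    ∑ p ∈ univ.sigma T with p.1 = k, f p = ∑ j ∈ T k, f ⟨k, j⟩ := by
  rw [sum_filter, sum_sigma, sum_eq_single k]
  · simp
  · intro l _ hl
    simp [hl]
  · simp

/-- The independence of the columns in a pattern `E`, with local rows `v` and global rows
`(skewMap K (γ k) ^ t) (φ (Pi.single j 1))`, `t < h`, as a statement about the coefficients `X`
of a linear relation. -/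
theorem mr_core {g r h : ℕ} {K F : Type*} [Field K] [Fintype K] [DecidableEq K] [Field F]
    [Algebra K F] [FiniteDimensional K F] (C : Submodule K (Fin r → K))
    (hdist : ∀ c ∈ C, c ≠ 0 →
      min h (r - 1) + 2 ≤ (Finset.univ.filter fun j => c j ≠ 0).card)
    (v : Fin r → K) (hv : ∀ j, v j ≠ 0)
    (φ : (Fin r → K) →ₗ[K] F) (hφ : ∀ z, ∑ j, v j * z j = 0 → φ z = 0 → z ∈ C)
    (γ : Fin g → F) (hγ0 : ∀ k, γ k ≠ 0)
    (hγ : Function.Injective fun k => Algebra.norm K (γ k))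
    (E : Fin g → Finset (Fin r)) (hE : ∀ i, 1 ≤ (E i).card)
    (hEh : ∑ i, (E i).card = g * 1 + h) (X : Fin g → Fin r → F)
    (hX1 : ∀ k, ∑ j ∈ E k, X k j * algebraMap K F (v j) = 0)
    (hX2 : ∀ t < h, ∑ k, ∑ j ∈ E k, X k j * (skewMap K (γ k) ^ t) (φ (Pi.single j 1)) = 0) :
    ∀ k, ∀ j ∈ E k, X k j = 0 := by
  choose c hc using fun k => card_pos.1 (hE k)
  -- Every other group takes at least one of the `g + h` columns.
  have hEle : ∀ k, (E k).card ≤ min h (r - 1) + 1 := by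
    intro k
    have h1 : (E k).card ≤ r := by simpa using card_le_univ (E k)
    have h2 : ∑ i ∈ univ.erase k, 1 ≤ ∑ i ∈ univ.erase k, (E i).card := sum_le_sum fun i _ => hE i
    have h3 := add_sum_erase univ (fun i => (E i).card) (mem_univ k)
    simp only [sum_const, card_erase_of_mem (mem_univ k), card_univ, Fintype.card_fin,
      smul_eq_mul] at h2
    have := k.2
    omega
  let S : Finset (Σ _ : Fin g, Fin r) := univ.sigma fun k => (E k).erase (c k)
  have hScard : S.card = h := by
    have : ∀ k, ((E k).erase (c k)).card + 1 = (E k).card := fun k => card_erase_add_one (hc k)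
    have h1 : ∑ k, (((E k).erase (c k)).card + 1) = g * 1 + h := by simp only [this, hEh]
    rw [sum_add_distrib] at h1
    simp only [S, card_sigma]
    simp at h1
    omega
  have hv' : ∀ j, algebraMap K F (v j) ≠ 0 := fun j => by simpa using hv j
  -- The global part of column `j` after column `c k` has been used to clear its local part.
  let b : (Σ _ : Fin g, Fin r) → F := fun p =>
    φ (Pi.single p.2 1) - (v p.2 / v (c p.1)) • φ (Pi.single (c p.1) 1)
  have hS : ∀ p ∈ S, X p.1 p.2 = 0 := by
    refine skew_indep γ hγ0 hγ Sigma.fst (fun p => X p.1 p.2) S b ?_ ?_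
    · intro d hd p hp
      -- A `K`-relation between the elements of group `k` is a word `z` of `C` supported on `E k`,
      -- hence lighter than the minimum distance.
      obtain ⟨k, j⟩ := p
      have hj : j ∈ (E k).erase (c k) := (mem_sigma.1 hp).2
      have hdk := hd k
      rw [sum_sigma_fiber] at hdk
      let z : Fin r → K := ∑ j ∈ (E k).erase (c k),
        d ⟨k, j⟩ • (Pi.single j 1 - (v j / v (c k)) • Pi.single (c k) 1)
      have hzφ : φ z = 0 := by
        simp only [z, map_sum, map_smul, map_sub]
        exact hdk
      have hzv : ∑ j, v j * z j = 0 := by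
        let f : (Fin r → K) →ₗ[K] K := ∑ j, v j • LinearMap.proj j
        have hf : ∀ w, f w = ∑ j, v j * w j := fun w => by simp [f]
        have hfs : ∀ j, f (Pi.single j 1) = v j := fun j => by simp [hf, Pi.single_apply]
        rw [← hf, map_sum]
        refine sum_eq_zero fun j _ => ?_
        rw [map_smul, map_sub, map_smul, hfs, hfs, smul_eq_mul, smul_eq_mul,
          div_mul_cancel₀ _ (hv _), sub_self, mul_zero]
      have hzj : ∀ l ∈ (E k).erase (c k), z l = d ⟨k, l⟩ := by
        intro l hl
        have hlc : l ≠ c k := (mem_erase.1 hl).1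
        simp only [z, Finset.sum_apply, Pi.smul_apply, Pi.sub_apply, smul_eq_mul]
        rw [sum_eq_single l]
        · simp [hlc]
        · intro m _ hm
          simp [hlc, hm.symm]
        · exact fun h => absurd hl h
      have hzsupp : (univ.filter fun j => z j ≠ 0) ⊆ E k := by
        intro l hl
        by_contra hlE
        refine (mem_filter.1 hl).2 ?_
        simp only [z, Finset.sum_apply, Pi.smul_apply, Pi.sub_apply, smul_eq_mul]
        refine sum_eq_zero fun m hm => ?_
        have h1 : l ≠ m := fun h => hlE (h ▸ (mem_erase.1 hm).2)
        have h2 : l ≠ c k := fun h => hlE (h ▸ hc k)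
        simp [h1, h2]
      have hz0 : z = 0 := by
        by_contra hz
        have h1 := hdist z (hφ z hzv hzφ) hz
        have h2 := card_le_card hzsupp
        have h3 := hEle k
        omega
      rw [← hzj j hj, hz0, Pi.zero_apply]
    · intro t ht
      rw [hScard] at ht
      rw [← hX2 t ht, sum_sigma]
      refine sum_congr rfl fun k _ => ?_
      have h1 := hX1 k
      rw [← add_sum_erase _ _ (hc k)] at h1 ⊢
      have h2 : X k (c k) = - (∑ j ∈ (E k).erase (c k), X k j * algebraMap K F (v j))
          / algebraMap K F (v (c k)) := by
        rw [eq_div_iff (hv' _)]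
        exact eq_neg_of_add_eq_zero_left h1
      rw [h2, neg_div, sum_div, neg_mul, sum_mul, ← sum_neg_distrib, ← sum_add_distrib]
      refine sum_congr rfl fun j _ => ?_
      simp only [b]
      rw [map_sub, map_smul, Algebra.smul_def, map_div₀]
      ring
  intro k j hj
  have hother : ∀ l ∈ (E k).erase (c k), X k l = 0 := fun l hl =>
    hS ⟨k, l⟩ (mem_sigma.2 ⟨mem_univ _, hl⟩)
  by_cases hjc : j = c k
  · have h1 := hX1 k
    rw [← add_sum_erase _ _ (hc k), sum_eq_zero (s := (E k).erase (c k)) fun l hl => by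
      rw [hother l hl, zero_mul], add_zero] at h1
    rw [hjc]
    exact (mul_eq_zero.1 h1).resolve_right (hv' _)
  · exact hother j (mem_erase.2 ⟨hjc, hj⟩)

end

/-- MR LRCs with `a = 1` from a code `C ⊆ K^r` of codimension `s`, minimum distance
at least `min h (r-1) + 2`, whose dual contains a full-weight codeword `v`:
there exists an MR `(g·r, r, h, 1)`-LRC over a field `F` with `[F : K] = s - 1`,
i.e. of cardinality `q₀^(s-1)`. -/
theorem mr_lrc_exists_a_eq_one (g r h q₀ s : ℕ) (hg : 0 < g) (hh : 0 < h)
    (hr : 2 ≤ r) (hs : 2 ≤ s)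
    (K F : Type*) [Field K] [Fintype K] [DecidableEq K] [Field F] [Algebra K F]
    (hpp : IsPrimePow q₀) (hcard : Fintype.card K = q₀) (hq₀ : g + 1 ≤ q₀)
    (C : Submodule K (Fin r → K)) (hCrank : Module.finrank K C = r - s)
    (hdist : ∀ c ∈ C, c ≠ 0 →
      min h (r - 1) + 2 ≤ (Finset.univ.filter fun j => c j ≠ 0).card)
    (v : Fin r → K) (hv : ∀ j, v j ≠ 0) (hvC : ∀ c ∈ C, ∑ j, v j * c j = 0)
    (hdeg : Module.finrank K F = s - 1) :
    ∃ (A : Fin g → Matrix (Fin 1) (Fin r) F) (B : Fin g → Matrix (Fin h) (Fin r) F),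
      IsMaximallyRecoverable g r h 1 A B := by
  have hpos : 0 < Module.finrank K F := by omega
  have : FiniteDimensional K F := Module.finite_of_finrank_pos hpos
  have : Finite F := Module.finite_of_finite K
  obtain ⟨φ, hφ⟩ := exists_map hr C hCrank v hv hvC hdeg
  have hcardU : Fintype.card (Fin g) ≤ Fintype.card Kˣ := by
    rw [Fintype.card_units, Fintype.card_fin]
    omega
  obtain ⟨ν⟩ := Function.Embedding.nonempty_of_card_le hcardU
  choose γ hγν using fun k => FiniteField.norm_surjective K F (ν k : K)
  have hγ0 : ∀ k, γ k ≠ 0 := by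
    intro k h0
    have := hγν k
    rw [h0, Algebra.norm_zero] at this
    exact (ν k).ne_zero this.symm
  have hγ : Function.Injective fun k => Algebra.norm K (γ k) := by
    intro k l hkl
    simp only [hγν] at hkl
    exact ν.injective (Units.ext hkl)
  refine ⟨fun _ _ j => algebraMap K F (v j),
    fun k t j => (skewMap K (γ k) ^ (t : ℕ)) (φ (Pi.single j 1)), ?_, ?_⟩
  · intro i S hS
    have : Subsingleton S := by
      have := Finset.card_le_one.1 hS.le
      exact ⟨fun a b => Subtype.ext (this _ a.2 _ b.2)⟩
    rw [linearIndependent_subsingleton_index_iff]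
    intro j h0
    have := congrFun h0 0
    simp [hv] at this
  · intro E hE hEh
    rw [Fintype.linearIndependent_iff]
    intro x hx
    let X : Fin g → Fin r → F := fun k j => if hj : j ∈ E k then x ⟨(k, j), hj⟩ else 0
    have hsum : ∀ f : Fin g → Fin r → F,
        ∑ p : {p : Fin g × Fin r // p.2 ∈ E p.1}, x p * f p.1.1 p.1.2
          = ∑ k, ∑ j ∈ E k, X k j * f k j := by
      intro f
      have h1 : ∀ p : {p : Fin g × Fin r // p.2 ∈ E p.1},
          x p * f p.1.1 p.1.2 = X p.1.1 p.1.2 * f p.1.1 p.1.2 := fun p => by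
        simp [X, p.2]
      rw [Finset.sum_congr rfl fun p _ => h1 p,
        ← Finset.sum_subtype (Finset.univ.filter fun p : Fin g × Fin r => p.2 ∈ E p.1) (by simp)
          (fun p => X p.1 p.2 * f p.1 p.2), Finset.sum_filter, Fintype.sum_prod_type]
      simp only [← Finset.sum_filter, Finset.filter_mem_eq_inter, Finset.univ_inter]
    have hX := mr_core C hdist v hv φ hφ γ hγ0 hγ E hE hEh X ?_ ?_
    · rintro ⟨⟨k, j⟩, hj⟩
      have := hX k j hj
      rwa [show X k j = x ⟨(k, j), hj⟩ from dif_pos hj] at this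
    · intro k
      have h1 := congrFun hx (Sum.inl (k, 0))
      simp only [Finset.sum_apply, Pi.smul_apply, smul_eq_mul, lrcMatrix, Sum.elim_inl,
        Pi.zero_apply] at h1
      rw [hsum fun l j => if k = l then algebraMap K F (v j) else 0, Finset.sum_eq_single k] at h1
      · simpa using h1
      · intro l _ hl
        simp [hl.symm]
      · simp
    · intro t ht
      have h1 := congrFun hx (Sum.inr ⟨t, ht⟩)
      simp only [Finset.sum_apply, Pi.smul_apply, smul_eq_mul, lrcMatrix, Sum.elim_inr,
        Pi.zero_apply] at h1
      rw [hsum fun k j => (skewMap K (γ k) ^ t) (φ (Pi.single j 1))] at h1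
      exact h1
end

section
/- Let K be a finite field with |K| = q₀, and let r ≥ 2 and d ≥ 2 be integers. Set ℓ = Nat.clog q₀ r (the least ℓ with q₀^ℓ ≥ r) and s = 1 + ((d−2) − (d−2)/q₀)·ℓ, where (d−2)/q₀ denotes integer (floor) division. Then there exists a K-linear subspace C ⊆ (Fin r → K) with finrank_K C ≥ r − s such that every nonzero c ∈ C has Hamming weight at least d. -/
/-!
The code is a subfield subcode of a Reed-Solomon code. Let `L` be the extension of `K` of degree
`ℓ = ⌈log_{q₀} r⌉`, so that `L` contains `r` distinct points `α j`, and let `C` consist of the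
words `c` over `K` whose power sums `S_i = ∑ j, c j * α j ^ i` vanish for all `i ≤ d - 2`.

* Distance: on a support of fewer than `d` points these equations contain a square Vandermonde
  system with distinct nodes, which forces `c = 0` (`eq_zero_of_powerSum_eq_zero`).
* Dimension: as the `c j` are fixed by the `q₀`-Frobenius, `S_{q₀ i} = S_i ^ q₀`
  (`powerSum_mul_card`). It is therefore enough to impose `S_0 = 0`, which is a single `K`-linear
  condition since `S_0 ∈ K`, and `S_i = 0` for those `1 ≤ i ≤ d - 2` not divisible by `q₀`, each
  of which is at most `ℓ` conditions over `K`. Rank-nullity gives the bound.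
-/

/-- A word of weight at most `m` whose first `m` power sums at distinct points vanish is zero. -/
lemma eq_zero_of_powerSum_eq_zero {K L : Type*} [Field K] [DecidableEq K] [Field L] [Algebra K L]
    {r m : ℕ} {α : Fin r → L} (hα : Function.Injective α) {c : Fin r → K}
    (hw : (Finset.univ.filter fun j => c j ≠ 0).card ≤ m)
    (h : ∀ i < m, ∑ j, algebraMap K L (c j) * α j ^ i = 0) : c = 0 := by
  set S := Finset.univ.filter fun j => c j ≠ 0 with hS
  let e := S.equivFin
  have hv : (fun k => algebraMap K L (c (e.symm k))) = 0 := by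
    refine Matrix.eq_zero_of_forall_pow_sum_mul_pow_eq_zero (f := fun k => α (e.symm k))
      (fun a b hab => e.symm.injective (Subtype.ext (hα hab))) fun i => ?_
    rw [e.symm.sum_comp (fun x : S => algebraMap K L (c x) * α x ^ (i : ℕ)),
      Finset.sum_coe_sort S (fun x => algebraMap K L (c x) * α x ^ (i : ℕ)),
      ← h i (i.2.trans_le hw)]
    refine Finset.sum_subset (Finset.subset_univ _) fun x _ hx => ?_
    have : c x = 0 := by simpa [hS] using hx
    simp [this]
  funext j
  by_contra hj
  have hjS : j ∈ S := by simpa [hS] using hj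
  have := congrFun hv (e ⟨j, hjS⟩)
  simp only [Equiv.symm_apply_apply, Pi.zero_apply, map_eq_zero] at this
  exact hj this

lemma powerSum_mul_card {K L : Type*} [Field K] [Fintype K] [Field L] [Algebra K L]
    {r : ℕ} (α : Fin r → L) (c : Fin r → K) (i : ℕ) :
    ∑ j, algebraMap K L (c j) * α j ^ (Fintype.card K * i) =
      (∑ j, algebraMap K L (c j) * α j ^ i) ^ Fintype.card K := by
  have := map_sum (FiniteField.frobeniusAlgHom K L)
    (fun j => algebraMap K L (c j) * α j ^ i) Finset.univ
  simp only [FiniteField.coe_frobeniusAlgHom] at this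
  rw [this]
  refine Finset.sum_congr rfl fun j _ => ?_
  rw [mul_pow, ← map_pow, FiniteField.pow_card, ← pow_mul, mul_comm i]

/-- The power sums `S_i` with `q₀ ∤ i`, together with `S_0`, control all the others, by strong induction on
the exponent through `S_{q₀ k} = S_k ^ q₀`. -/
lemma powerSum_eq_zero {K L : Type*} [Field K] [Fintype K] [Field L] [Algebra K L]
    {r m : ℕ} {α : Fin r → L} {c : Fin r → K} (h0 : ∑ j, c j = 0)
    (h : ∀ i ∈ (Finset.Ioc 0 m).filter fun i => ¬ Fintype.card K ∣ i,
      ∑ j, algebraMap K L (c j) * α j ^ i = 0) (i : ℕ) (hi : i ≤ m) :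
    ∑ j, algebraMap K L (c j) * α j ^ i = 0 := by
  induction i using Nat.strong_induction_on with
  | _ i ih =>
    have hq : 1 < Fintype.card K := Fintype.one_lt_card
    rcases Nat.eq_zero_or_pos i with rfl | hpos
    · simp [← map_sum, h0]
    · by_cases hdvd : Fintype.card K ∣ i
      · obtain ⟨k, rfl⟩ := hdvd
        have hk : k < Fintype.card K * k := by
          have : 0 < k := Nat.pos_of_mul_pos_left hpos
          nlinarith
        rw [powerSum_mul_card, ih k hk (hk.le.trans hi), zero_pow (by omega)]
      · exact h i (by simp [hpos, hi, hdvd])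

lemma card_filter_not_dvd (q m : ℕ) :
    ((Finset.Ioc 0 m).filter fun i => ¬ q ∣ i).card = m - m / q := by
  have h := Finset.card_filter_add_card_filter_not (s := Finset.Ioc 0 m) (fun i => q ∣ i)
  rw [Nat.Ioc_filter_dvd_card_eq_div, Nat.card_Ioc] at h
  omega

/-- The parity check map of the BCH code: `S_0` as an element of `K`, and the power sums `S_i`,
`i ∈ I`, as elements of `L`. -/
def bchCheck (K : Type*) {L : Type*} [Field K] [Field L] [Algebra K L] {r : ℕ}
    (α : Fin r → L) (I : Finset ℕ) : (Fin r → K) →ₗ[K] K × (I → L) where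
  toFun c := (∑ j, c j, fun i => ∑ j, algebraMap K L (c j) * α j ^ (i : ℕ))
  map_add' c c' := by
    ext <;> simp [add_mul, Finset.sum_add_distrib]
  map_smul' a c := by
    ext <;> simp [Finset.mul_sum, Algebra.smul_def, mul_assoc]

/-- Existence of BCH codes: over a finite field `K` with `q₀` elements, for any
length `r ≥ 2` and designed distance `d ≥ 2`, there is a linear code of length `r`,
dimension at least `r - s` and minimum distance at least `d`, where
`s = 1 + ((d-2) - ⌊(d-2)/q₀⌋) · ⌈log_{q₀} r⌉`. -/
theorem bch_code_exists (q₀ r d : ℕ) (K : Type*) [Field K] [Fintype K] [DecidableEq K]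
    (hcard : Fintype.card K = q₀) (hr : 2 ≤ r) (hd : 2 ≤ d) :
    ∃ C : Submodule K (Fin r → K),
      r - (1 + ((d - 2) - (d - 2) / q₀) * Nat.clog q₀ r) ≤ Module.finrank K C ∧
      ∀ c ∈ C, c ≠ 0 → d ≤ (Finset.univ.filter fun j => c j ≠ 0).card := by
  subst hcard
  have hq : 1 < Fintype.card K := Fintype.one_lt_card
  set ℓ := Nat.clog (Fintype.card K) r
  have : NeZero ℓ := ⟨(Nat.clog_pos hq hr).ne'⟩
  obtain ⟨p, hp⟩ := CharP.exists K
  have : Fact p.Prime := ⟨CharP.char_is_prime K p⟩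
  let L := FiniteField.Extension K p ℓ
  have hL : r ≤ Nat.card L := by
    rw [FiniteField.natCard_extension, Nat.card_eq_fintype_card]
    exact Nat.le_pow_clog hq r
  obtain ⟨α, hα⟩ : ∃ α : Fin r → L, Function.Injective α :=
    ⟨fun j => (Finite.equivFin L).symm (Fin.castLE hL j), fun a b hab => by simpa using hab⟩
  set I := (Finset.Ioc 0 (d - 2)).filter fun i => ¬ Fintype.card K ∣ i with hI
  refine ⟨LinearMap.ker (bchCheck K α I), ?_, fun c hc hc0 => ?_⟩
  · have h1 := (bchCheck K α I).finrank_range_add_finrank_ker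
    have h2 := (LinearMap.range (bchCheck K α I)).finrank_le
    have h3 : Module.finrank K (K × (I → L)) =
        1 + ((d - 2) - (d - 2) / Fintype.card K) * ℓ := by
      rw [Module.finrank_prod, Module.finrank_self, Module.finrank_pi_fintype]
      simp [L, FiniteField.finrank_extension, hI, card_filter_not_dvd]
    rw [Module.finrank_fin_fun] at h1
    omega
  · by_contra! hlt
    have hc' : (∑ j, c j, fun i : I => ∑ j, algebraMap K L (c j) * α j ^ (i : ℕ)) = 0 := hc
    rw [Prod.mk_eq_zero] at hc'
    -- The vanishing exponents `0, …, d - 2` are `d - 1` in number.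
    exact hc0 (eq_zero_of_powerSum_eq_zero (m := d - 1) hα (by omega) fun i hi =>
      powerSum_eq_zero hc'.1 (fun i hi => congrFun hc'.2 ⟨i, hi⟩) i (by omega))
end

section
/- Let K be a finite field with |K| = q and F a field extension of K with [F : K] = m, and let γ be a generator of the cyclic group Fˣ. Let 1 ≤ d ≤ q − 1 and let ℓ_1,…,ℓ_d ∈ {0, 1, …, q−2} be distinct natural numbers. Then the d×d matrix M over F with entries M i j = γ^(ℓ_j · ∑_{t<i} q^t) for i, j ∈ {0,…,d−1} (so row 0 is all ones) is invertible. -/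
/-!
Write `N i a = a ^ (1 + q + ⋯ + q ^ (i - 1))`, so that `N (i + 1) a = a * (N i a) ^ q`, and let
`a j = γ ^ ℓ j`. A column relation `∑ j, v j * N i (a j) = 0` on consecutive rows `i` can be raised
to the `q`-th power, a field endomorphism of `F`: this gives the relation with coefficients
`v j ^ q / a j` on the rows shifted by one. Eliminating one index `j₀` between the two relations
on their common rows leaves one column and one row fewer, so by induction all coefficients of the
combination vanish (`eq_zero_of_relations`). If `v j` and `v j₀` were both nonzero this would say
`a j / a j₀ = (v j / v j₀) ^ (q - 1)`, that is, `a j` and `a j₀` would be conjugate. That is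
impossible (`not_conjugate`): `Kˣ` embeds in the cyclic group `Fˣ`, so `q - 1` divides the order of
`γ`, whence the exponents `ℓ j`, `ℓ j₀ < q - 1` would be congruent modulo `q - 1`.
-/

/-- Independence of the columns `N · j` on any `s.card` consecutive rows. The starting row `r` is
arbitrary because the elimination step moves it by one. The hypothesis `hconj` says that distinct
`a i`, `a j` are not conjugate, with denominators cleared. -/
theorem eq_zero_of_relations {K F ι : Type*} [Field K] [Fintype K] [Field F] [Algebra K F]
    [DecidableEq ι] (a : ι → F) (N : ℕ → ι → F) (ha : ∀ j, a j ≠ 0) (hN : ∀ i j, N i j ≠ 0)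
    (hrec : ∀ i j, N (i + 1) j = a j * N i j ^ Fintype.card K)
    (hconj : ∀ i j, i ≠ j → ∀ x y : F,
      x ^ Fintype.card K * a j * y = x * (y ^ Fintype.card K * a i) → x = 0 ∨ y = 0)
    (s : Finset ι) : ∀ (r : ℕ) (v : ι → F),
      (∀ i < s.card, ∑ j ∈ s, v j * N (r + i) j = 0) → ∀ j ∈ s, v j = 0 := by
  induction s using Finset.induction_on with
  | empty => simp
  | insert k s hk ih =>
    intro r v h
    rw [Finset.card_insert_of_notMem hk] at h
    simp only [Finset.sum_insert hk] at h
    by_cases hvk : v k = 0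
    · have h0 := ih r v fun i hi => by simpa [hvk] using h i (by omega)
      intro j hj
      rcases Finset.mem_insert.1 hj with rfl | hj
      · exact hvk
      · exact h0 j hj
    have hfrob : ∀ i < s.card + 1, v k ^ Fintype.card K * (a k)⁻¹ * N (r + i + 1) k
        + ∑ j ∈ s, v j ^ Fintype.card K * (a j)⁻¹ * N (r + i + 1) j = 0 := by
      intro i hi
      have h1 := congrArg (FiniteField.frobeniusAlgHom K F) (h i hi)
      simp only [map_add, map_sum, map_mul, map_zero, FiniteField.coe_frobeniusAlgHom] at h1
      have h2 : ∀ j, v j ^ Fintype.card K * (a j)⁻¹ * N (r + i + 1) j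
          = v j ^ Fintype.card K * N (r + i) j ^ Fintype.card K := by
        intro j
        rw [hrec]
        field_simp [ha j]
      simpa only [h2] using h1
    have hu := ih (r + 1)
      (fun j => v k * (v j ^ Fintype.card K * (a j)⁻¹)
        - v k ^ Fintype.card K * (a k)⁻¹ * v j) (by
      intro i hi
      have h1 := h (i + 1) (by omega)
      have h2 := hfrob i (by omega)
      rw [show r + (i + 1) = r + i + 1 by ring] at h1
      rw [show r + 1 + i = r + i + 1 by ring]
      simp only [sub_mul, Finset.sum_sub_distrib, mul_assoc, ← Finset.mul_sum] at h1 h2 ⊢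
      linear_combination v k * h2 - v k ^ Fintype.card K * (a k)⁻¹ * h1)
    have hs : ∀ j ∈ s, v j = 0 := by
      intro j hj
      have hjk : j ≠ k := fun e => hk (e ▸ hj)
      refine (hconj j k hjk (v j) (v k) ?_).resolve_right hvk
      have h1 := hu j hj
      have h2 := ha j
      have h3 := ha k
      field_simp at h1
      linear_combination h1
    have h0 := h 0 (by omega)
    rw [Finset.sum_eq_zero fun j hj => by rw [hs j hj, zero_mul], add_zero] at h0
    exact absurd h0 (mul_ne_zero hvk (hN _ _))

/-- Powers of `γ` with distinct exponents in `{0, …, q - 2}` do not differ by a `(q - 1)`-st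
power. -/
theorem not_conjugate {K F : Type*} [Field K] [Fintype K] [Field F] [Algebra K F]
    (γ : Fˣ) (hγ : ∀ x : Fˣ, x ∈ Subgroup.zpowers γ) (k l : ℕ)
    (hk : k ≤ Fintype.card K - 2) (hl : l ≤ Fintype.card K - 2) (hkl : k ≠ l) (x y : F)
    (h : x ^ Fintype.card K * (γ : F) ^ l * y = x * (y ^ Fintype.card K * (γ : F) ^ k)) :
    x = 0 ∨ y = 0 := by
  by_contra! hxy
  obtain ⟨hx, hy⟩ := hxy
  have hq : 1 < Fintype.card K := Fintype.one_lt_card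
  -- If `γ` has infinite order then `orderOf γ = 0`, and the divisibility is still meaningful below.
  have hdvd : Fintype.card K - 1 ∣ orderOf γ := by
    classical
    obtain ⟨g, hg⟩ := IsCyclic.exists_generator (α := Kˣ)
    have hinj : Function.Injective (Units.map (algebraMap K F : K →* F)) :=
      Units.map_injective (algebraMap K F).injective
    have h1 : orderOf g = Fintype.card K - 1 := by
      rw [orderOf_eq_card_of_forall_mem_zpowers hg, Nat.card_eq_fintype_card,
        Fintype.card_units]
    rw [← h1, ← orderOf_injective _ hinj g]
    exact orderOf_dvd_of_mem_zpowers (hγ _)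
  obtain ⟨n, hn⟩ := Subgroup.mem_zpowers_iff.1 (hγ (Units.mk0 x hx / Units.mk0 y hy))
  obtain ⟨c, hc⟩ : ∃ c, Fintype.card K = c + 1 := ⟨Fintype.card K - 1, by omega⟩
  have hpow : (Units.mk0 x hx / Units.mk0 y hy) ^ c * γ ^ l = γ ^ k := by
    ext
    push_cast
    simp only [Units.val_mk0, Units.val_div_eq_div_val]
    rw [hc] at h
    have h2 : x ^ c * (γ : F) ^ l = y ^ c * (γ : F) ^ k := by
      apply mul_left_cancel₀ (mul_ne_zero hx hy)
      linear_combination h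
    rw [div_pow]
    field_simp
    linear_combination h2
  rw [← hn] at hpow
  have h1 : γ ^ (n * c + l - k : ℤ) = 1 := by
    rw [zpow_sub, zpow_add, zpow_mul, zpow_natCast, zpow_natCast, zpow_natCast, hpow,
      mul_inv_cancel]
  have h2 : (c : ℤ) ∣ n * c + l - k := by
    refine dvd_trans ?_ (orderOf_dvd_iff_zpow_eq_one.2 h1)
    rw [hc] at hdvd
    exact_mod_cast hdvd
  have h3 : (c : ℤ) ∣ (l - k : ℤ) := by
    have := dvd_sub h2 (Dvd.intro_left n rfl)
    rwa [show (n * c + l - k - n * c : ℤ) = l - k by ring] at this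
  have h4 := Int.eq_zero_of_abs_lt_dvd h3 (by rw [abs_lt]; omega)
  omega

/-- Skew Vandermonde matrices at points in distinct conjugacy classes are invertible:
if `γ` generates `Fˣ` (where `F/K` has degree `m` and `|K| = q`) and
`ℓ₁, …, ℓ_d ∈ {0, …, q-2}` are distinct with `d ≤ q - 1`, then the `d × d` matrix
with entries `γ^(ℓⱼ · (1 + q + ⋯ + q^(i-1)))` is invertible. -/
theorem skew_vandermonde_distinct_classes_isUnit (q m d : ℕ)
    (K F : Type*) [Field K] [Fintype K] [Field F] [Algebra K F]
    (hcard : Fintype.card K = q) (hdeg : Module.finrank K F = m)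
    (γ : Fˣ) (hγ : ∀ x : Fˣ, x ∈ Subgroup.zpowers γ)
    (hd1 : 1 ≤ d) (hdq : d ≤ q - 1)
    (ℓ : Fin d → ℕ) (hℓ : Function.Injective ℓ) (hℓq : ∀ j, ℓ j ≤ q - 2) :
    IsUnit (Matrix.of fun i j : Fin d =>
      (γ : F) ^ (ℓ j * ∑ t ∈ Finset.range (i : ℕ), q ^ t)) := by
  subst hcard
  rw [← Matrix.mulVec_injective_iff_isUnit, ← Matrix.coe_mulVecLin, injective_iff_map_eq_zero]
  intro v hv
  funext j
  refine eq_zero_of_relations (K := K) (fun j => (γ : F) ^ ℓ j)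
    (fun i j => (γ : F) ^ (ℓ j * ∑ t ∈ Finset.range i, Fintype.card K ^ t))
    (fun j => pow_ne_zero _ γ.ne_zero) (fun i j => pow_ne_zero _ γ.ne_zero) ?_
    (fun i j hij x y => not_conjugate γ hγ _ _ (hℓq i) (hℓq j) (hℓ.ne hij) x y)
    Finset.univ 0 v ?_ j (Finset.mem_univ j)
  · intro i j
    simp only [Finset.sum_range_succ', pow_succ, ← Finset.sum_mul]
    ring
  · intro i hi
    have h := congrFun hv ⟨i, by simpa using hi⟩
    simpa [Matrix.mulVec, dotProduct, mul_comm] using h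
end

section
/- Let K be a finite field with |K| = q and F a field extension of K with [F : K] = m, let γ be a generator of the cyclic group Fˣ, and let ℓ ∈ {0, 1, …, q−2}. Let β_1,…,β_m ∈ F be K-linearly independent. Then the m×m matrix M over F with entries M i j = γ^(ℓ · ∑_{t<i} q^t) · β_j^(q^i − 1) for i, j ∈ {0,…,m−1} (so row 0 is all ones) is invertible. -/
/-!
After multiplying column `j` by `β j`, a left kernel vector `v` of the matrix gives coefficients
`a i = v i * γ ^ (ℓ * ∑ t < i, q ^ t)` for which the `q`-polynomial `∑ i < m, a i * x ^ (q ^ i)`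
vanishes at every `β j`. That polynomial is a `K`-linear function of `x` and the `β j` form a
`K`-basis of `F`, so it vanishes on all of `F`. Dedekind's independence of characters, applied to
the `m` distinct powers of the Frobenius automorphism, forces `a = 0`, hence `v = 0`.
-/

/-- A `q`-polynomial of `q`-degree less than `m = [F : K]` vanishing at `m` linearly independent
points is zero; equivalently, the Moore matrix `(β j ^ (q ^ i))` has trivial left kernel. -/
theorem coeff_eq_zero_of_linearized_vanish {K F : Type*} [Field K] [Fintype K] [Field F]
    [Algebra K F] [FiniteDimensional K F] (β : Fin (Module.finrank K F) → F)
    (hβ : LinearIndependent K β) (a : Fin (Module.finrank K F) → F)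
    (h : ∀ j, ∑ i, a i * β j ^ (Fintype.card K ^ (i : ℕ)) = 0) : a = 0 := by
  have : Finite F := Module.finite_of_finite K
  set σ : F →ₐ[K] F := FiniteField.frobeniusAlgHom K F with hσ
  have hpow (n : ℕ) (x : F) : (σ ^ n) x = x ^ (Fintype.card K ^ n) := by
    rw [AlgHom.coe_pow, hσ, FiniteField.coe_frobeniusAlgHom, pow_iterate]
  have hlin : ∑ i, a i • (σ ^ (i : ℕ)).toLinearMap = (0 : F →ₗ[K] F) := by
    refine LinearMap.ext_on_range (hβ.span_eq_top_of_card_eq_finrank' (by simp)) fun j => ?_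
    simpa [← AlgHom.coe_pow, hpow, -AlgHom.coe_pow] using h j
  have hind : LinearIndependent F
      fun i : Fin (Module.finrank K F) => ((σ ^ (i : ℕ) : F →ₐ[K] F) : F → F) :=
    (linearIndependent_monoidHom F F).comp
      (fun i : Fin (Module.finrank K F) => ((σ ^ (i : ℕ) : F →ₐ[K] F) : F →* F))
      fun i j hij => (FiniteField.bijective_frobeniusAlgHom_pow K F).1
        (AlgHom.ext fun x => DFunLike.congr_fun hij x)
  refine funext (Fintype.linearIndependent_iff.mp hind a ?_)
  ext x
  simpa [-AlgHom.coe_pow] using LinearMap.congr_fun hlin x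


/-- Skew Vandermonde matrices at points in a single conjugacy class with linearly
independent conjugators are invertible: if `γ` generates `Fˣ` (where `F/K` has
degree `m` and `|K| = q`), `ℓ ∈ {0, …, q-2}`, and `β₁, …, β_m ∈ F` are `K`-linearly
independent, then the `m × m` matrix with entries
`γ^(ℓ · (1 + q + ⋯ + q^(i-1))) · βⱼ^(qⁱ - 1)` is invertible. -/
theorem skew_vandermonde_single_class_isUnit (q m : ℕ)
    (K F : Type*) [Field K] [Fintype K] [Field F] [Algebra K F]
    (hcard : Fintype.card K = q) (hdeg : Module.finrank K F = m)
    (γ : Fˣ) (hγ : ∀ x : Fˣ, x ∈ Subgroup.zpowers γ)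
    (ℓ : ℕ) (hℓ : ℓ ≤ q - 2)
    (β : Fin m → F) (hβ : LinearIndependent K β) :
    IsUnit (Matrix.of fun i j : Fin m =>
      (γ : F) ^ (ℓ * ∑ t ∈ Finset.range (i : ℕ), q ^ t) * β j ^ (q ^ (i : ℕ) - 1)) := by
  subst hcard hdeg
  -- The case `finrank K F = 0` is that of the empty matrix.
  rcases Nat.eq_zero_or_pos (Module.finrank K F) with h0 | hpos
  · have : IsEmpty (Fin (Module.finrank K F)) := by rw [h0]; infer_instance
    exact isUnit_of_subsingleton _
  have : FiniteDimensional K F := Module.finite_of_finrank_pos hpos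
  rw [← Matrix.vecMul_injective_iff_isUnit, ← Matrix.coe_vecMulLinear, injective_iff_map_eq_zero]
  intro v hv
  have ha := coeff_eq_zero_of_linearized_vanish β hβ
    (fun i => v i * (γ : F) ^ (ℓ * ∑ t ∈ Finset.range (i : ℕ), Fintype.card K ^ t)) fun j => by
      have hj := congr_fun hv j
      simp only [Matrix.vecMulLinear_apply, Matrix.vecMul, dotProduct, Matrix.of_apply,
        Pi.zero_apply] at hj
      rw [← zero_mul (β j), ← hj, Finset.sum_mul]
      refine Finset.sum_congr rfl fun i _ => ?_
      have hq : Fintype.card K ^ (i : ℕ) ≠ 0 := pow_ne_zero _ Fintype.card_ne_zero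
      rw [← pow_sub_one_mul hq (β j)]
      ring
  funext i
  exact (mul_eq_zero.mp (congr_fun ha i)).resolve_right (pow_ne_zero _ γ.ne_zero)
end

section
/- Let K be a finite field with |K| = q, F a field extension of K with [F : K] = m, and γ a generator of the cyclic group Fˣ. Let d ≥ 0 and let f : Fin (d+1) → F be not identically zero. For each ℓ ∈ {0, 1, …, q−2}, the map L_ℓ : F → F defined by L_ℓ(y) = ∑_{i=0}^{d} f i · γ^(ℓ · ∑_{t<i} q^t) · y^(q^i) is K-linear, and the sum of the K-dimensions of the kernels satisfies ∑_{ℓ=0}^{q−2} finrank_K (ker L_ℓ) ≤ d. -/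
/-!
The proof is that of the bound on the number of roots of a polynomial, by splitting off linear
factors. Let `t` act on `F` as `y ↦ a * y ^ q` with `a = γ ^ ℓ` (`twist`); then `L_ℓ` is the action
of the skew polynomial `∑ fᵢ tⁱ` (`skewEval`). If some `L_ℓ` kills `y ≠ 0`, put
`b = γ ^ ℓ * y ^ (q - 1)`. Right division by `t - b` (`exists_div`) leaves remainder zero, so every
`L_i` factors through the action of `t - b` on the class of `γ ^ i`, with a quotient of degree one
less that is the same for all `i`.

The kernel of `t - b` on the class of `γ ^ ℓ` is the line `K * y`, because the fixed points of
`z ↦ z ^ q` in `F` are the elements of `K`. On every other class it is zero, because the `γ ^ i` with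
`i < q - 1` differ pairwise modulo `(q - 1)`-st powers (`exponent_eq_of_conj`). Thus one linear
factor accounts for at most one dimension in the total (`rank_ker_linear_factor_le`), and induction
on the degree gives the bound.
-/

namespace SkewRoots

variable {K F : Type*} [Field K] [Fintype K] [Field F] [Algebra K F]

lemma rank_ker_comp_le {K V : Type*} [Field K] [AddCommGroup V] [Module K V] (g h : V →ₗ[K] V) :
    Module.rank K (LinearMap.ker (g ∘ₗ h)) ≤
      Module.rank K (LinearMap.ker g) + Module.rank K (LinearMap.ker h) := by
  have hmem : ∀ x ∈ LinearMap.ker (g ∘ₗ h), h x ∈ LinearMap.ker g := fun x hx => by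
    simpa using hx
  rw [← LinearMap.rank_range_add_rank_ker (h.restrict hmem)]
  refine add_le_add (Submodule.rank_le _) ?_
  have hk : ∀ x : LinearMap.ker (h.restrict hmem),
      ((LinearMap.ker (g ∘ₗ h)).subtype ∘ₗ (LinearMap.ker (h.restrict hmem)).subtype) x ∈
        LinearMap.ker h := fun x => by
    exact congrArg Subtype.val (LinearMap.mem_ker.mp x.2)
  refine LinearMap.rank_le_of_injective (LinearMap.codRestrict _ _ hk) ?_
  intro x y hxy
  have := congrArg Subtype.val hxy
  exact Subtype.ext (Subtype.ext this)

open Polynomial in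
lemma mem_range_of_pow_card_eq {z : F} (hz : z ^ Fintype.card K = z) :
    ∃ c : K, algebraMap K F c = z := by
  classical
  have hne : (X ^ Fintype.card K - X : F[X]) ≠ 0 :=
    FiniteField.X_pow_card_sub_X_ne_zero F Fintype.one_lt_card
  -- `X ^ q - X` has at most `q` roots in `F`, and the elements of `K` are already `q` of them.
  have hroots : Finset.univ.image (algebraMap K F) = (X ^ Fintype.card K - X : F[X]).roots.toFinset := by
    refine Finset.eq_of_subset_of_card_le (fun x hx => ?_) ?_
    · obtain ⟨c, -, rfl⟩ := Finset.mem_image.mp hx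
      rw [Multiset.mem_toFinset, mem_roots hne]
      simp [← map_pow, FiniteField.pow_card]
    · rw [Finset.card_image_of_injective _ (algebraMap K F).injective, Finset.card_univ]
      exact (Multiset.toFinset_card_le _).trans ((card_roots' _).trans
        (FiniteField.X_pow_card_sub_X_natDegree_eq F Fintype.one_lt_card).le)
  have hz' : z ∈ (X ^ Fintype.card K - X : F[X]).roots.toFinset := by
    rw [Multiset.mem_toFinset, mem_roots hne]
    simp [hz]
  rw [← hroots] at hz'
  obtain ⟨c, -, hc⟩ := Finset.mem_image.mp hz'
  exact ⟨c, hc⟩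

/-- If `γ` generates `Fˣ`, then `1, γ, …, γ ^ (q - 2)` lie in distinct `q`-Frobenius conjugacy
classes, two elements being conjugate when their quotient is a `(q - 1)`-st power. The reason is
that `q - 1`, the order of the subgroup `Kˣ`, divides the order of `γ` (which is `0` should `Fˣ`
be infinite). -/
lemma exponent_eq_of_conj {γ : Fˣ} (hγ : ∀ x : Fˣ, x ∈ Subgroup.zpowers γ)
    {i j : ℕ} (hi : i < Fintype.card K - 1) (hj : j < Fintype.card K - 1) {u : Fˣ}
    (h : γ ^ i = γ ^ j * u ^ (Fintype.card K - 1)) : i = j := by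
  obtain ⟨k, rfl⟩ := Subgroup.mem_zpowers_iff.mp (hγ u)
  have hdvd : Fintype.card K - 1 ∣ orderOf γ := by
    rw [orderOf_eq_card_of_forall_mem_zpowers hγ, ← Nat.card_eq_fintype_card, ← Nat.card_units]
    exact Subgroup.card_dvd_of_injective (Units.map (algebraMap K F : K →* F))
      (Units.map_injective (algebraMap K F).injective)
  have h2 : γ ^ (i : ℤ) = γ ^ ((j : ℤ) + k * (Fintype.card K - 1 : ℕ)) := by
    rw [zpow_add, zpow_mul, zpow_natCast, zpow_natCast, zpow_natCast, h]
  rw [zpow_eq_zpow_iff_modEq] at h2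
  have h3 := h2.of_dvd (Int.natCast_dvd_natCast.mpr hdvd)
  have h4 : (i : ℤ) ≡ j [ZMOD (Fintype.card K - 1 : ℕ)] := h3.trans (by simp [Int.ModEq])
  exact Nat.ModEq.eq_of_lt_of_lt (Int.natCast_modEq_iff.mp h4) hi hj

variable (K) in
/-- The `K`-linear operator `y ↦ a * y ^ q` on `F`, by which the skew variable `t` acts when
evaluating in the conjugacy class of `a`. -/
noncomputable def twist (a : F) : F →ₗ[K] F :=
  LinearMap.mulLeft K a ∘ₗ (FiniteField.frobeniusAlgHom K F).toLinearMap

lemma twist_apply (a y : F) : twist K a y = a * y ^ Fintype.card K := rfl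

lemma twist_pow_apply (a y : F) (i : ℕ) : (twist K a ^ i) y =
    a ^ (∑ t ∈ Finset.range i, Fintype.card K ^ t) * y ^ Fintype.card K ^ i := by
  induction i generalizing y with
  | zero => simp
  | succ i ih =>
    rw [pow_succ, Module.End.mul_apply, ih, twist_apply, mul_pow, Finset.sum_range_succ, pow_add,
      ← pow_mul, ← pow_succ', mul_assoc]

/-- The `K`-linear operator obtained from the skew polynomial `∑ i ≤ d, f i * t ^ i` by letting `t`
act as `twist K a`. -/
noncomputable def skewEval (d : ℕ) (f : ℕ → F) (a : F) : F →ₗ[K] F :=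
  ∑ i ∈ Finset.range (d + 1), LinearMap.mulLeft K (f i) ∘ₗ (twist K a ^ i)

lemma skewEval_apply (d : ℕ) (f : ℕ → F) (a y : F) :
    skewEval (K := K) d f a y = ∑ i ∈ Finset.range (d + 1), f i * (twist K a ^ i) y := by
  simp [skewEval, LinearMap.sum_apply]

/-- Right division by `t - b` with constant remainder `r`. The quotient does not depend on the point
`a` of evaluation and keeps the leading coefficient. -/
lemma exists_div (d : ℕ) (f : ℕ → F) (b : F) :
    ∃ (g : ℕ → F) (r : F), g d = f (d + 1) ∧ ∀ a y,
      skewEval (K := K) (d + 1) f a y = skewEval (K := K) d g a (twist K a y - b * y) + r * y := by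
  induction d generalizing f with
  | zero =>
    refine ⟨fun _ => f 1, f 0 + f 1 * b, rfl, fun a y => ?_⟩
    simp [skewEval_apply, Finset.sum_range_succ]
    ring
  | succ d ih =>
    -- `c * t ^ (d + 2) = c * t ^ (d + 1) * (t - b) + c * b ^ q ^ (d + 1) * t ^ (d + 1)`,
    -- which lowers the degree by one.
    obtain ⟨g, r, hg, h⟩ := ih (Function.update f (d + 1)
      (f (d + 1) + f (d + 2) * b ^ Fintype.card K ^ (d + 1)))
    refine ⟨Function.update g (d + 1) (f (d + 2)), r, by simp, fun a y => ?_⟩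
    have h1 := h a y
    have hsum : ∀ (e : ℕ → F) (c x : F), skewEval (K := K) (d + 1) (Function.update e (d + 1) c) a x =
        skewEval (K := K) d e a x + c * (twist K a ^ (d + 1)) x := fun e c x => by
      rw [skewEval_apply, Finset.sum_range_succ, Function.update_self, skewEval_apply]
      congr 1
      exact Finset.sum_congr rfl fun i hi => by
        rw [Function.update_of_ne (Finset.mem_range.mp hi).ne]
    rw [hsum, skewEval_apply] at h1
    rw [hsum, skewEval_apply, Finset.sum_range_succ, Finset.sum_range_succ]
    have h2 : (twist K a ^ (d + 2)) y = (twist K a ^ (d + 1)) (twist K a y) := by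
      rw [pow_succ, Module.End.mul_apply]
    have h3 : (twist K a ^ (d + 1)) (b * y) =
        b ^ Fintype.card K ^ (d + 1) * (twist K a ^ (d + 1)) y := by
      simp only [twist_pow_apply, mul_pow]; ring
    rw [map_sub (twist K a ^ (d + 1)), h3, show d + 1 + 1 = d + 2 from rfl, h2]
    linear_combination h1

/-- The operator by which `t - b` acts on the conjugacy class of `γ ^ i`, where `b` is the conjugate
of `γ ^ ℓ` by `y`: its kernel is the line through `y` for `i = ℓ`, and zero for `i ≠ ℓ`. -/
lemma rank_ker_linear_factor_le {γ : Fˣ} (hγ : ∀ x : Fˣ, x ∈ Subgroup.zpowers γ)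
    (ℓ i : Fin (Fintype.card K - 1)) {y b : F} (hy : y ≠ 0)
    (hb : twist K ((γ : F) ^ (ℓ : ℕ)) y = b * y) :
    Module.rank K (LinearMap.ker (twist K ((γ : F) ^ (i : ℕ)) - LinearMap.mulLeft K b)) ≤
      if i = ℓ then 1 else 0 := by
  have hg : ∀ n : ℕ, (γ : F) ^ n ≠ 0 := fun n => pow_ne_zero _ γ.ne_zero
  rw [twist_apply] at hb
  have hyq : y ^ Fintype.card K ≠ 0 := pow_ne_zero _ hy
  have hb0 : b ≠ 0 := by
    rintro rfl
    rw [zero_mul] at hb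
    exact mul_ne_zero (hg _) hyq hb
  split_ifs with hil
  · subst hil
    have hle : LinearMap.ker (twist K ((γ : F) ^ (i : ℕ)) - LinearMap.mulLeft K b) ≤
        Submodule.span K {y} := by
      intro z hz
      have hz : (γ : F) ^ (i : ℕ) * z ^ Fintype.card K = b * z := by
        simpa [twist_apply, sub_eq_zero] using hz
      have hzy : (z / y) ^ Fintype.card K = z / y := by
        rw [div_pow, div_eq_div_iff hyq hy]
        refine mul_left_cancel₀ (mul_ne_zero (hg i) hb0) ?_
        linear_combination b * y * hz - b * z * hb
      obtain ⟨c, hc⟩ := mem_range_of_pow_card_eq hzy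
      refine Submodule.mem_span_singleton.mpr ⟨c, ?_⟩
      rw [Algebra.smul_def, hc, div_mul_cancel₀ _ hy]
    calc _ ≤ _ := Submodule.rank_mono hle
      _ ≤ _ := rank_span_le _
      _ = 1 := by simp
  · have hbot : LinearMap.ker (twist K ((γ : F) ^ (i : ℕ)) - LinearMap.mulLeft K b) = ⊥ := by
      rw [LinearMap.ker_eq_bot']
      intro z hz
      by_contra hz0
      have hz : (γ : F) ^ (i : ℕ) * z ^ Fintype.card K = b * z := by
        simpa [twist_apply, sub_eq_zero] using hz
      apply hil
      symm
      refine Fin.ext (exponent_eq_of_conj (K := K) hγ ℓ.2 i.2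
        (u := Units.mk0 z hz0 / Units.mk0 y hy) ?_)
      ext
      have hq : ∀ x : F, x ^ Fintype.card K = x ^ (Fintype.card K - 1) * x := fun x =>
        (pow_sub_one_mul Fintype.card_ne_zero x).symm
      simp only [Units.val_mul, Units.val_pow_eq_pow_val, Units.val_div_eq_div_val, Units.val_mk0,
        div_pow]
      rw [← mul_div_assoc, eq_div_iff (pow_ne_zero _ hy)]
      rw [hq, ← mul_assoc] at hz hb
      rw [mul_right_cancel₀ hy hb, mul_right_cancel₀ hz0 hz]
    rw [hbot]
    simp

/-- The bound for a skew polynomial of degree exactly `d`. It is stated with cardinal ranks, so that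
no finiteness of the kernels is presupposed. -/
lemma sum_rank_ker_skewEval_le {γ : Fˣ} (hγ : ∀ x : Fˣ, x ∈ Subgroup.zpowers γ)
    (d : ℕ) (f : ℕ → F) (hf : f d ≠ 0) :
    ∑ ℓ : Fin (Fintype.card K - 1),
      Module.rank K (LinearMap.ker (skewEval (K := K) d f ((γ : F) ^ (ℓ : ℕ)))) ≤ d := by
  induction d generalizing f with
  | zero =>
    refine (Finset.sum_eq_zero fun ℓ _ => ?_).le.trans (by simp)
    have : LinearMap.ker (skewEval (K := K) 0 f ((γ : F) ^ (ℓ : ℕ))) = ⊥ := by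
      rw [LinearMap.ker_eq_bot']
      intro y hy
      simpa [skewEval_apply, hf] using hy
    rw [this]
    simp
  | succ d ih =>
    by_cases hroot : ∃ (ℓ : Fin (Fintype.card K - 1)) (y : F), y ≠ 0 ∧
        skewEval (K := K) (d + 1) f ((γ : F) ^ (ℓ : ℕ)) y = 0
    · obtain ⟨ℓ, y, hy, hroot⟩ := hroot
      obtain ⟨b, hb⟩ : ∃ b, twist K ((γ : F) ^ (ℓ : ℕ)) y = b * y :=
        ⟨twist K ((γ : F) ^ (ℓ : ℕ)) y / y, (div_mul_cancel₀ _ hy).symm⟩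
      obtain ⟨g, r, hg, hdiv⟩ := exists_div (K := K) d f b
      have hr : r = 0 := by
        have := hdiv ((γ : F) ^ (ℓ : ℕ)) y
        rw [hroot, hb, sub_self, map_zero, zero_add] at this
        exact (mul_eq_zero.mp this.symm).resolve_right hy
      have hcomp : ∀ a, skewEval (K := K) (d + 1) f a =
          skewEval d g a ∘ₗ (twist K a - LinearMap.mulLeft K b) := fun a => by
        ext z
        simp [hdiv a z, hr]
      calc _ ≤ ∑ i : Fin (Fintype.card K - 1),
            (Module.rank K (LinearMap.ker (skewEval (K := K) d g ((γ : F) ^ (i : ℕ)))) +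
              if i = ℓ then 1 else 0) := by
            refine Finset.sum_le_sum fun i _ => ?_
            rw [hcomp]
            exact (rank_ker_comp_le _ _).trans
              (add_le_add le_rfl (rank_ker_linear_factor_le hγ ℓ i hy hb))
        _ ≤ (d : Cardinal) + 1 := by
            rw [Finset.sum_add_distrib]
            exact add_le_add (ih g (hg ▸ hf)) (by simp)
        _ = _ := by push_cast; rfl
    · push Not at hroot
      refine (Finset.sum_eq_zero fun ℓ _ => ?_).le.trans zero_le
      have : LinearMap.ker (skewEval (K := K) (d + 1) f ((γ : F) ^ (ℓ : ℕ))) = ⊥ := by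
        rw [LinearMap.ker_eq_bot']
        intro y hy
        by_contra hy0
        exact hroot ℓ y hy0 hy
      rw [this]
      simp

end SkewRoots


/-- Fundamental theorem on roots of skew polynomials, in linearized form: for a
nonzero coefficient vector `f` of length `d+1`, the maps
`L_ℓ(y) = ∑ᵢ fᵢ · γ^(ℓ·(1+q+⋯+q^(i-1))) · y^(qⁱ)` for `ℓ = 0, …, q-2` are `K`-linear
and the sum over `ℓ` of the `K`-dimensions of their kernels is at most `d`. -/
theorem skew_poly_root_space_dim_sum_le (q m d : ℕ)
    (K F : Type*) [Field K] [Fintype K] [Field F] [Algebra K F]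
    (hcard : Fintype.card K = q) (hdeg : Module.finrank K F = m)
    (γ : Fˣ) (hγ : ∀ x : Fˣ, x ∈ Subgroup.zpowers γ)
    (f : Fin (d + 1) → F) (hf : f ≠ 0) :
    ∃ L : Fin (q - 1) → F →ₗ[K] F,
      (∀ (ℓ : Fin (q - 1)) (y : F),
        L ℓ y = ∑ i : Fin (d + 1),
          f i * (γ : F) ^ ((ℓ : ℕ) * ∑ t ∈ Finset.range (i : ℕ), q ^ t) * y ^ q ^ (i : ℕ)) ∧
      (∑ ℓ : Fin (q - 1), Module.finrank K (LinearMap.ker (L ℓ))) ≤ d := by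
  subst hcard
  set f' : ℕ → F := fun i => if h : i < d + 1 then f ⟨i, h⟩ else 0 with hf'
  refine ⟨fun ℓ => SkewRoots.skewEval d f' ((γ : F) ^ (ℓ : ℕ)), fun ℓ y => ?_, ?_⟩
  · rw [SkewRoots.skewEval_apply, Finset.sum_range]
    refine Finset.sum_congr rfl fun i _ => ?_
    simp only [SkewRoots.twist_pow_apply, hf', i.2, dif_pos, ← pow_mul, mul_assoc]
  -- Trailing zero coefficients are dropped: `k` is the degree of the skew polynomial.
  · obtain ⟨j, hj⟩ := Function.ne_iff.mp hf
    have hne : ∃ k ≤ d, f' k ≠ 0 :=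
      ⟨j, Nat.lt_succ_iff.mp j.2, by simpa only [hf', j.2, dif_pos, Pi.zero_apply] using hj⟩
    obtain ⟨k, hkd, hk, hmax⟩ : ∃ k ≤ d, f' k ≠ 0 ∧ ∀ i, k < i → f' i = 0 := by
      classical
      obtain ⟨j, hjd, hj⟩ := hne
      have hspec := Nat.findGreatest_spec (P := fun i => f' i ≠ 0) hjd hj
      refine ⟨_, Nat.findGreatest_le (P := fun i => f' i ≠ 0) d, hspec, fun i hi => ?_⟩
      by_cases hid : i ≤ d
      · by_contra hi0
        exact Nat.findGreatest_is_greatest hi hid hi0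
      · exact dif_neg (by omega)
    have heq : ∀ a, SkewRoots.skewEval (K := K) d f' a = SkewRoots.skewEval k f' a := fun a => by
      ext y
      rw [SkewRoots.skewEval_apply, SkewRoots.skewEval_apply]
      symm
      refine Finset.sum_subset (Finset.range_mono (by omega)) fun i _ hi => ?_
      rw [hmax i (by simpa using hi), zero_mul]
    have hsum := SkewRoots.sum_rank_ker_skewEval_le (K := K) hγ k f' hk
    refine le_trans ?_ hkd
    rw [← Nat.cast_le (α := Cardinal), Nat.cast_sum]
    refine le_trans (Finset.sum_le_sum fun ℓ _ => ?_) hsum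
    rw [← heq]
    rcases lt_or_ge (Module.rank K (LinearMap.ker (SkewRoots.skewEval (K := K) d f'
      ((γ : F) ^ (ℓ : ℕ))))) Cardinal.aleph0 with h | h
    · exact (Cardinal.cast_toNat_of_lt_aleph0 h).le
    · exact Cardinal.natCast_lt_aleph0.le.trans h
end

section
/- Let K be a finite field with |K| = q, F a field extension of K with [F : K] = m, and γ a generator of the cyclic group Fˣ. Let s ≥ 1, let ℓ_1,…,ℓ_s ∈ {0,…,q−2} be distinct, let n_1,…,n_s be positive integers with d = ∑_i n_i, and for each i let c_{i,1},…,c_{i,n_i} ∈ F be nonzero elements that are K-linearly independent. Index the d columns by pairs (i,j) with 1 ≤ i ≤ s, 1 ≤ j ≤ n_i, and set a_{i,j} = c_{i,j}^(q−1) · γ^(ℓ_i). Then the d×d matrix V with entries V k (i,j) = (a_{i,j})^(∑_{t<k} q^t) for k ∈ {0,…,d−1} is invertible. -/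
/-!
For `g ∈ F` let `T_g x = g * x ^ q`, a `K`-linear map on `F` that is semilinear over the
Frobenius `σ`. Its iterates are `T_g^k x = g ^ (1 + q + ⋯ + q^(k-1)) * x ^ (q^k)`, so the skew
power of `a = c ^ (q - 1) * g` satisfies `N_k(a) * c = T_g^k c`. Up to the nonzero scalars `c p`,
the columns are therefore the sequences `k ↦ T_{g p}^k (c p)`, and the theorem is a Wronskian-type
statement about them, proved by induction on the number of columns in `semilinear_wronskian`.

In the induction step a column `p₀` is chosen and `a = T_{g p₀} (c p₀) / c p₀`. Subtracting
`σ^k(a)` times row `k` from row `k + 1` replaces `T_g^k c` by `T_g^k (T_g c - a * c)`, which kills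
the column `p₀`. The new elements `T_g (c p) - a * c p` are still `K`-independent in each class,
because the kernel of `T_g - a` is `K • c p₀` on the class of `p₀` and zero on every other class:
a nonzero kernel element would conjugate the two class representatives.

Distinct `γ ^ ℓ` with `ℓ ≤ q - 2` are not conjugate since `q - 1 = |Kˣ|` divides the order of `γ`
(`generator_classes_disjoint`).
-/

/-- The elements of `F` fixed by the `q`-power Frobenius lie in `K`. -/
theorem mem_range_of_pow_card_eq {K F : Type*} [Field K] [Fintype K] [Field F] [Algebra K F]
    {x : F} (hx : x ^ Fintype.card K = x) : ∃ r : K, algebraMap K F r = x := by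
  classical
  by_contra! h
  have hq : 1 < Fintype.card K := Fintype.one_lt_card
  -- Otherwise `X ^ q - X` has `x` and all `q` elements of `K` as roots.
  set S : Finset F := insert x (Finset.univ.image (algebraMap K F)) with hS
  have hcard : S.card = Fintype.card K + 1 := by
    rw [hS, Finset.card_insert_of_notMem (by simpa using h),
      Finset.card_image_of_injective _ (algebraMap K F).injective, Finset.card_univ]
  have hne := FiniteField.X_pow_card_sub_X_ne_zero F hq
  have hsub : S.val ⊆ (Polynomial.X ^ Fintype.card K - Polynomial.X : Polynomial F).roots := by
    intro y hy
    rw [Polynomial.mem_roots hne]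
    have hy' : y = x ∨ ∃ r : K, algebraMap K F r = y := by simpa [hS] using hy
    rcases hy' with rfl | ⟨r, rfl⟩
    · simp [hx]
    · simp [← map_pow, FiniteField.pow_card]
  have h1 := Polynomial.card_le_degree_of_subset_roots hsub
  rw [FiniteField.X_pow_card_sub_X_natDegree_eq F hq] at h1
  omega

/-- Non-conjugacy of distinct powers `γ ^ a`, `γ ^ b` with exponents at most `q - 2`. -/
theorem generator_classes_disjoint {K F : Type*} [Field K] [Fintype K] [Field F] [Algebra K F]
    (γ : Fˣ) (hγ : ∀ x : Fˣ, x ∈ Subgroup.zpowers γ) {a b : ℕ}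
    (ha : a ≤ Fintype.card K - 2) (hb : b ≤ Fintype.card K - 2) {x y : F}
    (hx : x ≠ 0) (hy : y ≠ 0)
    (h : (γ : F) ^ a * x ^ (Fintype.card K - 1) = (γ : F) ^ b * y ^ (Fintype.card K - 1)) :
    a = b := by
  have hq : 1 < Fintype.card K := Fintype.one_lt_card
  -- If `Fˣ` were infinite, `orderOf γ` would be `0`, and the divisibility would still hold.
  have hdvd : Fintype.card K - 1 ∣ orderOf γ := by
    rw [orderOf_eq_card_of_forall_mem_zpowers hγ, ← Nat.card_eq_fintype_card, ← Nat.card_units]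
    exact Subgroup.card_dvd_of_injective (Units.map (algebraMap K F : K →* F))
      (Units.map_injective (algebraMap K F).injective)
  obtain ⟨i, hi⟩ := hγ (Units.mk0 x hx)
  obtain ⟨j, hj⟩ := hγ (Units.mk0 y hy)
  have hu : γ ^ a * Units.mk0 x hx ^ (Fintype.card K - 1)
      = γ ^ b * Units.mk0 y hy ^ (Fintype.card K - 1) := by
    ext; simpa using h
  simp only at hi hj
  rw [← hi, ← hj, ← zpow_natCast, ← zpow_natCast, ← zpow_natCast, ← zpow_natCast, ← zpow_mul,
    ← zpow_mul, ← zpow_add, ← zpow_add, ← mul_inv_eq_one, ← zpow_neg, ← zpow_add,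
    ← orderOf_dvd_iff_zpow_eq_one] at hu
  have h1 : ((Fintype.card K - 1 : ℕ) : ℤ) ∣ (a : ℤ) - b := by
    obtain ⟨w, hw⟩ := (Int.natCast_dvd_natCast.mpr hdvd).trans hu
    exact ⟨w - (i - j), by linear_combination hw⟩
  have h4 := Int.eq_zero_of_abs_lt_dvd h1 (by rw [abs_lt]; omega)
  omega

/-- Independence of the sequences `k ↦ T_{g (cls p)}^k (c p)`, where `T_g x = g * x ^ q` and
`T_g^k x = g ^ (1 + q + ⋯ + q^(k-1)) * x ^ (q^k)`. The columns are indexed by `P`, the class of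
`p` is `cls p`; `hg` says that different classes are not conjugate, and `hc` that the elements
within one class are `K`-linearly independent. -/
theorem semilinear_wronskian {K F ι κ : Type*} [Field K] [Fintype K] [Field F] [Algebra K F]
    [DecidableEq ι] [DecidableEq κ] (cls : ι → κ) (g : κ → F) (hg0 : ∀ i, g i ≠ 0)
    (hg : ∀ i j x y, x ≠ 0 → y ≠ 0 →
      g i * x ^ (Fintype.card K - 1) = g j * y ^ (Fintype.card K - 1) → i = j)
    (N : ℕ) : ∀ (P : Finset ι) (_ : P.card = N) (c : ι → F)
    (_ : ∀ (i : κ) (r : ι → K), ∑ p ∈ P with cls p = i, r p • c p = 0 →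
      ∀ p ∈ P, cls p = i → r p = 0)
    (μ : ι → F)
    (_ : ∀ k < N, ∑ p ∈ P, μ p * (g (cls p) ^ (∑ t ∈ Finset.range k, Fintype.card K ^ t)
      * c p ^ Fintype.card K ^ k) = 0),
    ∀ p ∈ P, μ p = 0 := by
  have hq : 1 < Fintype.card K := Fintype.one_lt_card
  have hpow : ∀ z : F, z ^ Fintype.card K = z ^ (Fintype.card K - 1) * z := fun z => by
    rw [← pow_succ]; congr 1; omega
  induction N with
  | zero =>
    intro P hP c _ μ _ p hp
    rw [Finset.card_eq_zero.mp hP] at hp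
    simp at hp
  | succ N ih =>
    intro P hP c hc μ hμ
    obtain ⟨p₀, hp₀⟩ : P.Nonempty := Finset.card_pos.mp (by omega)
    have hc0 : c p₀ ≠ 0 := by
      intro h0
      have := hc (cls p₀) (fun p => if p = p₀ then 1 else 0)
        (by apply Finset.sum_eq_zero; intro p _; by_cases h : p = p₀ <;> simp [h, h0]) p₀ hp₀ rfl
      simp at this
    set P' := P.erase p₀ with hP'
    set a : F := g (cls p₀) * c p₀ ^ (Fintype.card K - 1) with ha
    -- `T_{g i} - a` as a `K`-linear map
    let L : κ → F →ₗ[K] F := fun i =>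
      LinearMap.mulLeft K (g i) ∘ₗ (FiniteField.frobeniusAlgHom K F).toLinearMap
        - LinearMap.mulLeft K a
    have hL : ∀ i z, L i z = g i * z ^ Fintype.card K - a * z := fun i z => by
      simp [L, FiniteField.coe_frobeniusAlgHom]
    have hker : ∀ i z, z ≠ 0 → L i z = 0 →
        i = cls p₀ ∧ ∃ r : K, z = r • c p₀ := by
      intro i z hz h
      rw [hL, hpow, ← mul_assoc, ← sub_mul, mul_eq_zero, or_iff_left hz, sub_eq_zero] at h
      have hi := hg _ _ _ _ hz hc0 h
      subst hi
      refine ⟨rfl, ?_⟩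
      have h' : z ^ (Fintype.card K - 1) = c p₀ ^ (Fintype.card K - 1) :=
        mul_left_cancel₀ (hg0 _) h
      obtain ⟨r, hr⟩ := mem_range_of_pow_card_eq (K := K) (x := z / c p₀) (by
        rw [hpow, div_pow, h', div_self (pow_ne_zero _ hc0), one_mul])
      exact ⟨r, by rw [Algebra.smul_def, hr, div_mul_cancel₀ _ hc0]⟩
    have hrest : ∀ p ∈ P', μ p = 0 := by
      refine ih P' (by rw [hP', Finset.card_erase_of_mem hp₀]; omega)
        (fun p => L (cls p) (c p)) ?_ μ ?_
      · intro i r hr p hp hpi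
        obtain ⟨hpne, hpP⟩ := Finset.mem_erase.mp hp
        have hsum : L i (∑ p ∈ P' with cls p = i, r p • c p) = 0 := by
          rw [map_sum, ← hr]
          refine Finset.sum_congr rfl fun p hp => ?_
          rw [map_smul, (Finset.mem_filter.mp hp).2]
        by_cases hz : ∑ p ∈ P' with cls p = i, r p • c p = 0
        · have := hc i (fun p => if p = p₀ then 0 else r p) (by
            rw [← hz, hP', Finset.filter_erase]
            by_cases hm : p₀ ∈ P.filter (fun p => cls p = i)
            · rw [← Finset.add_sum_erase _ _ hm]
              simp only [if_true, zero_smul, zero_add]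
              exact Finset.sum_congr rfl fun p hp => by rw [if_neg (Finset.ne_of_mem_erase hp)]
            · rw [Finset.erase_eq_of_notMem hm]
              refine Finset.sum_congr rfl fun p hp => ?_
              rw [if_neg (fun h : p = p₀ => hm (h ▸ hp))]) p hpP hpi
          simpa [hpne] using this
        · obtain ⟨rfl, ρ, hρ⟩ := hker i _ hz hsum
          have hm : p₀ ∈ P.filter (fun p => cls p = cls p₀) := by simp [hp₀]
          have := hc (cls p₀) (fun p => if p = p₀ then -ρ else r p) (by
            rw [← Finset.add_sum_erase _ _ hm]
            simp only [if_true]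
            rw [neg_smul, ← hρ, hP', Finset.filter_erase, neg_add_eq_zero]
            exact Finset.sum_congr rfl fun p hp => by
              rw [if_neg (Finset.ne_of_mem_erase hp)]) p hpP hpi
          simpa [hpne] using this
      · intro k hk
        -- The column `p₀` may be put back, as `L (cls p₀) (c p₀) = 0`; then row `k` of the new
        -- system is row `k + 1` minus `a ^ q ^ k` times row `k` of the old one.
        have hL0 : L (cls p₀) (c p₀) = 0 := by rw [hL, hpow, ha]; ring
        have e : ∑ p ∈ P', μ p * (g (cls p) ^ (∑ t ∈ Finset.range k, Fintype.card K ^ t)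
              * L (cls p) (c p) ^ Fintype.card K ^ k)
            = ∑ p ∈ P, μ p * (g (cls p) ^ (∑ t ∈ Finset.range k, Fintype.card K ^ t)
              * L (cls p) (c p) ^ Fintype.card K ^ k) := by
          rw [← Finset.add_sum_erase _ _ hp₀, hL0,
            zero_pow (pow_ne_zero _ (by omega)), mul_zero, mul_zero, zero_add]
        have hsubpow : ∀ x y : F, (x - y) ^ Fintype.card K ^ k
            = x ^ Fintype.card K ^ k - y ^ Fintype.card K ^ k := by
          intro x y
          have hF : ∀ z : F, (FiniteField.frobeniusAlgHom K F ^ k) z = z ^ Fintype.card K ^ k := by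
            intro z
            simp [AlgHom.coe_pow, FiniteField.coe_frobeniusAlgHom, pow_iterate]
          rw [← hF, ← hF, ← hF, map_sub]
        rw [e]
        have h1 := hμ (k + 1) (by omega)
        have h0 := hμ k (by omega)
        have : ∑ p ∈ P, μ p * (g (cls p) ^ (∑ t ∈ Finset.range (k + 1), Fintype.card K ^ t)
              * c p ^ Fintype.card K ^ (k + 1))
            - a ^ Fintype.card K ^ k *
              ∑ p ∈ P, μ p * (g (cls p) ^ (∑ t ∈ Finset.range k, Fintype.card K ^ t)
                * c p ^ Fintype.card K ^ k) = 0 := by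
          rw [h1, h0, mul_zero, sub_zero]
        rw [Finset.mul_sum, ← Finset.sum_sub_distrib] at this
        rw [← this]
        refine Finset.sum_congr rfl fun p _ => ?_
        rw [hL, hsubpow, mul_pow, mul_pow, ← pow_mul, ← pow_succ', Finset.sum_range_succ, pow_add]
        ring
    intro p hp
    by_cases hpp : p = p₀
    · subst hpp
      have h0 := hμ 0 (by omega)
      rw [← Finset.add_sum_erase _ _ hp, Finset.sum_eq_zero (s := P.erase p)
        (fun x hx => by rw [hrest x hx, zero_mul])] at h0
      simpa [hc0] using h0
    · exact hrest p (Finset.mem_erase.mpr ⟨hpp, hp⟩)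


/-- Skew Vandermonde rank criterion: if the evaluation points
`a_{i,j} = c_{i,j}^(q-1) · γ^(ℓᵢ)` lie in distinct conjugacy classes `γ^(ℓᵢ)`
(with `ℓ₁, …, ℓ_s ∈ {0, …, q-2}` distinct) and the conjugating elements
`c_{i,1}, …, c_{i,nᵢ}` within each class are nonzero and `K`-linearly independent,
then the `d × d` skew Vandermonde matrix with entries
`N_k(a_{i,j}) = a_{i,j}^(1 + q + ⋯ + q^(k-1))`, `d = ∑ nᵢ`, is invertible, i.e. its
columns are linearly independent over `F`. -/
theorem skew_vandermonde_isUnit (q m s : ℕ)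
    (K F : Type*) [Field K] [Fintype K] [Field F] [Algebra K F]
    (hcard : Fintype.card K = q) (hdeg : Module.finrank K F = m)
    (γ : Fˣ) (hγ : ∀ x : Fˣ, x ∈ Subgroup.zpowers γ)
    (hs : 1 ≤ s) (ℓ : Fin s → ℕ) (hℓ : Function.Injective ℓ) (hℓq : ∀ i, ℓ i ≤ q - 2)
    (n : Fin s → ℕ) (hn : ∀ i, 0 < n i) (d : ℕ) (hd : d = ∑ i, n i)
    (c : (i : Fin s) → Fin (n i) → F) (hc0 : ∀ i j, c i j ≠ 0)
    (hcli : ∀ i, LinearIndependent K (c i)) :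
    LinearIndependent F (fun p : (i : Fin s) × Fin (n i) =>
      fun k : Fin d =>
        (c p.1 p.2 ^ (q - 1) * (γ : F) ^ ℓ p.1) ^ ∑ t ∈ Finset.range (k : ℕ), q ^ t) := by
  classical
  subst hcard hd
  have hq : 1 < Fintype.card K := Fintype.one_lt_card
  rw [Fintype.linearIndependent_iff]
  intro μ hμ p
  -- The coefficients are divided by `c p`, since `N_k(a p) * c p = T^k (c p)`.
  have key := semilinear_wronskian (K := K) (fun p : (i : Fin s) × Fin (n i) => p.1)
    (fun i => (γ : F) ^ ℓ i) (fun i => pow_ne_zero _ γ.ne_zero)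
    (fun i j x y hx hy h =>
      hℓ (generator_classes_disjoint (K := K) γ hγ (hℓq i) (hℓq j) hx hy h))
    (∑ i, n i) Finset.univ (by simp) (fun p => c p.1 p.2) ?_ (fun p => μ p / c p.1 p.2) ?_
    p (Finset.mem_univ _)
  · simpa [hc0 p.1 p.2] using key
  · rintro i r hr ⟨i', j⟩ _ rfl
    refine Fintype.linearIndependent_iff.mp (hcli i') (fun j => r ⟨i', j⟩) ?_ j
    rw [← hr, Finset.sum_filter, Fintype.sum_sigma, Finset.sum_eq_single i'
      (fun b _ hb => by simp [hb]) (by simp)]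
    simp
  · intro k hk
    have h := congrFun hμ ⟨k, hk⟩
    simp only [Finset.sum_apply, Pi.smul_apply, smul_eq_mul, Pi.zero_apply] at h
    rw [← h]
    refine Finset.sum_congr rfl fun p _ => ?_
    have hc := hc0 p.1 p.2
    -- `(q - 1) * (1 + q + ⋯ + q^(k-1)) + 1 = q^k`
    have hexp : (Fintype.card K - 1) * ∑ t ∈ Finset.range k, Fintype.card K ^ t + 1
        = Fintype.card K ^ k := by
      obtain ⟨Q, hQ⟩ : ∃ Q, Fintype.card K = Q + 1 := ⟨Fintype.card K - 1, by omega⟩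
      rw [hQ, Nat.add_sub_cancel, mul_comm]
      exact geom_sum_mul_add Q k
    rw [← hexp, mul_pow, pow_succ, ← pow_mul]
    field_simp
    rw [pow_mul]
end

section
/- Let F be a field and r ≥ 1 an integer. Let g_1,…,g_m ∈ F[X] be polynomials each of degree strictly less than r. Let 𝕃 be the intermediate field F(X^r) of RatFunc F over F, i.e., the subfield generated by F and X^r inside the field of rational functions. Then g_1,…,g_m are F-linearly independent (in F[X]) if and only if their images in RatFunc F are 𝕃-linearly independent (with RatFunc F viewed as an 𝕃-vector space). -/
/-! The extension `RatFunc F / F(Xʳ)` has degree `max (deg Xʳ) (deg 1) = r` and is generated by `X`,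
so the minimal polynomial of `X` over `F(Xʳ)` has degree `r` and `1, X, …, Xʳ⁻¹` are linearly
independent over `F(Xʳ)`; they are also linearly independent over `F` inside `F[X]`. Hence over
either field the independence of the `gᵢ`, which are combinations of these powers, is equivalent
to that of their coefficient vectors in `Fʳ`, and linear independence of vectors with entries
in `F` is unaffected by extending the field of scalars. -/

theorem natDegree_minpoly_X_eq_finrank {F : Type*} [Field F]
    (E : IntermediateField F (RatFunc F)) (hE : IsIntegral E (RatFunc.X : RatFunc F)) :
    (minpoly E (RatFunc.X : RatFunc F)).natDegree = Module.finrank E (RatFunc F) := by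
  rw [← (RatFunc.IntermediateField.adjoinXEquiv E).toLinearEquiv.finrank_eq,
    IntermediateField.adjoin.finrank hE]

/-- The powers `1, X, …, Xʳ⁻¹` are linearly independent over `F(Xʳ)`. -/
theorem linearIndependent_X_pow_over_adjoin (F : Type*) [Field F] (r : ℕ) (hr : 1 ≤ r) :
    LinearIndependent (IntermediateField.adjoin F {(RatFunc.X ^ r : RatFunc F)})
      (fun j : Fin r => (RatFunc.X ^ (j : ℕ) : RatFunc F)) := by
  have hX : (RatFunc.X ^ r : RatFunc F) = algebraMap (Polynomial F) _ (Polynomial.X ^ r) := by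
    simp
  have hnum : (RatFunc.X ^ r : RatFunc F).num = Polynomial.X ^ r := by
    rw [hX, RatFunc.num_algebraMap]
  have hden : (RatFunc.X ^ r : RatFunc F).denom = 1 := by
    rw [hX, RatFunc.denom_algebraMap]
  have hfin := RatFunc.finrank_eq_max_natDegree (RatFunc.X ^ r : RatFunc F)
  rw [hnum, hden, Polynomial.natDegree_X_pow, Polynomial.natDegree_one, max_eq_left r.zero_le]
    at hfin
  have : FiniteDimensional (IntermediateField.adjoin F {(RatFunc.X ^ r : RatFunc F)})
      (RatFunc F) := Module.finite_of_finrank_pos (by lia)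
  have hdegree : (minpoly (IntermediateField.adjoin F {(RatFunc.X ^ r : RatFunc F)})
      (RatFunc.X : RatFunc F)).natDegree = r := by
    rw [natDegree_minpoly_X_eq_finrank _ (IsIntegral.of_finite _ _), hfin]
  have h := linearIndependent_pow
    (K := IntermediateField.adjoin F {(RatFunc.X ^ r : RatFunc F)}) (RatFunc.X : RatFunc F)
  rwa [hdegree] at h

/-- For polynomials `g₁, …, g_m` of degree `< r`, linear independence over `F`
is equivalent to linear independence over the intermediate field `F(Xʳ)` of
`RatFunc F`. -/
theorem linearIndependent_iff_over_adjoin_X_pow (F : Type*) [Field F] (r m : ℕ)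
    (hr : 1 ≤ r) (g : Fin m → Polynomial F)
    (hdeg : ∀ i, (g i).degree < (r : WithBot ℕ)) :
    LinearIndependent F g ↔
      LinearIndependent (IntermediateField.adjoin F {(RatFunc.X ^ r : RatFunc F)})
        (fun i => algebraMap (Polynomial F) (RatFunc F) (g i)) := by
  set L := IntermediateField.adjoin F {(RatFunc.X ^ r : RatFunc F)}
  let v : Fin m → Fin r → F := fun i j => (g i).coeff j
  have hsum : ∀ i, g i = ∑ j : Fin r, v i j • (Polynomial.X ^ (j : ℕ) : Polynomial F) := by
    intro i
    rw [Fin.sum_univ_eq_sum_range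
      (fun j => (g i).coeff j • (Polynomial.X ^ j : Polynomial F)) r]
    simp only [Polynomial.smul_X_eq_monomial]
    refine (g i).as_sum_range' r ?_
    rcases eq_or_ne (g i) 0 with h0 | h0
    · rw [h0, Polynomial.natDegree_zero]
      exact hr
    · exact (Polynomial.natDegree_lt_iff_degree_lt h0).2 (hdeg i)
  have hFX : LinearIndependent F (fun j : Fin r => (Polynomial.X ^ (j : ℕ) : Polynomial F)) := by
    have h := (Polynomial.basisMonomials F).linearIndependent.comp _ (Fin.val_injective (n := r))
    simpa [Function.comp_def, Polynomial.monomial_one_right_eq_X_pow] using h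
  have hLX : LinearIndependent L (fun j : Fin r => (RatFunc.X ^ (j : ℕ) : RatFunc F)) :=
    linearIndependent_X_pow_over_adjoin F r hr
  have hg : g = Fintype.linearCombination F
      (fun j : Fin r => (Polynomial.X ^ (j : ℕ) : Polynomial F)) ∘ v := by
    funext i
    rw [hsum i]
    rfl
  have hgL : (fun i => algebraMap (Polynomial F) (RatFunc F) (g i)) =
      Fintype.linearCombination L (fun j : Fin r => (RatFunc.X ^ (j : ℕ) : RatFunc F)) ∘
        fun i => algebraMap F L ∘ v i := by
    funext i
    rw [hsum i]
    simp [Fintype.linearCombination_apply, Algebra.smul_def, Polynomial.algebraMap_eq]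
  rw [hgL, LinearMap.linearIndependent_iff _
      (LinearMap.ker_eq_bot.2 (linearIndependent_iff_injective_fintypeLinearCombination.1 hLX)), hg,
    LinearMap.linearIndependent_iff _
      (LinearMap.ker_eq_bot.2 (linearIndependent_iff_injective_fintypeLinearCombination.1 hFX))]
  have : FaithfulSMul F L :=
    (faithfulSMul_iff_algebraMap_injective F L).2 (algebraMap F L).injective
  exact linearIndependent_algebraMap_comp_iff.symm
end

section
/- Let F be a field of characteristic p > 0 and let f_1,…,f_s ∈ F[X]. Let M be the s×s matrix over F[X] whose (j,i) entry is the j-th formal derivative derivative^[j] (f_i), for j ∈ {0,…,s−1}. Then det M ≠ 0 (as a polynomial) if and only if the images of f_1,…,f_s in RatFunc F are linearly independent over the intermediate field F(X^p) (the subfield of RatFunc F generated by F and X^p). -/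
/-!
Everything takes place over the subring `{c | c' = 0}` of `F[X]`, which in characteristic `p` is
`F[Xᵖ]` (`Polynomial.expand_contract`).

If `∑ cᵢ fᵢ = 0` with `cᵢ' = 0`, differentiating `j` times gives `∑ cᵢ fᵢ⁽ʲ⁾ = 0`, so `c` is in the
kernel of the Wronskian matrix. Conversely, let the Wronskian determinant of `f₁, …, f_{s+1}`
vanish while (by induction) that of `f₁, …, f_s` does not, and let `v ≠ 0` be in the kernel of the
Wronskian matrix. Differentiating the kernel equations shows that `v_{s+1} v' - v_{s+1}' v` is
killed by all rows but the last; its last entry is zero, so it vanishes. Hence all the `vᵢ / v_{s+1}`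
have derivative zero, and multiplying by `v_{s+1}ᵖ` gives the polynomial relation with coefficients
`vᵢ v_{s+1}ᵖ⁻¹`, whose derivatives are zero.

Since `F(Xᵖ)` is the fraction field of `F[Xᵖ]`, linear independence over the two is equivalent
(`LinearIndependent.iff_fractionRing`).
-/

open Polynomial in
/-- A nontrivial relation among the `fᵢ` with coefficients of zero derivative makes the Wronskian
vanish. -/
lemma wronskian_det_eq_zero_of_relation {F : Type*} [Field F] {s : ℕ} (f c : Fin s → F[X])
    (hc0 : c ≠ 0) (hc : ∀ i, derivative (c i) = 0) (h : ∑ i, c i * f i = 0) :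
    (Matrix.of fun j i : Fin s => (⇑derivative)^[(j : ℕ)] (f i)).det = 0 := by
  refine Matrix.exists_mulVec_eq_zero_iff.mp ⟨c, hc0, ?_⟩
  have key : ∀ j : ℕ, ∑ i, c i * (⇑derivative)^[j] (f i) = 0 := by
    intro j
    induction j with
    | zero => simpa using h
    | succ j ih =>
      have := congrArg derivative ih
      simpa [derivative_sum, derivative_mul, hc, Function.iterate_succ_apply'] using this
  ext1 j
  simpa [Matrix.mulVec, dotProduct, mul_comm] using key j

open Polynomial in
/-- If the Wronskian vanishes, the `fᵢ` satisfy a nontrivial relation with coefficients of zero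
derivative. -/
lemma exists_relation_of_wronskian_det_eq_zero {F : Type*} [Field F] {p : ℕ} [CharP F p]
    (hp : 2 ≤ p) {s : ℕ} (f : Fin s → F[X])
    (h : (Matrix.of fun j i : Fin s => (⇑derivative)^[(j : ℕ)] (f i)).det = 0) :
    ∃ c : Fin s → F[X], c ≠ 0 ∧ (∀ i, derivative (c i) = 0) ∧ ∑ i, c i * f i = 0 := by
  induction s with
  | zero => simp at h
  | succ s ih =>
    by_cases h' : (Matrix.of fun j i : Fin s =>
        (⇑derivative)^[(j : ℕ)] (f i.castSucc)).det = 0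
    · obtain ⟨c, hc0, hc, hsum⟩ := ih (fun i => f i.castSucc) h'
      refine ⟨Fin.snoc c 0, ?_, ?_, ?_⟩
      · intro h0
        apply hc0
        ext1 i
        simpa using congrFun h0 i.castSucc
      · intro i
        refine Fin.lastCases ?_ (fun i => ?_) i
        · simp
        · simpa using hc i
      · simpa [Fin.sum_univ_castSucc] using hsum
    · obtain ⟨v, hv0, hv⟩ := Matrix.exists_mulVec_eq_zero_iff.mpr h
      have hker : ∀ j : ℕ, j < s + 1 → ∑ i, v i * (⇑derivative)^[j] (f i) = 0 := by
        intro j hj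
        simpa [Matrix.mulVec, dotProduct, mul_comm] using congrFun hv ⟨j, hj⟩
      -- the first `s` rows and columns form an injective matrix
      have hinj : ∀ w : Fin (s + 1) → F[X], w (Fin.last s) = 0 →
          (∀ j : ℕ, j < s → ∑ i, w i * (⇑derivative)^[j] (f i) = 0) → w = 0 := by
        intro w hw hsum
        by_contra hne
        apply h'
        refine Matrix.exists_mulVec_eq_zero_iff.mp ⟨fun i => w i.castSucc, ?_, ?_⟩
        · intro h0
          apply hne
          ext1 i
          refine Fin.lastCases hw (fun i => ?_) i
          exact congrFun h0 i
        · ext1 j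
          have := hsum j j.2
          rw [Fin.sum_univ_castSucc, hw, zero_mul, add_zero] at this
          simpa [Matrix.mulVec, dotProduct, mul_comm] using this
      have hlast : v (Fin.last s) ≠ 0 := fun h0 =>
        hv0 (hinj v h0 fun j hj => hker j (by omega))
      have hker' : ∀ j : ℕ, j < s → ∑ i, derivative (v i) * (⇑derivative)^[j] (f i) = 0 := by
        intro j hj
        have h1 := congrArg derivative (hker j (by omega))
        simpa only [derivative_sum, derivative_mul, Finset.sum_add_distrib, derivative_zero,
          ← Function.iterate_succ_apply', hker (j + 1) (by omega), add_zero] using h1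
      set u := v (Fin.last s) with hu
      have hprop := hinj (fun i => u * derivative (v i) - derivative u * v i)
        (by simp only [← hu]; ring) (by
          intro j hj
          simp only [sub_mul, mul_assoc, Finset.sum_sub_distrib, ← Finset.mul_sum,
            hker' j hj, hker j (by omega), mul_zero, sub_zero])
      refine ⟨fun i => v i * u ^ (p - 1), ?_, ?_, ?_⟩
      · intro h0
        have := congrFun h0 (Fin.last s)
        exact mul_ne_zero hlast (pow_ne_zero _ hlast) this
      · intro i
        obtain ⟨q, rfl⟩ : ∃ q, p = q + 2 := ⟨p - 2, by omega⟩
        have hi : u * derivative (v i) - derivative u * v i = 0 := congrFun hprop i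
        have hq : ((q : F[X]) + 2) = 0 := by
          exact_mod_cast CharP.cast_eq_zero F[X] (q + 2)
        simp only [derivative_mul, show q + 2 - 1 = q + 1 by omega, derivative_pow_succ]
        simp only [map_add, map_natCast, map_one]
        linear_combination u ^ q * hi + v i * u ^ q * derivative u * hq
      · have h0 := hker 0 (by omega)
        simp only [Function.iterate_zero, id] at h0
        calc ∑ i, v i * u ^ (p - 1) * f i = u ^ (p - 1) * ∑ i, v i * f i := by
              rw [Finset.mul_sum]
              exact Finset.sum_congr rfl fun i _ => by ring
          _ = 0 := by rw [h0, mul_zero]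

open Polynomial in
lemma aeval_ratFunc_X_pow {F : Type*} [Field F] (p : ℕ) (a : F[X]) :
    aeval (RatFunc.X ^ p : RatFunc F) a = algebraMap F[X] (RatFunc F) (expand F p a) := by
  rw [← expand_aeval, ← RatFunc.aeval_X_left_eq_algebraMap]

open scoped IntermediateField.algebraAdjoinAdjoin in
theorem wronskian_det_ne_zero_iff (F : Type*) [Field F] (p s : ℕ) [CharP F p]
    (hp : 0 < p) (f : Fin s → Polynomial F) :
    (Matrix.of fun j i : Fin s =>
        (⇑Polynomial.derivative)^[(j : ℕ)] (f i)).det ≠ 0 ↔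
      LinearIndependent (IntermediateField.adjoin F {(RatFunc.X ^ p : RatFunc F)})
        (fun i => algebraMap (Polynomial F) (RatFunc F) (f i)) := by
  have hp2 : 2 ≤ p := ((CharP.char_is_prime_or_zero F p).resolve_right hp.ne').two_le
  rw [← LinearIndependent.iff_fractionRing (Algebra.adjoin F {(RatFunc.X ^ p : RatFunc F)})
    (IntermediateField.adjoin F {(RatFunc.X ^ p : RatFunc F)}),
    ne_eq, not_iff_comm, Fintype.not_linearIndependent_iff]
  constructor
  · rintro ⟨g, hg, i₀, hi₀⟩
    have hex : ∀ i, ∃ a : Polynomial F,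
        Polynomial.aeval (RatFunc.X ^ p : RatFunc F) a = g i := fun i =>
      (Algebra.adjoin_singleton_eq_range_aeval F (RatFunc.X ^ p : RatFunc F)).le (g i).2
    choose a ha using hex
    simp only [aeval_ratFunc_X_pow] at ha
    refine wronskian_det_eq_zero_of_relation f (fun i => Polynomial.expand F p (a i)) ?_ ?_ ?_
    · intro h0
      apply hi₀
      apply Subtype.ext
      rw [← ha, show Polynomial.expand F p (a i₀) = 0 from congrFun h0 i₀]
      simp
    · intro i
      simp [Polynomial.derivative_expand]
    · apply RatFunc.algebraMap_injective F
      simpa [Algebra.smul_def, Subalgebra.smul_def, ha] using hg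
  · intro h
    obtain ⟨c, hc0, hc, hsum⟩ := exists_relation_of_wronskian_det_eq_zero hp2 f h
    have hmem : ∀ i, algebraMap (Polynomial F) (RatFunc F) (c i) ∈
        Algebra.adjoin F {(RatFunc.X ^ p : RatFunc F)} := fun i => by
      rw [Algebra.adjoin_singleton_eq_range_aeval]
      refine ⟨Polynomial.contract p (c i), ?_⟩
      change Polynomial.aeval _ _ = _
      rw [aeval_ratFunc_X_pow, Polynomial.expand_contract p (hc i) hp.ne']
    obtain ⟨i₀, hi₀⟩ := Function.ne_iff.mp hc0
    refine ⟨fun i => ⟨_, hmem i⟩, ?_, i₀, ?_⟩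
    · have := congrArg (algebraMap (Polynomial F) (RatFunc F)) hsum
      simpa [Subalgebra.smul_def] using this
    · intro h0
      exact hi₀ (RatFunc.algebraMap_injective F (by simpa using congrArg Subtype.val h0))
end

section
/- Let F be a field and let f_1,…,f_s ∈ F[X] each have degree at most d. Assume either char F = 0 or char F = p with p > d. Let M be the s×s matrix over F[X] whose (j,i) entry is the j-th formal derivative derivative^[j] (f_i), for j ∈ {0,…,s−1}. Then det M ≠ 0 (as a polynomial) if and only if f_1,…,f_s are F-linearly independent in F[X]. -/
/-!
If the `f i` satisfy a linear relation over `F`, so do the columns of the Wronskian matrix.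

Conversely, if the Wronskian determinant vanishes, a nonzero row vector `v` over `F[X]` kills the
matrix, so the differential operator `∑ v j D^j`, of order less than `s`, annihilates the span of
the `f i`. Multiplying it by `X ^ s` turns it into `∑ w j (X^j D^j)` with `w j = v j * X ^ (s - j)`.
Let `N` be the largest degree of the `w j`. Since `X^j D^j` multiplies `X^n` by the falling factorial
of `n` of order `j`, the leading coefficients give an indicial polynomial
`P = ∑ (w j)_N x (x - 1) ⋯ (x - j + 1)`, which is nonzero of degree less than `s` and vanishes at the
degree of every nonzero `g` in the span (`sum_coeff_mul_descFactorial_eq_zero`). An element of the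
span is therefore determined by its coefficients at the `n ≤ d` that are roots of `P`. The integers
`0, …, d` are distinct in `F`, so there are fewer than `s` such `n`, and the span has dimension less
than `s`.
-/

open Polynomial in
/-- The degree of a nonzero polynomial annihilated by `∑ w j (X^j D^j)` is a root of the indicial
polynomial at infinity of that operator. -/
lemma sum_coeff_mul_descFactorial_eq_zero {F : Type*} [Field F] {s N : ℕ} (w : Fin s → F[X])
    (hw : ∀ j, (w j).natDegree ≤ N) (g : F[X]) (hg : g ≠ 0)
    (h : ∑ j, w j * (X ^ (j : ℕ) * derivative^[(j : ℕ)] g) = 0) :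
    ∑ j, (w j).coeff N * (g.natDegree.descFactorial j : F) = 0 := by
  set n := g.natDegree with hn
  have key : ∀ j : Fin s, (w j * (X ^ (j : ℕ) * derivative^[(j : ℕ)] g)).coeff (N + n)
      = (w j).coeff N * (n.descFactorial j : F) * g.leadingCoeff := by
    intro j
    have hcoeff : ∀ k, (X ^ (j : ℕ) * derivative^[(j : ℕ)] g).coeff k
        = (k.descFactorial j : F) * g.coeff k := by
      intro k
      rw [coeff_X_pow_mul']
      split_ifs with hk
      · rw [coeff_iterate_derivative, Nat.sub_add_cancel hk, nsmul_eq_mul]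
      · rw [Nat.descFactorial_of_lt (not_le.mp hk)]
        simp
    have hdeg : (X ^ (j : ℕ) * derivative^[(j : ℕ)] g).natDegree ≤ n := by
      rw [natDegree_le_iff_coeff_eq_zero]
      intro k hk
      rw [hcoeff, coeff_eq_zero_of_natDegree_lt hk, mul_zero]
    rw [coeff_mul_add_eq_of_natDegree_le (hw j) hdeg, hcoeff, mul_assoc]
    rfl
  have h2 := congrArg (fun q => q.coeff (N + n)) h
  simp only [finsetSum_coeff, key, coeff_zero, ← Finset.sum_mul] at h2
  exact (mul_eq_zero.mp h2).resolve_right (leadingCoeff_ne_zero.mpr hg)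

open Polynomial in
/-- Falling factorials of distinct orders are linearly independent, having distinct degrees. -/
lemma sum_descPochhammer_ne_zero {F : Type*} [Field F] {s : ℕ} (c : Fin s → F) (hc : c ≠ 0) :
    ∑ j, C (c j) * descPochhammer F j ≠ 0 := by
  let S : Polynomial.Sequence F :=
    ⟨fun j => descPochhammer F j, fun j => by
      rw [degree_eq_natDegree (monic_descPochhammer F j).ne_zero, descPochhammer_natDegree]⟩
  have hli : LinearIndependent F (fun j : Fin s => descPochhammer F j) :=
    S.linearIndependent.comp (fun j : Fin s => (j : ℕ)) Fin.val_injective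
  intro h
  apply hc
  funext j
  refine Fintype.linearIndependent_iff.mp hli c ?_ j
  simpa only [smul_eq_C_mul] using h

open Polynomial in
/-- A vanishing Wronskian determinant forces a linear relation. -/
lemma not_linearIndependent_of_wronskian_det_eq_zero {F : Type*} [Field F] {s d : ℕ}
    (hchar : ringChar F = 0 ∨ d < ringChar F)
    (f : Fin s → F[X]) (hdeg : ∀ i, (f i).degree ≤ (d : WithBot ℕ))
    (hdet : (Matrix.of fun j i : Fin s => derivative^[(j : ℕ)] (f i)).det = 0) :
    ¬ LinearIndependent F f := by
  intro hli
  obtain ⟨v, hv0, hv⟩ := Matrix.exists_vecMul_eq_zero_iff.mpr hdet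
  set w : Fin s → F[X] := fun j => v j * X ^ (s - (j : ℕ)) with hw
  set N := Finset.univ.sup fun j => (w j).natDegree with hN
  have hwN : ∀ j, (w j).natDegree ≤ N := fun j =>
    Finset.le_sup (f := fun j => (w j).natDegree) (Finset.mem_univ j)
  have hc : (fun j => (w j).coeff N) ≠ 0 := by
    intro h0
    obtain ⟨j₀, hj₀⟩ := Function.ne_iff.mp hv0
    have hw0 : w j₀ ≠ 0 := mul_ne_zero hj₀ (pow_ne_zero _ X_ne_zero)
    -- If the maximum `N` is attained at a zero `w j`, then `N = 0` and `w j₀` attains it as well.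
    obtain ⟨j, -, hj⟩ := Finset.exists_mem_eq_sup Finset.univ ⟨j₀, Finset.mem_univ j₀⟩
      fun j => (w j).natDegree
    have hz : w j = 0 := by
      rw [← leadingCoeff_eq_zero, leadingCoeff, ← hj]
      exact congrFun h0 j
    have hN0 : N = 0 := by rw [hN, hj, hz, natDegree_zero]
    apply hw0
    rw [← leadingCoeff_eq_zero, leadingCoeff, Nat.le_zero.mp ((hwN j₀).trans_eq hN0), ← hN0]
    exact congrFun h0 j₀
  set P := ∑ j, C ((w j).coeff N) * descPochhammer F j with hP
  have hP0 : P ≠ 0 := sum_descPochhammer_ne_zero _ hc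
  have hPdeg : P.degree < s := by
    rw [hP, ← mem_degreeLT]
    refine Submodule.sum_mem _ fun j _ => ?_
    rw [← smul_eq_C_mul]
    refine Submodule.smul_mem _ _ (mem_degreeLT.mpr ?_)
    rw [degree_eq_natDegree (monic_descPochhammer F j).ne_zero, descPochhammer_natDegree]
    exact_mod_cast j.2
  have hPeval : ∀ n : ℕ, P.eval (n : F) = ∑ j, (w j).coeff N * (n.descFactorial j : F) := by
    intro n
    simp only [hP, eval_finsetSum, eval_mul, eval_C, descPochhammer_eval_eq_descFactorial]
  classical
  set R := (Finset.range (d + 1)).filter fun n : ℕ => P.eval (n : F) = 0 with hR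
  let T : (Fin s → F) →ₗ[F] (R → F) :=
    (LinearMap.pi fun n : R => lcoeff F n) ∘ₗ Fintype.linearCombination F f
  have hT : Function.Injective T := by
    rw [← LinearMap.ker_eq_bot, LinearMap.ker_eq_bot']
    intro a ha
    have hg0 : ∑ i, a i • f i = 0 := by
      by_contra hg
      set g := ∑ i, a i • f i with hgdef
      have hgd : g.natDegree ≤ d := by
        apply natDegree_le_of_degree_le
        rw [← mem_degreeLE]
        exact Submodule.sum_mem _ fun i _ => Submodule.smul_mem _ _ (mem_degreeLE.mpr (hdeg i))
      have hL : ∑ j, v j * derivative^[(j : ℕ)] g = 0 := by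
        simp only [hgdef, iterate_derivative_sum, iterate_derivative_smul, Finset.mul_sum]
        rw [Finset.sum_comm]
        refine Finset.sum_eq_zero fun i _ => ?_
        have := congrFun hv i
        simp only [Matrix.vecMul, dotProduct, Matrix.of_apply, Pi.zero_apply] at this
        simp only [mul_smul_comm, ← Finset.smul_sum, this, smul_zero]
      have hroot : P.eval (g.natDegree : F) = 0 := by
        rw [hPeval]
        refine sum_coeff_mul_descFactorial_eq_zero w hwN g hg ?_
        have : ∀ j : Fin s, w j * (X ^ (j : ℕ) * derivative^[(j : ℕ)] g)
            = X ^ s * (v j * derivative^[(j : ℕ)] g) := by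
          intro j
          have hs : (X : F[X]) ^ s = X ^ (s - (j : ℕ)) * X ^ (j : ℕ) := by
            rw [← pow_add, Nat.sub_add_cancel j.2.le]
          rw [hs, hw]
          ring
        rw [Finset.sum_congr rfl fun j _ => this j, ← Finset.mul_sum, hL, mul_zero]
      have hmem : g.natDegree ∈ R :=
        Finset.mem_filter.mpr ⟨Finset.mem_range.mpr (Nat.lt_succ_of_le hgd), hroot⟩
      have := congrFun ha ⟨g.natDegree, hmem⟩
      exact hg (leadingCoeff_eq_zero.mp this)
    funext i
    exact Fintype.linearIndependent_iff.mp hli a hg0 i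
  have hcard : s ≤ R.card := by
    simpa using LinearMap.finrank_le_finrank_of_injective hT
  have hinj : Set.InjOn (fun n : ℕ => (n : F)) R := by
    have hlt : ∀ n ∈ R, n ≤ d := fun n hn =>
      Nat.lt_succ_iff.mp (Finset.mem_range.mp (Finset.mem_filter.mp hn).1)
    intro a ha b hb hab
    have hmod := (CharP.natCast_eq_natCast F (ringChar F)).mp hab
    rcases hchar with h | h
    · rwa [h, Nat.modEq_zero_iff] at hmod
    · exact hmod.eq_of_lt_of_lt ((hlt a ha).trans_lt h) ((hlt b hb).trans_lt h)
  refine hP0 (eq_zero_of_degree_lt_of_eval_index_eq_zero R hinj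
    (hPdeg.trans_le (by exact_mod_cast hcard)) fun n hn => (Finset.mem_filter.mp hn).2)

/-- Wronskian criterion in large or zero characteristic: if `f₁, …, f_s ∈ F[X]` have
degree at most `d`, and `char F = 0` or `char F = p > d`, then the determinant of the
Wronskian matrix is nonzero iff the `fᵢ` are `F`-linearly independent. -/
theorem wronskian_det_ne_zero_iff_linearIndependent (F : Type*) [Field F] (s d : ℕ)
    (hchar : ringChar F = 0 ∨ d < ringChar F)
    (f : Fin s → Polynomial F) (hdeg : ∀ i, (f i).degree ≤ (d : WithBot ℕ)) :
    (Matrix.of fun j i : Fin s =>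
        (⇑Polynomial.derivative)^[(j : ℕ)] (f i)).det ≠ 0 ↔
      LinearIndependent F f := by
  constructor
  · intro hdet
    rw [Fintype.linearIndependent_iff]
    intro a ha
    by_contra! hne
    obtain ⟨i₀, hi₀⟩ := hne
    refine hdet (Matrix.exists_mulVec_eq_zero_iff.mp ⟨fun i => Polynomial.C (a i), ?_, ?_⟩)
    · exact Function.ne_iff.mpr ⟨i₀, by simpa using hi₀⟩
    · funext j
      have := congrArg (fun q => (⇑Polynomial.derivative)^[(j : ℕ)] q) ha
      simp only [Polynomial.iterate_derivative_sum, Polynomial.iterate_derivative_smul,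
        Polynomial.iterate_derivative_zero] at this
      simpa only [Matrix.mulVec, dotProduct, Matrix.of_apply, Pi.zero_apply, mul_comm,
        Polynomial.smul_eq_C_mul] using this
  · intro hli hdet
    exact not_linearIndependent_of_wronskian_det_eq_zero hchar f hdeg hdet hli
end

section
/- Let F be a field of characteristic p > 0 and let a, b ∈ F[X] be coprime polynomials (IsCoprime a b) satisfying (derivative a) · b = a · (derivative b). Then derivative a = 0 and derivative b = 0. -/
/-- If `a, b ∈ F[X]` are coprime polynomials over a field of characteristic `p > 0`
with `a' · b = a · b'`, then `a' = 0` and `b' = 0`. -/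
theorem derivative_eq_zero_of_coprime (F : Type*) [Field F] (p : ℕ) [CharP F p]
    (hp : 0 < p) (a b : Polynomial F) (hab : IsCoprime a b)
    (h : Polynomial.derivative a * b = a * Polynomial.derivative b) :
    Polynomial.derivative a = 0 ∧ Polynomial.derivative b = 0 := by
  -- `a` divides `a' * b`, hence `a'` by coprimality; for degree reasons `a' = 0`. Same for `b`.
  exact ⟨Polynomial.dvd_derivative_iff.mp (hab.dvd_of_dvd_mul_right ⟨_, h⟩),
    Polynomial.dvd_derivative_iff.mp
      (hab.symm.dvd_of_dvd_mul_left ⟨_, by rw [← h, mul_comm]⟩)⟩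
end

section
/- Let K be a finite field with |K| = q and let γ be a generator of the cyclic group Kˣ. Let f_1,…,f_s ∈ K[X]. Let M be the s×s matrix over K[X] whose (j,i) entry is (f_i).comp (γ^j • X), i.e., the polynomial f_i(γ^j X), for j ∈ {0,…,s−1}. Then det M ≠ 0 (as a polynomial) if and only if the images of f_1,…,f_s in RatFunc K are linearly independent over the intermediate field K(X^{q−1}) (the subfield of RatFunc K generated by K and X^{q−1}). -/
/-!
The substitution `X ↦ γ X` extends to a `K`-algebra endomorphism `σ` of `RatFunc K`, and the folded
Wronskian is the matrix `(σ ^ j) (f i)`. Two facts give the criterion.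

* For an endomorphism `σ` of a field `L`, elements `v i` independent over the fixed field of `σ`
  have a nonsingular matrix `(σ ^ j) (v i)` (`eq_zero_of_sum_mul_pow_eq_zero`). This is the usual
  argument for Wronskians, with `σ` in place of a derivation: normalise one coefficient of a
  relation between the columns to `1` and subtract the relation from its image under `σ`; either
  the difference is a shorter relation, or all coefficients are fixed. The converse is
  immediate, since a relation with fixed coefficients is preserved by `σ`.
* The fixed field of `σ` is `K(X ^ (q - 1))` (`map_eq_self_iff_mem_adjoin`). A fixed `g` satisfies
  `∑ k < q - 1, (σ ^ k) g = (q - 1) g = -g`. Writing `g` as a polynomial in `X` with coefficients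
  in `K(X ^ (q - 1))`, this sum kills every `X ^ n` with `q - 1 ∤ n`, because
  `∑ k < q - 1, γ ^ (n k) = 0`; hence `g` lies in `K(X ^ (q - 1))`.
-/

open Polynomial in
/-- The substitution `X ↦ γ X` extends to rational functions. -/
theorem exists_algHom_ratFunc_comp {K : Type*} [Field K] (γ : Kˣ) :
    ∃ σ : RatFunc K →ₐ[K] RatFunc K, ∀ f : K[X],
      σ (algebraMap K[X] (RatFunc K) f) =
        algebraMap K[X] (RatFunc K) (f.comp ((γ : K) • X)) := by
  have hinj : Function.Injective (aeval ((γ : K) • X) : K[X] →ₐ[K] K[X]) := by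
    refine Function.LeftInverse.injective
      (g := (aeval (((γ⁻¹ : Kˣ) : K) • X) : K[X] →ₐ[K] K[X])) fun f => ?_
    have : (aeval (((γ⁻¹ : Kˣ) : K) • X) : K[X] →ₐ[K] K[X]).comp (aeval ((γ : K) • X)) =
        AlgHom.id K _ := by
      ext
      simp [smul_smul]
    exact DFunLike.congr_fun this f
  refine ⟨RatFunc.mapAlgHom (aeval ((γ : K) • X))
    (nonZeroDivisors_le_comap_nonZeroDivisors_of_injective _ hinj), fun f => ?_⟩
  have h := RatFunc.map_apply_div (K := K) (aeval ((γ : K) • X) : K[X] →ₐ[K] K[X])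
    (nonZeroDivisors_le_comap_nonZeroDivisors_of_injective _ hinj) f 1
  simp only [map_one, div_one] at h
  rw [RatFunc.coe_mapAlgHom_eq_coe_map, h]
  rfl

/-- Casoratian criterion: if no nontrivial relation between the `v i` has coefficients fixed by
`σ`, then a relation that holds for `#t` consecutive iterates of `σ` on `v i`, `i ∈ t`, is
trivial. The shift `k` absorbs the application of `σ` in the induction. -/
theorem eq_zero_of_sum_mul_pow_eq_zero {K L ι : Type*} [Field K] [Field L] [Algebra K L]
    [DecidableEq ι] (σ : L →ₐ[K] L) (v : ι → L) (t : Finset ι) :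
    (∀ g : ι → L, (∀ i ∈ t, σ (g i) = g i) → ∑ i ∈ t, g i * v i = 0 → ∀ i ∈ t, g i = 0) →
    ∀ (k : ℕ) (c : ι → L), (∀ j < t.card, ∑ i ∈ t, c i * (σ ^ (j + k)) (v i) = 0) →
      ∀ i ∈ t, c i = 0 := by
  induction t using Finset.strongInduction with
  | H t ih =>
  intro hv k c hc i₀ hi₀
  by_contra hne
  set e : ι → L := fun i => c i / c i₀ with he
  have he₀ : e i₀ = 1 := div_self hne
  have hec : ∀ j < t.card, ∑ i ∈ t, e i * (σ ^ (j + k)) (v i) = 0 := fun j hj => by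
    have h := congrArg (fun x => x / c i₀) (hc j hj)
    simp only [zero_div, Finset.sum_div] at h
    rw [← h]
    exact Finset.sum_congr rfl fun i _ => by simp only [he]; ring
  have hd : ∀ i ∈ t.erase i₀, e i - σ (e i) = 0 := by
    refine ih (t.erase i₀) (Finset.erase_ssubset hi₀) ?_ (k + 1) (fun i => e i - σ (e i)) ?_
    · -- Independence passes to a subset by extending the coefficients by zero.
      intro g hg hsum i hi
      have hsum' : ∑ i ∈ t, (if i = i₀ then 0 else g i) * v i = 0 := by
        rw [← Finset.add_sum_erase t _ hi₀, if_pos rfl, zero_mul, zero_add, ← hsum]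
        exact Finset.sum_congr rfl fun i hi => by rw [if_neg (Finset.ne_of_mem_erase hi)]
      have h := hv (fun i => if i = i₀ then 0 else g i) (fun i hi => ?_) hsum' i
        (Finset.mem_of_mem_erase hi)
      · simpa [Finset.ne_of_mem_erase hi] using h
      · by_cases h : i = i₀
        · simp [h]
        · simpa [h] using hg i (Finset.mem_erase.mpr ⟨h, hi⟩)
    · intro j hj
      rw [Finset.card_erase_of_mem hi₀] at hj
      have h1 := hec (j + 1) (by omega)
      have h2 := congrArg σ (hec j (by omega))
      simp only [map_sum, map_mul, map_zero] at h2
      have h3 : ∑ i ∈ t, (e i - σ (e i)) * (σ ^ (j + (k + 1))) (v i) = 0 := by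
        rw [← sub_self (0 : L)]
        nth_rw 1 [← h1]
        rw [← h2, ← Finset.sum_sub_distrib]
        refine Finset.sum_congr rfl fun i _ => ?_
        have h4 : σ ((σ ^ (j + k)) (v i)) = (σ ^ (j + (k + 1))) (v i) := by
          rw [← add_assoc, pow_succ' σ (j + k), AlgHom.mul_apply]
        rw [h4, show j + 1 + k = j + (k + 1) by ring]
        ring
      rwa [← Finset.add_sum_erase t _ hi₀, he₀, map_one, sub_self, zero_mul, zero_add] at h3
  have hfix : ∀ i ∈ t, σ (e i) = e i := fun i hi => by
    by_cases h : i = i₀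
    · rw [h, he₀, map_one]
    · exact (sub_eq_zero.mp (hd i (Finset.mem_erase.mpr ⟨h, hi⟩))).symm
  have hfixk : ∀ n, ∀ i ∈ t, (σ ^ n) (e i) = e i := fun n i hi => by
    induction n with
    | zero => simp
    | succ n ihn => rw [pow_succ, AlgHom.mul_apply, hfix i hi, ihn]
  have h0 := hec 0 (Finset.card_pos.mpr ⟨i₀, hi₀⟩)
  have h1 : (σ ^ k) (∑ i ∈ t, e i * v i) = 0 := by
    rw [map_sum, ← h0]
    exact Finset.sum_congr rfl fun i hi => by rw [map_mul, hfixk k i hi, zero_add]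
  have h2 := hv e hfix ((map_eq_zero _).mp h1) i₀ hi₀
  rw [he₀] at h2
  exact one_ne_zero h2

/-- The fixed field of `X ↦ γ X` is `K(X ^ (q - 1))`. -/
theorem map_eq_self_iff_mem_adjoin {K : Type*} [Field K] [Fintype K] (γ : Kˣ)
    (hγ : ∀ x : Kˣ, x ∈ Subgroup.zpowers γ) (σ : RatFunc K →ₐ[K] RatFunc K)
    (hσ : σ RatFunc.X = algebraMap K (RatFunc K) γ * RatFunc.X) (g : RatFunc K) :
    σ g = g ↔
      g ∈ IntermediateField.adjoin K {(RatFunc.X ^ (Fintype.card K - 1) : RatFunc K)} := by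
  classical
  set m := Fintype.card K - 1 with hm
  have hcard : 1 < Fintype.card K := Fintype.one_lt_card
  have hmpos : 0 < m := by omega
  have hγm : (γ : K) ^ m = 1 := FiniteField.pow_card_sub_one_eq_one _ γ.ne_zero
  set F := IntermediateField.adjoin K {(RatFunc.X ^ m : RatFunc K)} with hF
  have hXm : (RatFunc.X ^ m : RatFunc K) ∈ F :=
    IntermediateField.subset_adjoin K _ (Set.mem_singleton _)
  have hfix : ∀ g ∈ F, σ g = g := fun g hg => by
    induction hg using IntermediateField.adjoin_induction with
    | mem x hx =>
      rw [Set.mem_singleton_iff.mp hx, map_pow, hσ, mul_pow, ← map_pow, hγm, map_one, one_mul]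
    | algebraMap x => exact σ.commutes x
    | add x y _ _ hx hy => rw [map_add, hx, hy]
    | inv x _ hx => rw [map_inv₀, hx]
    | mul x y _ _ hx hy => rw [map_mul, hx, hy]
  refine ⟨fun hg => ?_, hfix g⟩
  have hpow : ∀ (x : RatFunc K), σ x = x → ∀ k : ℕ, (σ ^ k) x = x := fun x hx k => by
    induction k with
    | zero => simp
    | succ k ih => rw [pow_succ, AlgHom.mul_apply, hx, ih]
  have hX : ∀ k : ℕ, (σ ^ k) RatFunc.X = algebraMap K (RatFunc K) (γ ^ k) * RatFunc.X := fun k => by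
    induction k with
    | zero => simp
    | succ k ih =>
      rw [pow_succ, AlgHom.mul_apply, hσ, map_mul, AlgHom.commutes, ih, pow_succ, map_mul]
      ring
  have htop : Algebra.adjoin F {(RatFunc.X : RatFunc K)} = ⊤ := by
    have hint : IsIntegral F (RatFunc.X : RatFunc K) := by
      refine IsIntegral.of_pow hmpos ?_
      exact isIntegral_algebraMap (R := F) (x := ⟨_, hXm⟩)
    rw [← IntermediateField.adjoin_simple_toSubalgebra_of_isAlgebraic hint.isAlgebraic,
      RatFunc.IntermediateField.adjoin_X, IntermediateField.top_toSubalgebra]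
  have htr : ∀ h : RatFunc K, ∑ k ∈ Finset.range m, (σ ^ k) h ∈ F := fun h => by
    have hh : h ∈ Algebra.adjoin F {(RatFunc.X : RatFunc K)} := htop ▸ Algebra.mem_top
    rw [Algebra.adjoin_singleton_eq_range_aeval] at hh
    obtain ⟨p, rfl⟩ := hh
    induction p using Polynomial.induction_on' with
    | add p r hp hr =>
      simp only [map_add, Finset.sum_add_distrib]
      exact F.add_mem hp hr
    | monomial n a =>
      have hterm : ∀ k, (σ ^ k) (Polynomial.aeval (RatFunc.X : RatFunc K)
          (Polynomial.monomial n a)) =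
          (a : RatFunc K) * (algebraMap K (RatFunc K) (((γ : K) ^ n) ^ k) * RatFunc.X ^ n) :=
        fun k => by
          rw [Polynomial.aeval_monomial, IntermediateField.algebraMap_apply, map_mul,
            hpow _ (hfix _ a.2), map_pow, hX, mul_pow, ← map_pow, ← pow_mul, ← pow_mul, mul_comm n]
      have hsum : ∑ k ∈ Finset.range m, (σ ^ k) (Polynomial.aeval (RatFunc.X : RatFunc K)
          (Polynomial.monomial n a)) = (a : RatFunc K) *
            (algebraMap K (RatFunc K) (∑ k ∈ Finset.range m, ((γ : K) ^ n) ^ k) * RatFunc.X ^ n) := by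
        rw [Finset.sum_congr rfl fun k _ => hterm k, ← Finset.mul_sum, ← Finset.sum_mul, map_sum]
      refine (congrArg (· ∈ F) hsum).mpr (F.mul_mem a.2 ?_)
      by_cases hn : γ ^ n = 1
      · have hord : orderOf γ = m := by
          rw [orderOf_eq_card_of_forall_mem_zpowers hγ, Nat.card_eq_fintype_card,
            Fintype.card_units]
        obtain ⟨d, rfl⟩ := hord ▸ orderOf_dvd_of_pow_eq_one hn
        rw [pow_mul RatFunc.X]
        exact F.mul_mem (F.algebraMap_mem _) (pow_mem hXm d)
      · have hn' : (γ : K) ^ n ≠ 1 := fun h => hn (Units.ext (by simpa using h))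
        rw [geom_sum_eq hn', ← pow_mul, mul_comm n, pow_mul, hγm]
        simp
  have h := htr g
  rw [Finset.sum_congr rfl fun k _ => hpow g hg k, Finset.sum_const, Finset.card_range,
    nsmul_eq_mul] at h
  -- The scalar `q - 1` equals `-1`, as `q = 0` in `K`.
  have hm1 : (m : RatFunc K) = -1 := by
    have h1 : (m : K) = -1 := by
      rw [hm, Nat.cast_sub hcard.le, FiniteField.cast_card_eq_zero]
      simp
    rw [← map_natCast (algebraMap K (RatFunc K)), h1, map_neg, map_one]
  rw [hm1, neg_one_mul] at h
  exact neg_mem_iff.mp h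

/-- Folded Wronskian criterion: for `f₁, …, f_s ∈ K[X]` over a finite field `K` with
`q` elements and `γ` a generator of `Kˣ`, the determinant of the folded Wronskian
matrix with `(j, i)` entry `fᵢ(γʲ X)` is nonzero iff the `fᵢ` are linearly
independent over the intermediate field `K(X^(q-1))` of `RatFunc K`. -/
theorem folded_wronskian_det_ne_zero_iff (K : Type*) [Field K] [Fintype K] (q s : ℕ)
    (hcard : Fintype.card K = q)
    (γ : Kˣ) (hγ : ∀ x : Kˣ, x ∈ Subgroup.zpowers γ)
    (f : Fin s → Polynomial K) :
    (Matrix.of fun j i : Fin s =>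
        (f i).comp ((γ : K) ^ (j : ℕ) • Polynomial.X)).det ≠ 0 ↔
      LinearIndependent (IntermediateField.adjoin K {(RatFunc.X ^ (q - 1) : RatFunc K)})
        (fun i => algebraMap (Polynomial K) (RatFunc K) (f i)) := by
  subst hcard
  obtain ⟨σ, hσ⟩ := exists_algHom_ratFunc_comp γ
  have hσX : σ RatFunc.X = algebraMap K (RatFunc K) γ * RatFunc.X := by
    rw [← RatFunc.algebraMap_X, hσ, Polynomial.X_comp, ← Algebra.smul_def, Algebra.smul_def,
      map_mul, ← IsScalarTower.algebraMap_apply, ← Algebra.smul_def]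
  have hmem := map_eq_self_iff_mem_adjoin γ hγ σ hσX
  have hpow : ∀ (j : ℕ) (p : Polynomial K), (σ ^ j) (algebraMap _ (RatFunc K) p) =
      algebraMap _ (RatFunc K) (p.comp ((γ : K) ^ j • Polynomial.X)) := fun j p => by
    induction j with
    | zero => simp
    | succ j ih =>
      rw [pow_succ', AlgHom.mul_apply, ih, hσ, Polynomial.comp_assoc, Polynomial.smul_comp,
        Polynomial.X_comp, smul_smul, pow_succ]
  set M := Matrix.of fun j i : Fin s => (f i).comp ((γ : K) ^ (j : ℕ) • Polynomial.X) with hM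
  set N : Matrix (Fin s) (Fin s) (RatFunc K) := Matrix.of fun j i : Fin s =>
    (σ ^ (j : ℕ)) (algebraMap _ (RatFunc K) (f i)) with hN
  have hMN : algebraMap _ (RatFunc K) M.det = N.det := by
    rw [RingHom.map_det]
    congr 1
    ext j i
    simp [hM, hN, hpow]
  have hdet : M.det = 0 ↔ N.det = 0 := by
    rw [← hMN, map_eq_zero_iff _ (RatFunc.algebraMap_injective K)]
  rw [Ne, hdet, ← Matrix.exists_mulVec_eq_zero_iff, Fintype.linearIndependent_iff]
  constructor
  · intro hne g hg i
    by_contra hgi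
    refine hne ⟨fun i => (g i : RatFunc K), fun h => hgi (Subtype.ext (congrFun h i)), ?_⟩
    have hfix : ∀ (j : ℕ) (i : Fin s), (σ ^ j) (g i : RatFunc K) = g i := fun j i => by
      induction j with
      | zero => simp
      | succ j ih => rw [pow_succ, AlgHom.mul_apply, (hmem _).mpr (g i).2, ih]
    ext j
    have h := congrArg (σ ^ (j : ℕ)) hg
    rw [map_zero, map_sum] at h
    rw [Pi.zero_apply, ← h, Matrix.mulVec, dotProduct]
    refine Finset.sum_congr rfl fun i _ => ?_
    rw [Algebra.smul_def, IntermediateField.algebraMap_apply, map_mul, hfix, mul_comm]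
    rfl
  · rintro hv ⟨c, hc, hNc⟩
    refine hc (funext fun i => ?_)
    refine eq_zero_of_sum_mul_pow_eq_zero σ (fun i => algebraMap _ (RatFunc K) (f i)) Finset.univ
      ?_ 0 c ?_ i (Finset.mem_univ i)
    · intro g hg hsum i _
      have h := hv (fun i => ⟨g i, (hmem _).mp (hg i (Finset.mem_univ i))⟩) hsum i
      exact congrArg Subtype.val h
    · intro j hj
      rw [Finset.card_univ, Fintype.card_fin] at hj
      have h := congrFun hNc ⟨j, hj⟩
      rw [Pi.zero_apply] at h
      rw [← h]
      refine Finset.sum_congr rfl fun i _ => ?_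
      rw [mul_comm]
      rfl
end

section
/- Let K be a finite field with |K| = q, let γ be a generator of the cyclic group Kˣ, and let f_1,…,f_s ∈ K[X] each have degree at most d, where q − 1 > d. Let M be the s×s matrix over K[X] whose (j,i) entry is (f_i).comp (γ^j • X), i.e., the polynomial f_i(γ^j X), for j ∈ {0,…,s−1}. Then det M ≠ 0 (as a polynomial) if and only if f_1,…,f_s are K-linearly independent in K[X]. -/
/-!
Linear dependence of the `fᵢ` makes the columns of the folded Wronskian dependent, since
substitution is `K`-linear. For the converse, subtracting a multiple of one `fᵢ` from another is a
column operation that preserves both the determinant and linear independence. Cancelling leading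
terms in this way reduces to polynomials with pairwise distinct degrees `nᵢ`
(`foldedWronskian_det_ne_zero`, by induction on the sum of the degrees). In that case the
coefficient of `X ^ ∑ nᵢ` in the determinant is the product of the leading coefficients times the
Vandermonde determinant of the elements `γ ^ nᵢ`, which are distinct because every `nᵢ` is smaller
than the order `q - 1` of `γ`.
-/

open Polynomial

/-- The `s × s` matrix over `K[X]` with `(j, i)` entry `fᵢ(γʲ X)`. -/
noncomputable def foldedWronskian {K : Type*} [Field K] {s : ℕ} (γ : K) (f : Fin s → K[X]) :
    Matrix (Fin s) (Fin s) K[X] :=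
  Matrix.of fun j i => (f i).comp (γ ^ (j : ℕ) • X)

lemma coeff_prod_sum_of_natDegree_le {K ι : Type*} [Field K] (t : Finset ι) (g : ι → K[X])
    (n : ι → ℕ) (h : ∀ i ∈ t, (g i).natDegree ≤ n i) :
    (∏ i ∈ t, g i).coeff (∑ i ∈ t, n i) = ∏ i ∈ t, (g i).coeff (n i) := by
  classical
  induction t using Finset.induction_on with
  | empty => simp
  | insert a t ha ih =>
    have ht : ∀ i ∈ t, (g i).natDegree ≤ n i := fun i hi => h i (Finset.mem_insert_of_mem hi)
    rw [Finset.prod_insert ha, Finset.sum_insert ha, Finset.prod_insert ha, ← ih ht]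
    exact coeff_mul_add_eq_of_natDegree_le (h a (Finset.mem_insert_self a t))
      ((natDegree_prod_le t g).trans (Finset.sum_le_sum ht))

lemma coeff_det_sum_of_natDegree_le {K : Type*} [Field K] {s : ℕ}
    (M : Matrix (Fin s) (Fin s) K[X]) (n : Fin s → ℕ) (h : ∀ j i, (M j i).natDegree ≤ n i) :
    M.det.coeff (∑ i, n i) = (Matrix.of fun j i => (M j i).coeff (n i)).det := by
  rw [Matrix.det_apply, Matrix.det_apply, finsetSum_coeff]
  refine Finset.sum_congr rfl fun σ _ => ?_
  have := coeff_prod_sum_of_natDegree_le Finset.univ (fun i => M (σ i) i) n (fun i _ => h _ i)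
  rw [Units.smul_def, Units.smul_def, coeff_smul, this]
  rfl

/-- The case of distinct `γ ^ deg fᵢ`: the coefficient of `X ^ ∑ deg fᵢ` in the determinant is a
nonzero multiple of the Vandermonde determinant of these powers. -/
lemma foldedWronskian_det_ne_zero_of_injective {K : Type*} [Field K] {s : ℕ} (γ : K)
    (f : Fin s → K[X]) (hf : ∀ i, f i ≠ 0)
    (hinj : Function.Injective fun i => γ ^ (f i).natDegree) :
    (foldedWronskian γ f).det ≠ 0 := by
  intro h0
  have h := coeff_det_sum_of_natDegree_le (foldedWronskian γ f) (fun i => (f i).natDegree)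
    (fun j i => by
      refine natDegree_comp_le.trans ?_
      calc _ ≤ (f i).natDegree * 1 := by
            gcongr
            exact (natDegree_smul_le _ _).trans natDegree_X_le
        _ = _ := mul_one _)
  have hM : (Matrix.of fun j i => (foldedWronskian γ f j i).coeff (f i).natDegree) =
      Matrix.of fun j i => (f i).leadingCoeff *
        (Matrix.vandermonde fun i => γ ^ (f i).natDegree).transpose j i := by
    ext j i
    simp only [foldedWronskian, Matrix.of_apply, Matrix.transpose_apply, Matrix.vandermonde_apply,
      smul_eq_C_mul, comp_C_mul_X_coeff, leadingCoeff]
    ring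
  rw [h0, hM, Matrix.det_mul_row, Matrix.det_transpose, coeff_zero] at h
  exact mul_ne_zero (Finset.prod_ne_zero_iff.2 fun i _ => leadingCoeff_ne_zero.2 (hf i))
    (Matrix.det_vandermonde_ne_zero_iff.2 hinj) h.symm

/-- Linearly independent polynomials of degree at most `d` have nonzero folded Wronskian when
`1, γ, …, γ ^ d` are distinct. -/
lemma foldedWronskian_det_ne_zero {K : Type*} [Field K] {s d : ℕ} (γ : K)
    (hγ : Set.InjOn (fun n : ℕ => γ ^ n) (Set.Iic d)) (N : ℕ) :
    ∀ f : Fin s → K[X], (∀ i, (f i).natDegree ≤ d) → LinearIndependent K f →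
      ∑ i, (f i).natDegree = N → (foldedWronskian γ f).det ≠ 0 := by
  induction N using Nat.strong_induction_on with
  | _ N ih =>
  intro f hdeg hli hN
  by_cases hinj : Function.Injective fun i => (f i).natDegree
  · exact foldedWronskian_det_ne_zero_of_injective γ f hli.ne_zero
      fun a b hab => hinj (hγ (hdeg a) (hdeg b) hab)
  simp only [Function.Injective, not_forall] at hinj
  obtain ⟨a, b, hab, hne⟩ := hinj
  -- `f a + r • f b` has its leading term cancelled; replacing `f a` by it lowers the degree sum.
  set r : K := -((f a).leadingCoeff / (f b).leadingCoeff) with hr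
  set g : Fin s → K[X] := f + ((Pi.single a r : Fin s → K) · • f b) with hg
  have hga : g a = f a + r • f b := by simp [hg]
  have hgi : ∀ i, i ≠ a → g i = f i := fun i hi => by simp [hg, hi]
  have hgli : LinearIndependent K g :=
    (linearIndependent_add_smul_iff (i := b) (by simp [Ne.symm hne])).2 hli
  have hb0 : (f b).leadingCoeff ≠ 0 := leadingCoeff_ne_zero.2 (hli.ne_zero b)
  have hr0 : r ≠ 0 :=
    neg_ne_zero.2 (div_ne_zero (leadingCoeff_ne_zero.2 (hli.ne_zero a)) hb0)
  have hlt : (g a).natDegree < (f a).natDegree := by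
    refine natDegree_lt_natDegree (hgli.ne_zero a) ?_
    have h1 : (f a).degree = (C (-r) * f b).degree := by
      rw [degree_C_mul (neg_ne_zero.2 hr0), degree_eq_natDegree (hli.ne_zero a),
        degree_eq_natDegree (hli.ne_zero b)]
      exact congrArg _ hab
    have h2 : g a = f a - C (-r) * f b := by rw [hga, smul_eq_C_mul, map_neg C r, neg_mul, sub_neg_eq_add]
    rw [h2]
    refine degree_sub_lt_left h1 (hli.ne_zero a) ?_
    rw [leadingCoeff_mul, leadingCoeff_C, hr, neg_neg, div_mul_cancel₀ _ hb0]
  have hle : ∀ i, (g i).natDegree ≤ (f i).natDegree := fun i => by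
    by_cases hi : i = a
    · subst hi; exact hlt.le
    · rw [hgi i hi]
  have hdet : (foldedWronskian γ g).det = (foldedWronskian γ f).det := by
    rw [← Matrix.det_updateCol_add_smul_self (foldedWronskian γ f) hne (C r)]
    congr 1
    ext1 j i
    by_cases hi : i = a
    · subst hi
      simp [foldedWronskian, hga, smul_eq_C_mul]
    · simp [foldedWronskian, hgi i hi, Matrix.updateCol_ne hi]
  rw [← hdet]
  refine ih _ ?_ g (fun i => (hle i).trans (hdeg i)) hgli rfl
  rw [← hN]
  exact Finset.sum_lt_sum (fun i _ => hle i) ⟨a, Finset.mem_univ a, hlt⟩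

/-- A linear relation among the `fᵢ` is a kernel vector, with constant entries, of the
folded Wronskian. -/
lemma linearIndependent_of_foldedWronskian_det_ne_zero {K : Type*} [Field K] {s : ℕ} (γ : K)
    (f : Fin s → K[X]) (h : (foldedWronskian γ f).det ≠ 0) : LinearIndependent K f := by
  rw [Fintype.linearIndependent_iff]
  intro c hc i
  have hv := Matrix.eq_zero_of_mulVec_eq_zero h (v := fun i => C (c i)) <| by
    ext1 j
    have := congrArg (fun p : K[X] => p.comp (γ ^ (j : ℕ) • X)) hc
    simpa [Matrix.mulVec, dotProduct, foldedWronskian, Polynomial.sum_comp, smul_eq_C_mul,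
      mul_comm] using this
  exact C_eq_zero.1 (congrFun hv i)

/-- Folded Wronskian criterion for low-degree polynomials: for `f₁, …, f_s ∈ K[X]`
of degree at most `d < q - 1` over a finite field `K` with `q` elements and `γ` a
generator of `Kˣ`, the determinant of the folded Wronskian matrix with `(j, i)`
entry `fᵢ(γʲ X)` is nonzero iff the `fᵢ` are `K`-linearly independent. -/
theorem folded_wronskian_det_ne_zero_iff_linearIndependent (K : Type*) [Field K]
    [Fintype K] (q s d : ℕ) (hcard : Fintype.card K = q)
    (γ : Kˣ) (hγ : ∀ x : Kˣ, x ∈ Subgroup.zpowers γ)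
    (hd : d < q - 1)
    (f : Fin s → Polynomial K) (hdeg : ∀ i, (f i).degree ≤ (d : WithBot ℕ)) :
    (Matrix.of fun j i : Fin s =>
        (f i).comp ((γ : K) ^ (j : ℕ) • Polynomial.X)).det ≠ 0 ↔
      LinearIndependent K f := by
  have hord : orderOf γ = q - 1 := by
    classical
    rw [orderOf_eq_card_of_forall_mem_zpowers hγ, Nat.card_eq_fintype_card, Fintype.card_units,
      hcard]
  have hinj : Set.InjOn (fun n : ℕ => (γ : K) ^ n) (Set.Iic d) := fun m hm n hn hmn => by
    refine pow_injOn_Iio_orderOf (x := γ) ?_ ?_ (Units.ext (by simpa using hmn))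
    · exact hord ▸ lt_of_le_of_lt hm hd
    · exact hord ▸ lt_of_le_of_lt hn hd
  exact ⟨linearIndependent_of_foldedWronskian_det_ne_zero (γ : K) f, fun hli =>
    foldedWronskian_det_ne_zero (γ : K) hinj _ f (fun i => natDegree_le_iff_degree_le.2 (hdeg i))
      hli rfl⟩
end

section
/- Let K be a finite field with |K| = q and γ a generator of the cyclic group Kˣ. Let s ≥ 1, let A ∈ K[X], and let A_0,…,A_{s−1} ∈ K[X] with not all A_i equal to zero. Let S = { f ∈ K[X] : degree f < q − 1 and A + ∑_{i=0}^{s−1} A_i · (f.comp (γ^i • X)) = 0 }. Then for every f₀ ∈ S, the K-linear span of { f − f₀ : f ∈ S } has dimension at most s − 1; in particular S is contained in a coset of a K-subspace of K[X] of dimension at most s − 1. -/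
/-!
The difference of two elements of `S` lies in the `K`-space `V` of polynomials of degree `< q - 1`
killed by the linear operator `f ↦ ∑ᵢ Aᵢ · f(γⁱ X)`, so it is enough to bound `dim V`.

Let `e` be the least exponent at which some `Aᵢ` has a nonzero coefficient, and let
`B = ∑ᵢ (coeff of X^e in Aᵢ) Y^i`, a nonzero polynomial of degree `< s`.  If `f ∈ V` is nonzero with
lowest term `c X^j`, the coefficient of `X^(e+j)` in `∑ᵢ Aᵢ · f(γⁱ X)` is `c · B(γ^j)`, so
`B(γ^j) = 0` (`eval_eq_zero_of_lowest`).  The powers `γ^j`, `j < q - 1`, are distinct, so the set `Z`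
of such `j` has at most `s - 1` elements (`card_zeros_le`).  An `f ∈ V` whose coefficients vanish on
`Z` has no possible lowest term and hence is zero: reading off the coefficients indexed by `Z` embeds
`V` in `K^Z`.
-/

namespace FoldedRS

open Polynomial

/-- The polynomials of degree `< n` satisfying the homogeneous equation
`∑ᵢ Aᵢ · f(γⁱ X) = 0`. -/
def homSol {K : Type*} [Field K] (g : K) (n : ℕ) {s : ℕ} (A : Fin s → K[X]) :
    Submodule K K[X] where
  carrier := {f | f.degree < (n : WithBot ℕ) ∧
    ∑ i : Fin s, A i * f.comp (g ^ (i : ℕ) • X) = 0}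
  zero_mem' := by simp
  add_mem' := by
    rintro f h ⟨hf, hf'⟩ ⟨hh, hh'⟩
    refine ⟨(degree_add_le f h).trans_lt (max_lt hf hh), ?_⟩
    simp only [add_comp, mul_add, Finset.sum_add_distrib, hf', hh', add_zero]
  smul_mem' := by
    rintro c f ⟨hf, hf'⟩
    refine ⟨(degree_smul_le c f).trans_lt hf, ?_⟩
    simp only [smul_comp, mul_smul_comm, ← Finset.smul_sum, hf', smul_zero]

/-- The polynomial `∑ᵢ (coeff of X^e in Aᵢ) Y^i`. -/
noncomputable def lowPoly {K : Type*} [Field K] {s : ℕ} (A : Fin s → K[X]) (e : ℕ) : K[X] :=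
  ∑ i : Fin s, C ((A i).coeff e) * X ^ (i : ℕ)

lemma lowPoly_coeff {K : Type*} [Field K] {s : ℕ} (A : Fin s → K[X]) (e : ℕ) (i : Fin s) :
    (lowPoly A e).coeff i = (A i).coeff e := by
  simp [lowPoly, coeff_X_pow, Fin.val_inj]

lemma lowPoly_natDegree_le {K : Type*} [Field K] {s : ℕ} (A : Fin s → K[X]) (e : ℕ) :
    (lowPoly A e).natDegree ≤ s - 1 :=
  natDegree_sum_le_of_forall_le _ _ fun i _ =>
    (natDegree_C_mul_X_pow_le _ _).trans (by have := i.2; omega)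

lemma coeff_mul_of_low {R : Type*} [Semiring R] {p r : R[X]} {e j : ℕ}
    (hp : ∀ m < e, p.coeff m = 0) (hr : ∀ m < j, r.coeff m = 0) :
    (p * r).coeff (e + j) = p.coeff e * r.coeff j := by
  rw [coeff_mul, Finset.sum_eq_single (e, j)]
  · rintro ⟨a, b⟩ hab hne
    rw [Finset.HasAntidiagonal.mem_antidiagonal] at hab
    rcases lt_or_ge a e with h | h
    · simp [hp a h]
    · have hb : b < j := by
        by_contra hb
        exact hne (by ext <;> simp only at * <;> omega)
      simp [hr b hb]
  · simp

/-- The lowest exponent `j` of a nonzero homogeneous solution satisfies the indicial equation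
`B(γ^j) = 0`. -/
lemma eval_eq_zero_of_lowest {K : Type*} [Field K] (g : K) {s : ℕ} (A : Fin s → K[X]) {e : ℕ}
    (he : ∀ m < e, ∀ i, (A i).coeff m = 0) {f : K[X]} (hf : f ≠ 0)
    (h : ∑ i : Fin s, A i * f.comp (g ^ (i : ℕ) • X) = 0) :
    (lowPoly A e).eval (g ^ f.natTrailingDegree) = 0 := by
  set j := f.natTrailingDegree
  have hc : f.coeff j ≠ 0 := by
    simpa [j, trailingCoeff] using trailingCoeff_nonzero_iff_nonzero.2 hf
  have h' := congrArg (fun p => p.coeff (e + j)) h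
  simp only [finsetSum_coeff, coeff_zero] at h'
  have key : ∀ i : Fin s, (A i * f.comp (g ^ (i : ℕ) • X)).coeff (e + j)
      = f.coeff j * ((A i).coeff e * (g ^ j) ^ (i : ℕ)) := by
    intro i
    rw [smul_eq_C_mul, coeff_mul_of_low (fun m hm => he m hm i), comp_C_mul_X_coeff]
    · ring
    · intro m hm
      rw [comp_C_mul_X_coeff, coeff_eq_zero_of_lt_natTrailingDegree hm, zero_mul]
  simp only [key, ← Finset.mul_sum] at h'
  simpa [lowPoly, eval_finsetSum] using (mul_eq_zero.1 h').resolve_left hc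

lemma card_zeros_le {K : Type*} [Field K] [DecidableEq K] (g : K) (n : ℕ)
    (hg : Set.InjOn (fun j : ℕ => g ^ j) (Set.Iio n)) {B : K[X]} (hB : B ≠ 0) :
    ((Finset.range n).filter fun j => B.eval (g ^ j) = 0).card ≤ B.natDegree := by
  refine le_trans ?_ ((Multiset.toFinset_card_le B.roots).trans (card_roots' B))
  refine Finset.card_le_card_of_injOn (fun j => g ^ j) ?_ ?_
  · intro j hj
    simpa [hB] using (Finset.mem_filter.1 hj).2
  · intro a ha b hb hab
    exact hg (Finset.mem_range.1 (Finset.mem_filter.1 ha).1)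
      (Finset.mem_range.1 (Finset.mem_filter.1 hb).1) hab

lemma rank_homSol_le {K : Type*} [Field K] (g : K) (n : ℕ)
    (hg : Set.InjOn (fun j : ℕ => g ^ j) (Set.Iio n)) {s : ℕ} (A : Fin s → K[X])
    (hA : ∃ i, A i ≠ 0) : Module.rank K (homSol g n A) ≤ (s - 1 : ℕ) := by
  classical
  have hex : ∃ e, ∃ i, (A i).coeff e ≠ 0 := by
    obtain ⟨i, hi⟩ := hA
    exact ⟨_, i, leadingCoeff_ne_zero.2 hi⟩
  set e := Nat.find hex
  obtain ⟨i, hi⟩ : ∃ i, (A i).coeff e ≠ 0 := Nat.find_spec hex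
  have he : ∀ m < e, ∀ i, (A i).coeff m = 0 := by
    intro m hm
    simpa using Nat.find_min hex hm
  have hB : lowPoly A e ≠ 0 := by
    intro h
    exact hi (by rw [← lowPoly_coeff, h, coeff_zero])
  set Z := (Finset.range n).filter fun j => (lowPoly A e).eval (g ^ j) = 0
  have hZ : Z.card ≤ s - 1 := (card_zeros_le g n hg hB).trans (lowPoly_natDegree_le A e)
  let φ : homSol g n A →ₗ[K] (Z → K) :=
    (LinearMap.pi fun j : Z => lcoeff K (j : ℕ)) ∘ₗ (homSol g n A).subtype
  have hφ : Function.Injective φ := by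
    rw [injective_iff_map_eq_zero]
    rintro ⟨f, hfd, hf⟩ h0
    by_contra hne
    have hf0 : f ≠ 0 := fun h => hne (Subtype.ext h)
    have hjZ : f.natTrailingDegree ∈ Z := by
      refine Finset.mem_filter.2 ⟨Finset.mem_range.2 ?_, eval_eq_zero_of_lowest g A he hf0 hf⟩
      exact (natTrailingDegree_le_natDegree f).trans_lt ((natDegree_lt_iff_degree_lt hf0).2 hfd)
    have : f.trailingCoeff = 0 := congrFun h0 ⟨_, hjZ⟩
    exact hf0 (trailingCoeff_eq_zero.1 this)
  calc Module.rank K (homSol g n A) ≤ Module.rank K (Z → K) := LinearMap.rank_le_of_injective φ hφ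
    _ = (Z.card : ℕ) := by rw [rank_fun']; simp
    _ ≤ (s - 1 : ℕ) := by exact_mod_cast hZ

end FoldedRS


/-- List-size bound for folded Reed-Solomon codes: over a finite field `K` with `q`
elements and `γ` a generator of `Kˣ`, the set `S` of polynomials `f` of degree
`< q - 1` satisfying the nonzero functional equation `A + ∑ᵢ Aᵢ · f(γⁱ X) = 0` is
contained in a coset of a `K`-subspace of dimension at most `s - 1`: for any
`f₀ ∈ S`, the span of `{f - f₀ : f ∈ S}` has dimension at most `s - 1`. -/
theorem folded_rs_list_size (K : Type*) [Field K] [Fintype K] (q s : ℕ)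
    (hcard : Fintype.card K = q)
    (γ : Kˣ) (hγ : ∀ x : Kˣ, x ∈ Subgroup.zpowers γ) (hs : 1 ≤ s)
    (A : Polynomial K) (Ai : Fin s → Polynomial K) (hAi : ∃ i, Ai i ≠ 0)
    (S : Set (Polynomial K))
    (hS : S = {f | f.degree < ((q - 1 : ℕ) : WithBot ℕ) ∧
      A + ∑ i : Fin s, Ai i * (f.comp ((γ : K) ^ (i : ℕ) • Polynomial.X)) = 0}) :
    ∀ f₀ ∈ S, Module.rank K (Submodule.span K ((fun f => f - f₀) '' S)) ≤ (s - 1 : ℕ) := by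
  subst hS
  rintro f₀ ⟨hd₀, h₀⟩
  have hord : orderOf γ = q - 1 := by
    rw [orderOf_eq_card_of_forall_mem_zpowers hγ, Nat.card_units, Nat.card_eq_fintype_card, hcard]
  have hinj : Set.InjOn (fun j : ℕ => (γ : K) ^ j) (Set.Iio (q - 1)) := by
    intro a ha b hb hab
    rw [← hord] at ha hb
    exact pow_injOn_Iio_orderOf ha hb (Units.ext (by simpa using hab))
  refine (Submodule.rank_mono (Submodule.span_le.2 ?_)).trans
    (FoldedRS.rank_homSol_le (γ : K) (q - 1) hinj Ai hAi)
  rintro _ ⟨f, ⟨hd, hf⟩, rfl⟩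
  refine ⟨(Polynomial.degree_sub_le f f₀).trans_lt (max_lt hd hd₀), ?_⟩
  simp only [Polynomial.sub_comp, mul_sub, Finset.sum_sub_distrib]
  exact sub_eq_zero.2 (add_left_cancel (hf.trans h₀.symm))
end

section
/- Let K be a finite field with |K| = q, F a field extension of K with [F : K] = m, and γ a generator of the cyclic group Fˣ. Set n = (q−1)·m and let 1 ≤ k ≤ n. Let β_1,…,β_m ∈ F be K-linearly independent. For each ℓ ∈ {0,…,q−2} define the k×m matrix M_ℓ over F by (M_ℓ) i j = γ^(ℓ · ∑_{t<i} q^t) · β_j^(q^i) for i ∈ {0,…,k−1}, j ∈ {1,…,m}. Then for every nonzero vector λ : Fin k → F, ∑_{ℓ=0}^{q−2} finrank_K (Submodule.span K { ∑_{i} λ i · (M_ℓ) i j : j ∈ {1,…,m} }) ≥ n − k + 1. That is, the row space code generated by [M_0 | M_1 | ⋯ | M_{q−2}] is a maximum sum-rank distance code. -/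
/-!
Write `D_ℓ x = ∑ i, λᵢ γ^(ℓ (1 + q + ⋯ + q^(i-1))) x^(q^i)`, a `K`-linear endomorphism of `F`. As the
`βⱼ` form a basis of `F` over `K`, the `ℓ`-th block has `K`-rank `m - dim ker D_ℓ`, so the claim is
that `∑ dim ker D_ℓ ≤ k - 1`.

Choose `δ` in an algebraic closure `E` of `F` with `δ^(q-1) = γ`. The linearized polynomial
`P = ∑ i, λᵢ X^(q^i)` satisfies `P (δ^ℓ x) = δ^ℓ D_ℓ x` for `x` in `F`, so `(x_ℓ) ↦ ∑ δ^ℓ x_ℓ` maps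
`∏ ker D_ℓ` into the roots of `P`, of which there are at most `q^(k-1)`. The map is injective, because
`1, δ, …, δ^(q-2)` are linearly independent over `F`: they are eigenvectors of the `|F|`-power
Frobenius of `E`, for the eigenvalues `ζ^ℓ` with `ζ = γ^((q^m-1)/(q-1))` of order `q - 1`
(`linearIndependent_pow_root`). Comparing cardinalities gives `q^(∑ dim ker D_ℓ) ≤ q^(k-1)`
(`sum_finrank_ker_le`).
-/

open Polynomial in
/-- The linearized polynomial `∑ i, λᵢ X^(q^i)`. -/
noncomputable def linPoly {F : Type*} [Field F] (q : ℕ) {k : ℕ} (lam : Fin k → F) : F[X] :=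
  ∑ i : Fin k, C (lam i) * X ^ q ^ (i : ℕ)

lemma linPoly_ne_zero {F : Type*} [Field F] {q k : ℕ} (hq : 1 < q) {lam : Fin k → F}
    (hlam : lam ≠ 0) : linPoly q lam ≠ 0 := by
  obtain ⟨i, hi⟩ := Function.ne_iff.mp hlam
  intro h
  apply hi
  have h2 := congrArg (fun p => Polynomial.coeff p (q ^ (i : ℕ))) h
  simpa [linPoly, Polynomial.finsetSum_coeff, Polynomial.coeff_X_pow,
    (Nat.pow_right_injective hq).eq_iff, Fin.val_inj] using h2

lemma natDegree_linPoly_le {F : Type*} [Field F] {q k : ℕ} (hq : 1 < q) (lam : Fin k → F) :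
    (linPoly q lam).natDegree ≤ q ^ (k - 1) := by
  refine Polynomial.natDegree_sum_le_of_forall_le _ _ fun i _ => ?_
  refine (Polynomial.natDegree_C_mul_X_pow_le _ _).trans ?_
  exact Nat.pow_le_pow_right (by omega) (by have := i.2; omega)

lemma pow_mul_geomSum (q i : ℕ) (hq : 1 ≤ q) {M : Type*} [Monoid M] (a : M) :
    a ^ q ^ i = a * (a ^ (q - 1)) ^ ∑ t ∈ Finset.range i, q ^ t := by
  have h := geom_sum_mul_add (q - 1) i
  rw [Nat.sub_add_cancel hq] at h
  rw [← pow_mul, ← pow_succ', mul_comm, h]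

/-- The `K`-linear map `D_ℓ x = ∑ i, λᵢ γ^(ℓ (1 + q + ⋯ + q^(i-1))) x^(q^i)` whose values on the
`βⱼ` are the entries of the `ℓ`-th block. -/
noncomputable def blockMap (K : Type*) {F : Type*} [Field K] [Fintype K] [Field F] [Algebra K F]
    (γ : F) {k : ℕ} (lam : Fin k → F) (l : ℕ) : F →ₗ[K] F :=
  ∑ i : Fin k, (lam i * γ ^ (l * ∑ t ∈ Finset.range (i : ℕ), Fintype.card K ^ t)) •
    ((FiniteField.frobeniusAlgHom K F) ^ (i : ℕ)).toLinearMap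

lemma blockMap_apply {K F : Type*} [Field K] [Fintype K] [Field F] [Algebra K F]
    (γ : F) {k : ℕ} (lam : Fin k → F) (l : ℕ) (x : F) :
    blockMap K γ lam l x = ∑ i : Fin k, lam i *
      (γ ^ (l * ∑ t ∈ Finset.range (i : ℕ), Fintype.card K ^ t) *
        x ^ Fintype.card K ^ (i : ℕ)) := by
  simp [blockMap, LinearMap.sum_apply, mul_assoc, AlgHom.coe_pow,
    FiniteField.coe_frobeniusAlgHom, pow_iterate]

/-- Multiplication by `δ^ℓ` conjugates `D_ℓ` into the linearized polynomial. -/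
lemma aeval_linPoly_pow_mul {K F E : Type*} [Field K] [Fintype K] [Field F] [Algebra K F]
    [Field E] [Algebra F E] {γ : F} {δ : E}
    (hδ : δ ^ (Fintype.card K - 1) = algebraMap F E γ) {k : ℕ} (lam : Fin k → F) (l : ℕ) (x : F) :
    Polynomial.aeval (δ ^ l * algebraMap F E x) (linPoly (Fintype.card K) lam) =
      δ ^ l * algebraMap F E (blockMap K γ lam l x) := by
  simp only [linPoly, blockMap_apply, map_sum, map_mul, map_pow,
    Polynomial.aeval_C, Polynomial.aeval_X]
  rw [Finset.mul_sum]
  refine Finset.sum_congr rfl fun i _ => ?_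
  rw [mul_pow, pow_mul_geomSum _ _ Fintype.card_pos (δ ^ l), pow_right_comm δ l, hδ, ← pow_mul]
  ring

lemma aeval_linPoly_sum {K F E : Type*} [Field K] [Fintype K] [Field F]
    [Field E] [Algebra K E] [Algebra F E] {k : ℕ} (lam : Fin k → F)
    {ι : Type*} (s : Finset ι) (y : ι → E) :
    Polynomial.aeval (∑ l ∈ s, y l) (linPoly (Fintype.card K) lam) =
      ∑ l ∈ s, Polynomial.aeval (y l) (linPoly (Fintype.card K) lam) := by
  have hfrob (i : ℕ) (z : E) :
      z ^ Fintype.card K ^ i = ((FiniteField.frobeniusAlgHom K E) ^ i) z := by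
    simp [AlgHom.coe_pow, FiniteField.coe_frobeniusAlgHom, pow_iterate]
  simp only [linPoly, map_sum, map_mul, map_pow, Polynomial.aeval_C, Polynomial.aeval_X]
  rw [Finset.sum_comm]
  refine Finset.sum_congr rfl fun i _ => ?_
  rw [← Finset.mul_sum, hfrob, map_sum]
  simp only [hfrob]

/-- If `δ^(q-1)` generates `Fˣ`, then the powers `δ^ℓ` with `ℓ < q - 1` are eigenvectors, with distinct
eigenvalues, of the `|F|`-power Frobenius of `E`. -/
lemma linearIndependent_pow_root {K F E : Type*} [Field K] [Fintype K] [Field F] [Finite F]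
    [Algebra K F] [Field E] [Algebra F E] {γ : Fˣ} (hγ : ∀ x : Fˣ, x ∈ Subgroup.zpowers γ) {δ : E}
    (hδ : δ ^ (Fintype.card K - 1) = algebraMap F E γ) :
    LinearIndependent F (fun l : Fin (Fintype.card K - 1) => δ ^ (l : ℕ)) := by
  have := Fintype.ofFinite F
  have hq : 1 < Fintype.card K := Fintype.one_lt_card
  set q := Fintype.card K with hqdef
  set s := ∑ t ∈ Finset.range (Module.finrank K F), q ^ t with hs
  have hF : Fintype.card F = q ^ Module.finrank K F := Module.card_eq_pow_finrank
  have hsF : s * (q - 1) + 1 = Fintype.card F := by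
    have h := geom_sum_mul_add (q - 1) (Module.finrank K F)
    rwa [Nat.sub_add_cancel hq.le, ← hF] at h
  have hF1 : 1 < Fintype.card F := Fintype.one_lt_card
  have hs0 : 0 < s := Nat.pos_of_ne_zero fun h => by simp [h] at hsF; omega
  have hord : orderOf γ = s * (q - 1) := by
    rw [orderOf_eq_card_of_forall_mem_zpowers hγ, Nat.card_units, Nat.card_eq_fintype_card]
    omega
  have hδ0 : δ ≠ 0 := by
    rintro rfl
    rw [zero_pow (by omega), eq_comm, map_eq_zero] at hδ
    exact γ.ne_zero hδ
  refine Module.End.eigenvectors_linearIndependent'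
    (FiniteField.frobeniusAlgHom F E).toLinearMap
    (fun l : Fin (q - 1) => ((γ ^ (s * (l : ℕ)) : Fˣ) : F)) ?_ _ fun l => ⟨?_, pow_ne_zero _ hδ0⟩
  · intro a b hab
    have h := pow_injOn_Iio_orderOf (x := γ) (by simp [hord, hs0]) (by simp [hord, hs0])
      (Units.ext hab)
    exact Fin.ext (Nat.eq_of_mul_eq_mul_left hs0 h)
  · rw [Module.End.mem_eigenspace_iff, Algebra.smul_def]
    simp only [AlgHom.toLinearMap_apply, FiniteField.coe_frobeniusAlgHom]
    rw [hF, pow_mul_geomSum q _ hq.le, pow_right_comm δ, hδ, ← hs, mul_comm]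
    simp [← pow_mul, mul_comm]

/-- The kernels of the `D_ℓ` inject jointly into the at most `q^(k-1)` roots of the linearized
polynomial. -/
lemma sum_finrank_ker_le {K F : Type*} [Field K] [Fintype K] [Field F] [Finite F] [Algebra K F]
    {E : Type*} [Field E] [Algebra K E] [Algebra F E]
    {γ : Fˣ} (hγ : ∀ x : Fˣ, x ∈ Subgroup.zpowers γ) {δ : E}
    (hδ : δ ^ (Fintype.card K - 1) = algebraMap F E γ)
    {k : ℕ} {lam : Fin k → F} (hlam : lam ≠ 0) :
    ∑ l : Fin (Fintype.card K - 1),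
      Module.finrank K (LinearMap.ker (blockMap K (γ : F) lam l)) ≤ k - 1 := by
  have hq : 1 < Fintype.card K := Fintype.one_lt_card
  let V := (l : Fin (Fintype.card K - 1)) → LinearMap.ker (blockMap K (γ : F) lam l)
  let f (x : V) : E := ∑ l : Fin (Fintype.card K - 1), δ ^ (l : ℕ) * algebraMap F E (x l : F)
  have hf : Function.Injective f := by
    intro x y hxy
    have hsum : ∑ l : Fin (Fintype.card K - 1), ((x l : F) - (y l : F)) • δ ^ (l : ℕ) = 0 := by
      refine Eq.trans ?_ (sub_eq_zero.mpr hxy)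
      simp only [f, ← Finset.sum_sub_distrib]
      refine Finset.sum_congr rfl fun l _ => ?_
      rw [Algebra.smul_def, map_sub]
      ring
    have hindep : LinearIndependent F (fun l : Fin (Fintype.card K - 1) => δ ^ (l : ℕ)) :=
      linearIndependent_pow_root (K := K) hγ hδ
    have hli := Fintype.linearIndependent_iff.mp hindep
      (fun l => (x l : F) - (y l : F)) hsum
    funext l
    apply Subtype.ext
    have h : (x l : F) - (y l : F) = 0 := hli l
    exact sub_eq_zero.mp h
  have hroot : Set.range f ⊆ (linPoly (Fintype.card K) lam).rootSet E := by
    rintro _ ⟨x, rfl⟩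
    rw [Polynomial.mem_rootSet]
    refine ⟨linPoly_ne_zero hq hlam, ?_⟩
    rw [aeval_linPoly_sum]
    refine Finset.sum_eq_zero fun l _ => ?_
    rw [aeval_linPoly_pow_mul hδ, LinearMap.mem_ker.mp (x l).2, map_zero, mul_zero]
  have hcard : Nat.card V ≤ Fintype.card K ^ (k - 1) := by
    rw [← Set.ncard_range_of_injective hf]
    exact (Set.ncard_le_ncard hroot (Set.toFinite _)).trans
      ((Polynomial.ncard_rootSet_le _ _).trans (natDegree_linPoly_le hq lam))
  rw [Module.natCard_eq_pow_finrank (K := K), Module.finrank_pi_fintype,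
    Nat.card_eq_fintype_card] at hcard
  exact (Nat.pow_le_pow_iff_right hq).mp hcard


/-- The skew-polynomial construction of maximum sum-rank distance codes: with
`F/K` of degree `m`, `|K| = q`, `γ` a generator of `Fˣ`, `β₁, …, β_m ∈ F`
`K`-linearly independent, `n = (q-1)·m` and `1 ≤ k ≤ n`, the code generated by the
`k × n` matrix `[M₀ | M₁ | ⋯ | M_{q-2}]` with
`(M_ℓ)ᵢⱼ = γ^(ℓ·(1+q+⋯+q^(i-1))) · βⱼ^(qⁱ)` is MSRD: every nonzero row combination
`λᵀM` has sum-rank weight at least `n - k + 1`, where the `K`-rank of each block is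
the `K`-dimension of the span of its entries. -/
theorem msrd_code_construction (q m k : ℕ)
    (K F : Type*) [Field K] [Fintype K] [Field F] [Algebra K F]
    (hcard : Fintype.card K = q) (hdeg : Module.finrank K F = m)
    (γ : Fˣ) (hγ : ∀ x : Fˣ, x ∈ Subgroup.zpowers γ)
    (hk1 : 1 ≤ k) (hkn : k ≤ (q - 1) * m)
    (β : Fin m → F) (hβ : LinearIndependent K β)
    (lam : Fin k → F) (hlam : lam ≠ 0) :
    (q - 1) * m - k + 1 ≤ ∑ ℓ : Fin (q - 1),
      Module.finrank K (Submodule.span K (Set.range fun j : Fin m =>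
        ∑ i : Fin k, lam i *
          ((γ : F) ^ ((ℓ : ℕ) * ∑ t ∈ Finset.range (i : ℕ), q ^ t)
            * β j ^ q ^ (i : ℕ)))) := by
  subst hcard hdeg
  have hq : 1 < Fintype.card K := Fintype.one_lt_card
  -- An infinite-dimensional `F` would have `finrank` zero, against `1 ≤ k ≤ (q - 1) * finrank K F`.
  have hm : 0 < Module.finrank K F := Nat.pos_of_ne_zero fun h => by simp [h] at hkn; omega
  have : FiniteDimensional K F := FiniteDimensional.of_finrank_pos hm
  have : Finite F := Module.finite_of_finite K
  have hblock (l : Fin (Fintype.card K - 1)) :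
      Submodule.span K (Set.range fun j => ∑ i : Fin k, lam i *
        ((γ : F) ^ ((l : ℕ) * ∑ t ∈ Finset.range (i : ℕ), Fintype.card K ^ t)
          * β j ^ Fintype.card K ^ (i : ℕ))) = LinearMap.range (blockMap K (γ : F) lam l) := by
    have hspan : Submodule.span K (Set.range β) = ⊤ :=
      hβ.span_eq_top_of_card_eq_finrank' (by simp)
    rw [LinearMap.range_eq_map, ← hspan, Submodule.map_span, ← Set.range_comp]
    simp only [Function.comp_def, blockMap_apply]
  obtain ⟨δ, hδ⟩ := IsAlgClosed.exists_pow_nat_eq (algebraMap F (AlgebraicClosure F) γ)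
    (n := Fintype.card K - 1) (by omega)
  have hker := sum_finrank_ker_le (K := K) hγ hδ hlam
  have htotal : ∑ l : Fin (Fintype.card K - 1),
        Module.finrank K (LinearMap.range (blockMap K (γ : F) lam l)) +
      ∑ l : Fin (Fintype.card K - 1),
        Module.finrank K (LinearMap.ker (blockMap K (γ : F) lam l)) =
      (Fintype.card K - 1) * Module.finrank K F := by
    rw [← Finset.sum_add_distrib]
    simp [LinearMap.finrank_range_add_finrank_ker]
  rw [Finset.sum_congr rfl fun l _ =>
    congrArg (fun S : Submodule K F => Module.finrank K S) (hblock l)]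
  omega
end

section
/- Let K be a field, σ : K →+* K a ring homomorphism, and δ : K → K an additive map satisfying δ(a·b) = σ(a)·δ(b) + δ(a)·b for all a, b ∈ K (a σ-derivation). Suppose there exists a₀ ∈ K with σ(a₀) ≠ a₀. Then setting λ = δ(a₀) / (σ(a₀) − a₀), we have δ(a) = λ·(σ(a) − a) for every a ∈ K; i.e., every σ-derivation on a field with σ ≠ id is an inner derivation. -/
/-- Every `σ`-derivation on a field with `σ ≠ id` is inner: if `δ` is additive and
satisfies `δ(ab) = σ(a)δ(b) + δ(a)b`, and `σ(a₀) ≠ a₀` for some `a₀`, then with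
`λ = δ(a₀)/(σ(a₀) - a₀)` we have `δ(a) = λ·(σ(a) - a)` for all `a`. -/
theorem sigma_derivation_is_inner (K : Type*) [Field K] (σ : K →+* K) (δ : K → K)
    (hadd : ∀ a b, δ (a + b) = δ a + δ b)
    (hmul : ∀ a b, δ (a * b) = σ a * δ b + δ a * b)
    (a₀ : K) (ha₀ : σ a₀ ≠ a₀) :
    ∀ a, δ a = δ a₀ / (σ a₀ - a₀) * (σ a - a) := by
  intro a
  have hne : σ a₀ - a₀ ≠ 0 := sub_ne_zero.mpr ha₀
  -- Expand `δ (a * a₀) = δ (a₀ * a)` by the twisted Leibniz rule on both sides.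
  have key : σ a * δ a₀ + δ a * a₀ = σ a₀ * δ a + δ a₀ * a := by
    rw [← hmul, ← hmul, mul_comm]
  rw [div_mul_eq_mul_div, eq_div_iff hne]
  linear_combination -key
end
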